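/- There exist positive constants c_star, C, c_a, c_b, c_c with the following property. Let n ≥ 2, θ ∈ (0, 1/2), and 0 < μ < c_a · min{θ n^{-1}, n^{-5/4}}. Let X₀ ∈ ℝ^{n×p} be a random matrix with i.i.d. BG(θ) entries, and suppose p ≥ (C/(μ²θ²)) n³ log(n/(μθ)). Then with probability at least 1 − c_b p^{-6}, all of the following hold simultaneously: (i) ∇²g(w; X₀) ⪰ (c_star θ/μ) I for all w with ‖w‖ ≤ μ/(4√2); (ii) wᵀ∇g(w; X₀)/‖w‖ ≥ c_star θ for all w with μ/(4√2) ≤ ‖w‖ ≤ 1/(20√5); (iii) wᵀ∇²g(w; X₀)w/‖w‖² ≤ −c_star θ for all w with 1/(20√5) ≤ ‖w‖ ≤ √((4n−1)/(4n)); and (iv) the function w ↦ g(w; X₀) has exactly one local minimizer w_star over the open set Γ = {w : ‖w‖ < √((4n−1)/(4n))}, and this minimizer satisfies ‖w_star‖ ≤ min{(c_c μ/θ)√(n log p / p), μ/16}. -/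

import Mathlib

open MeasureTheory ProbabilityTheory Real Matrix
open scoped RealInnerProductSpace ENNReal NNReal

noncomputable section

/-- The Bernoulli–Gaussian law `BG(θ)`: with probability `θ` a standard Gaussian,
with probability `1-θ` a point mass at `0`. -/
def bg (θ : ℝ) : Measure ℝ :=
  θ.toNNReal • gaussianReal 0 1 + (1 - θ).toNNReal • Measure.dirac 0

instance bg.instIsFiniteMeasure (θ : ℝ) : IsFiniteMeasure (bg θ) := by
  unfold bg; infer_instance

/-- Law of an `n × p` matrix with i.i.d. `BG(θ)` entries. -/
def bgMatrix (θ : ℝ) (n p : ℕ) : Measure (Fin n → Fin p → ℝ) :=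
  Measure.pi fun _ => Measure.pi fun _ => bg θ

/-- Law of a vector in `ℝ^n` with i.i.d. `BG(θ)` entries. -/
def bgVec (θ : ℝ) (n : ℕ) : Measure (Fin n → ℝ) :=
  Measure.pi fun _ => bg θ

/-- The smooth sparsity surrogate `h_μ(z) = μ log cosh (z/μ)`. -/
def hmu (μ z : ℝ) : ℝ := μ * Real.log (Real.cosh (z / μ))

/-- Reparametrization `q(w) = (w, √(1-‖w‖²))` with `w` in the unit ball of `ℝ^{n-1}`. -/
def qmap (n : ℕ) (w : EuclideanSpace ℝ (Fin (n - 1))) : Fin n → ℝ :=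
  fun i => if h : (i : ℕ) < n - 1 then w ⟨i, h⟩ else Real.sqrt (1 - ‖w‖ ^ 2)

/-- `f(q; Y) = (1/p) ∑ₖ h_μ(qᵀ yₖ)`. -/
def ffun (n p : ℕ) (μ : ℝ) (Y : Matrix (Fin n) (Fin p) ℝ)
    (q : EuclideanSpace ℝ (Fin n)) : ℝ :=
  (p : ℝ)⁻¹ * ∑ k : Fin p, hmu μ (∑ i : Fin n, q i * Y i k)

/-- `g(w; Y) = f(q(w); Y)`. -/
def gfun (n p : ℕ) (μ : ℝ) (Y : Matrix (Fin n) (Fin p) ℝ)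
    (w : EuclideanSpace ℝ (Fin (n - 1))) : ℝ :=
  (p : ℝ)⁻¹ * ∑ k : Fin p, hmu μ (∑ i : Fin n, qmap n w i * Y i k)

/-- Gradient `∇g(w; Y)` in `w`. -/
def gradg (n p : ℕ) (μ : ℝ) (Y : Matrix (Fin n) (Fin p) ℝ)
    (w : EuclideanSpace ℝ (Fin (n - 1))) : EuclideanSpace ℝ (Fin (n - 1)) :=
  gradient (gfun n p μ Y) w

/-- Hessian `∇²g(w; Y)` in `w`, as a continuous linear map. -/
def hessg (n p : ℕ) (μ : ℝ) (Y : Matrix (Fin n) (Fin p) ℝ)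
    (w : EuclideanSpace ℝ (Fin (n - 1))) :
    EuclideanSpace ℝ (Fin (n - 1)) →L[ℝ] EuclideanSpace ℝ (Fin (n - 1)) :=
  fderiv ℝ (gradg n p μ Y) w

/-- The set `Γ = {w : ‖w‖ < √((4n-1)/(4n))}`. -/
def GammaSet (n : ℕ) : Set (EuclideanSpace ℝ (Fin (n - 1))) :=
  {w | ‖w‖ < Real.sqrt ((4 * (n : ℝ) - 1) / (4 * n))}

/-- Spectral (`ℓ²→ℓ²` operator) norm of а matrix. -/
def specNorm {m k : ℕ} (M : Matrix (Fin m) (Fin k) ℝ) : ℝ :=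
  ‖LinearMap.toContinuousLinearMap (Matrix.toEuclideanLin M)‖

/-- Largest magnitude of an entry of a matrix. -/
def Minf {m k : ℕ} (M : Matrix (Fin m) (Fin k) ℝ) : ℝ := ⨆ i, ⨆ j, |M i j|

/-- Condition number: ratio of largest to smallest singular value. -/
def kappa {n : ℕ} (s : Fin n → ℝ) : ℝ := (⨆ i, s i) / (⨅ i, s i)

/-- Signed standard basis vectors `{± e_i}` of `ℝ^n`. -/
def SignedBasis (n : ℕ) : Set (EuclideanSpace ℝ (Fin n)) :=
  {b | ∃ i : Fin n, b = EuclideanSpace.single i (1 : ℝ) ∨ b = -EuclideanSpace.single i (1 : ℝ)}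

/-- Set of local minimizers of `f(·; Y)` over the unit sphere `S^{n-1}`. -/
def LocalMins (n p : ℕ) (μ : ℝ) (Y : Matrix (Fin n) (Fin p) ℝ) :
    Set (EuclideanSpace ℝ (Fin n)) :=
  {q | q ∈ Metric.sphere (0 : EuclideanSpace ℝ (Fin n)) 1 ∧
       IsLocalMinOn (ffun n p μ Y) (Metric.sphere (0 : EuclideanSpace ℝ (Fin n)) 1) q}

/-- Expected objective `E_x[h_μ(q(w)ᵀ x)]` for `x` with i.i.d. `BG(θ)` entries. -/
def Gexp (n : ℕ) (θ μ : ℝ) (w : EuclideanSpace ℝ (Fin (n - 1))) : ℝ :=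
  ∫ x, hmu μ (∑ i : Fin n, qmap n w i * x i) ∂(bgVec θ n)

/-!
In the chart `w ↦ (w, √(1 - ‖w‖²))` the gradient and the Hessian of `g` tested on a direction are
empirical averages, over the columns of `X`, of explicit functions of `w` and of a single column.

In expectation these functions have a sign. Conditioning on the sparsity pattern of a column turns
every linear form of its entries into a Gaussian variable, so the expectations reduce to
one-dimensional Gaussian integrals of `tanh` and of its derivative. They show that the expected
Hessian is positive near `0`, that the expected gradient points outwards at intermediate radii, and
that the expected curvature along the rays from `0` is negative at large radii, all with margins
proportional to `θ`.

The functions have Gaussian tails and are Lipschitz in `w` when the entries of `X` are at most `p`,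
so a Bernstein-type bound and a union bound over a net transfer these signs to the empirical
averages, outside an event of probability `O(p⁻⁶)`.

The signs determine the landscape: a minimizer of `g` over the inner ball lies in its interior
because the gradient points outwards on its boundary, it is the only critical point there by strong
convexity, and further out a local minimizer would contradict either the outward gradient or the
negative radial curvature. Strong convexity with modulus `κ` also gives `‖w‖ ≤ ‖∇g(0)‖ / κ` for the
minimizer `w`, and `∇g(0)` is an average of independent centered terms, hence small.
-/

lemma hasDerivAt_tanh (x : ℝ) : HasDerivAt tanh (1 - tanh x ^ 2) x := by
  have hc : cosh x ≠ 0 := (cosh_pos x).ne'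
  rw [funext tanh_eq_sinh_div_cosh]
  refine ((hasDerivAt_sinh x).div (hasDerivAt_cosh x) hc).congr_deriv ?_
  field_simp

lemma continuous_tanh : Continuous tanh :=
  continuous_iff_continuousAt.2 fun x => (hasDerivAt_tanh x).continuousAt

lemma one_sub_tanh_sq_nonneg (x : ℝ) : 0 ≤ 1 - tanh x ^ 2 :=
  sub_nonneg.2 (tanh_sq_lt_one x).le

lemma one_sub_tanh_sq_le_one (x : ℝ) : 1 - tanh x ^ 2 ≤ 1 :=
  sub_le_self _ (sq_nonneg _)

lemma abs_tanh_le_one (x : ℝ) : |tanh x| ≤ 1 := (abs_tanh_lt_one x).le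

lemma monotone_tanh : Monotone tanh :=
  monotone_of_hasDerivAt_nonneg hasDerivAt_tanh one_sub_tanh_sq_nonneg

lemma tanh_nonneg {x : ℝ} (hx : 0 ≤ x) : 0 ≤ tanh x := by
  simpa only [tanh_zero] using monotone_tanh hx

lemma mul_tanh_nonneg (x : ℝ) : 0 ≤ x * tanh x := by
  rcases le_total 0 x with hx | hx
  · exact mul_nonneg hx (tanh_nonneg hx)
  · refine mul_nonneg_of_nonpos_of_nonpos hx ?_
    simpa only [tanh_zero] using monotone_tanh hx

lemma lipschitzWith_tanh : LipschitzWith 1 tanh := by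
  refine lipschitzWith_of_nnnorm_deriv_le
    (fun x => (hasDerivAt_tanh x).differentiableAt) fun x => ?_
  rw [(hasDerivAt_tanh x).deriv, ← NNReal.coe_le_coe, coe_nnnorm, norm_of_nonneg
    (one_sub_tanh_sq_nonneg x)]
  exact one_sub_tanh_sq_le_one x

lemma abs_tanh_sub_tanh_le (x y : ℝ) : |tanh x - tanh y| ≤ |x - y| := by
  simpa only [dist_eq, NNReal.coe_one, one_mul] using lipschitzWith_tanh.dist_le_mul x y

lemma tanh_sq_le_sq (x : ℝ) : tanh x ^ 2 ≤ x ^ 2 := by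
  simpa only [tanh_zero, sub_zero, sq_le_sq] using abs_tanh_sub_tanh_le x 0

lemma abs_le_abs_sinh (x : ℝ) : |x| ≤ |sinh x| := by
  rw [abs_sinh]
  exact self_le_sinh_iff.2 (abs_nonneg x)

lemma sq_mul_one_sub_tanh_sq_le_one (x : ℝ) : x ^ 2 * (1 - tanh x ^ 2) ≤ 1 := by
  have hsech : 1 - tanh x ^ 2 = 1 / cosh x ^ 2 := by
    have := (cosh_pos x).ne'
    rw [tanh_eq_sinh_div_cosh]
    field_simp
    linarith [cosh_sq x]
  have hle : x ^ 2 ≤ cosh x ^ 2 := by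
    linarith [sq_le_sq.2 (abs_le_abs_sinh x), cosh_sq x]
  rw [hsech, mul_one_div]
  exact div_le_one_of_le₀ hle (sq_nonneg _)

lemma sq_le_mul_tanh_mul_sqrt (x : ℝ) : x ^ 2 ≤ x * tanh x * √(1 + x ^ 2) := by
  have hx : |x| ≤ |tanh x| * √(1 + x ^ 2) := by
    have hc : 0 < cosh x ^ 2 := pow_pos (cosh_pos x) 2
    rw [← abs_of_nonneg (sqrt_nonneg (1 + x ^ 2)), ← abs_mul, ← sq_le_sq, mul_pow,
      sq_sqrt (by positivity), tanh_eq_sinh_div_cosh, div_pow, div_mul_eq_mul_div, le_div_iff₀ hc]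
    nlinarith [cosh_sq x, sq_le_sq.2 (abs_le_abs_sinh x)]
  calc x ^ 2 = |x| * |x| := by rw [abs_mul_abs_self, sq]
    _ ≤ |x| * (|tanh x| * √(1 + x ^ 2)) := by gcongr
    _ = x * tanh x * √(1 + x ^ 2) := by
      rw [← mul_assoc, ← abs_mul, abs_of_nonneg (mul_tanh_nonneg x)]

lemma le_mul_tanh (x : ℝ) : 11 / 16 * x ^ 2 - x ^ 4 / 16 ≤ x * tanh x := by
  set s := √(1 + x ^ 2)
  have hs : s ^ 2 = 1 + x ^ 2 := sq_sqrt (by positivity)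
  have hs0 : 0 < s := sqrt_pos.2 (by positivity)
  refine le_of_mul_le_mul_right ?_ hs0
  calc (11 / 16 * x ^ 2 - x ^ 4 / 16) * s
      = x ^ 2 - x ^ 2 * ((s - 2) ^ 2 * (s + 4)) / 16 := by
        rw [show x ^ 4 = x ^ 2 * (s ^ 2 - 1) by rw [hs]; ring]
        ring
    _ ≤ x ^ 2 := sub_le_self _ (by positivity)
    _ ≤ x * tanh x * s := sq_le_mul_tanh_mul_sqrt x

lemma mul_tanh_le_tanh_mul {c x : ℝ} (hc0 : 0 ≤ c) (hc1 : c ≤ 1) (hx : 0 ≤ x) :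
    c * tanh x ≤ tanh (c * x) := by
  have hderiv (y : ℝ) : HasDerivAt (fun y => tanh (c * y) - c * tanh y)
      ((1 - tanh (c * y) ^ 2) * c - c * (1 - tanh y ^ 2)) y :=
    ((hasDerivAt_tanh (c * y)).comp y (by simpa using (hasDerivAt_id y).const_mul c)).sub
      ((hasDerivAt_tanh y).const_mul c)
  have hmono : MonotoneOn (fun y => tanh (c * y) - c * tanh y) (Set.Ici 0) := by
    refine monotoneOn_of_deriv_nonneg (convex_Ici 0)
      (fun y _ => (hderiv y).continuousAt.continuousWithinAt)
      (fun y _ => (hderiv y).differentiableAt.differentiableWithinAt) fun y hy => ?_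
    rw [interior_Ici, Set.mem_Ioi] at hy
    have hle : tanh (c * y) ^ 2 ≤ tanh y ^ 2 :=
      pow_le_pow_left₀ (tanh_nonneg (by positivity))
        (monotone_tanh (mul_le_of_le_one_left hy.le hc1)) 2
    rw [(hderiv y).deriv]
    linarith [mul_le_mul_of_nonneg_left hle hc0]
  have := hmono Set.self_mem_Ici (Set.mem_Ici.2 hx) hx
  simpa only [mul_zero, tanh_zero, sub_zero, sub_nonneg] using this

lemma hasDerivAt_hmu {μ : ℝ} (hμ : μ ≠ 0) (z : ℝ) : HasDerivAt (hmu μ) (tanh (z / μ)) z := by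
  have hc : cosh (z / μ) ≠ 0 := (cosh_pos _).ne'
  refine ((((hasDerivAt_id' z).div_const μ).cosh.log hc).const_mul μ).congr_deriv ?_
  rw [tanh_eq_sinh_div_cosh]
  field_simp

section Chart

variable {E : Type*} [NormedAddCommGroup E]

/-- The last coordinate `√(1 - ‖w‖²)` of the point `q(w)` of the sphere. -/
def lastCoord (w : E) : ℝ := √(1 - ‖w‖ ^ 2)

lemma one_sub_norm_sq_pos {w : E} (hw : ‖w‖ < 1) : 0 < 1 - ‖w‖ ^ 2 := by
  nlinarith [norm_nonneg w]

lemma lastCoord_pos {w : E} (hw : ‖w‖ < 1) : 0 < lastCoord w :=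
  sqrt_pos.2 (one_sub_norm_sq_pos hw)

lemma lastCoord_sq {w : E} (hw : ‖w‖ < 1) : lastCoord w ^ 2 = 1 - ‖w‖ ^ 2 :=
  sq_sqrt (one_sub_norm_sq_pos hw).le

variable [InnerProductSpace ℝ E]

/-- The inner product `q(w)ᵀ x`, where the data vector `x = (a, b)` is split into its first
`n - 1` coordinates `a` and its last coordinate `b`. -/
def chartInner (a : E) (b : ℝ) (w : E) : ℝ := ⟪w, a⟫ + lastCoord w * b

/-- The gradient in `w` of `h_μ(q(w)ᵀ x)` for `x = (a, b)`. -/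
def chartGrad (μ : ℝ) (a : E) (b : ℝ) (w : E) : E :=
  tanh (chartInner a b w / μ) • (a - (b / lastCoord w) • w)

/-- The first derivative in `w` of `h_μ(q(w)ᵀ x)` in the direction `v`, for `x = (a, b)`. -/
def chartDeriv (μ : ℝ) (a : E) (b : ℝ) (w v : E) : ℝ :=
  tanh (chartInner a b w / μ) * (⟪v, a⟫ - b * (⟪w, v⟫ / lastCoord w))

/-- The Hessian quadratic form in `w` of `h_μ(q(w)ᵀ x)` at `v`, for `x = (a, b)`. -/
def chartHess (μ : ℝ) (a : E) (b : ℝ) (w v : E) : ℝ :=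
  μ⁻¹ * ((1 - tanh (chartInner a b w / μ) ^ 2) * (⟪v, a⟫ - b * (⟪w, v⟫ / lastCoord w)) ^ 2)
    - tanh (chartInner a b w / μ) *
      (b * (‖v‖ ^ 2 / lastCoord w + ⟪w, v⟫ ^ 2 / lastCoord w ^ 3))

lemma hasFDerivAt_lastCoord {w : E} (hw : ‖w‖ < 1) :
    HasFDerivAt (lastCoord : E → ℝ) (-(lastCoord w)⁻¹ • innerSL ℝ w) w := by
  have hsq : HasFDerivAt (fun w : E => 1 - ‖w‖ ^ 2) (-(2 • innerSL ℝ w)) w :=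
    (hasStrictFDerivAt_norm_sq w).hasFDerivAt.const_sub 1
  refine (hsq.sqrt (one_sub_norm_sq_pos hw).ne').congr_fderiv ?_
  rw [← Nat.cast_smul_eq_nsmul ℝ, ← neg_smul, smul_smul]
  congr 1
  simp only [lastCoord]
  push_cast
  ring

lemma hasFDerivAt_chartInner (a : E) (b : ℝ) {w : E} (hw : ‖w‖ < 1) :
    HasFDerivAt (chartInner a b) (innerSL ℝ a - (b / lastCoord w) • innerSL ℝ w) w := by
  have hinner : HasFDerivAt (fun w : E => ⟪w, a⟫) (innerSL ℝ a) w := by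
    refine (innerSL ℝ a).hasFDerivAt.congr_of_eventuallyEq (.of_forall fun u => ?_)
    rw [innerSL_apply_apply, real_inner_comm]
  refine (hinner.add ((hasFDerivAt_lastCoord hw).mul_const b)).congr_fderiv ?_
  rw [smul_smul, sub_eq_add_neg, ← neg_smul]
  congr 2
  ring

lemma hasGradientAt_hmu_chartInner [CompleteSpace E] {μ : ℝ} (hμ : μ ≠ 0) (a : E) (b : ℝ) {w : E}
    (hw : ‖w‖ < 1) : HasGradientAt (fun w => hmu μ (chartInner a b w)) (chartGrad μ a b w) w := by
  rw [hasGradientAt_iff_hasFDerivAt]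
  refine ((hasDerivAt_hmu hμ _).comp_hasFDerivAt w (hasFDerivAt_chartInner a b hw)).congr_fderiv ?_
  ext v
  simp [chartGrad]

lemma inner_chartGrad (μ : ℝ) (a : E) (b : ℝ) (w v : E) :
    ⟪v, chartGrad μ a b w⟫ = chartDeriv μ a b w v := by
  simp only [chartGrad, chartDeriv, inner_smul_right, inner_sub_right, real_inner_comm v w]
  ring

lemma exists_hasFDerivAt_chartGrad {μ : ℝ} (a : E) (b : ℝ) {w : E} (hw : ‖w‖ < 1) :
    ∃ L : E →L[ℝ] E, HasFDerivAt (chartGrad μ a b) L w ∧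
      ∀ v, ⟪L v, v⟫ = chartHess μ a b w v := by
  have hq : lastCoord w ≠ 0 := (lastCoord_pos hw).ne'
  have htanh := (hasDerivAt_tanh (chartInner a b w * μ⁻¹)).comp_hasFDerivAt w
    ((hasFDerivAt_chartInner a b hw).mul_const μ⁻¹)
  have hdir := ((((hasDerivAt_inv hq).comp_hasFDerivAt w (hasFDerivAt_lastCoord hw)).const_mul
    b).smul (hasFDerivAt_id w)).const_sub a
  refine ⟨_, htanh.smul hdir, fun v => ?_⟩
  simp only [Function.comp_def, chartHess, div_eq_mul_inv]
  simp only [neg_smul, smul_neg, neg_neg, id_eq, neg_add_rev, smul_add, _root_.add_apply,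
    _root_.neg_apply, _root_.smul_apply, ContinuousLinearMap.smulRight_apply, coe_innerSL_apply,
    smul_eq_mul, ContinuousLinearMap.id_apply, _root_.sub_apply, inner_add_left, inner_neg_left,
    inner_smul_left, ringHom_apply, inner_self_eq_norm_sq_to_K, inner_sub_left, real_inner_comm]
  generalize tanh (chartInner a b w * μ⁻¹) = t
  field_simp
  ring

end Chart

/-- The first `m` coordinates of a vector in `ℝ^{m+1}`. -/
def headVec {m : ℕ} (x : Fin (m + 1) → ℝ) : EuclideanSpace ℝ (Fin m) :=
  WithLp.toLp 2 fun i => x i.castSucc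

section Empirical

variable {m p : ℕ} {μ : ℝ} (X : Fin (m + 1) → Fin p → ℝ)

lemma gfun_eq_sum_chartInner (μ : ℝ) (w : EuclideanSpace ℝ (Fin m)) :
    gfun (m + 1) p μ (Matrix.of X) w = (p : ℝ)⁻¹ * ∑ k : Fin p,
      hmu μ (chartInner (headVec fun i => X i k) (X (Fin.last m) k) w) := by
  simp [gfun, Fin.sum_univ_castSucc, qmap, chartInner, lastCoord, headVec, PiLp.inner_apply,
    mul_comm]

lemma hasGradientAt_gfun (hμ : μ ≠ 0) {w : EuclideanSpace ℝ (Fin m)} (hw : ‖w‖ < 1) :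
    HasGradientAt (gfun (m + 1) p μ (Matrix.of X) : EuclideanSpace ℝ (Fin m) → ℝ)
      ((p : ℝ)⁻¹ • ∑ k : Fin p, chartGrad μ (headVec fun i => X i k) (X (Fin.last m) k) w) w := by
  have hg : (gfun (m + 1) p μ (Matrix.of X) : EuclideanSpace ℝ (Fin m) → ℝ) = fun w =>
      (p : ℝ)⁻¹ * ∑ k : Fin p, hmu μ (chartInner (headVec fun i => X i k) (X (Fin.last m) k) w) :=
    funext (gfun_eq_sum_chartInner X μ)
  rw [hg, hasGradientAt_iff_hasFDerivAt, map_smul, map_sum]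
  exact (HasFDerivAt.fun_sum fun k _ =>
    (hasGradientAt_hmu_chartInner hμ _ _ hw).hasFDerivAt).const_mul _

lemma gradg_eq_sum_chartGrad (hμ : μ ≠ 0) {w : EuclideanSpace ℝ (Fin m)} (hw : ‖w‖ < 1) :
    gradg (m + 1) p μ (Matrix.of X) w =
      (p : ℝ)⁻¹ • ∑ k : Fin p, chartGrad μ (headVec fun i => X i k) (X (Fin.last m) k) w :=
  (hasGradientAt_gfun X hμ hw).gradient

lemma inner_gradg (hμ : μ ≠ 0) {w : EuclideanSpace ℝ (Fin m)} (hw : ‖w‖ < 1)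
    (v : EuclideanSpace ℝ (Fin m)) :
    ⟪v, (gradg (m + 1) p μ (Matrix.of X) w : EuclideanSpace ℝ (Fin m))⟫ =
      (p : ℝ)⁻¹ * ∑ k : Fin p, chartDeriv μ (headVec fun i => X i k) (X (Fin.last m) k) w v := by
  simp only [gradg_eq_sum_chartGrad X hμ hw, inner_smul_right, inner_sum, inner_chartGrad]

lemma exists_hasFDerivAt_gradg (hμ : μ ≠ 0) {w : EuclideanSpace ℝ (Fin m)} (hw : ‖w‖ < 1) :
    ∃ L : EuclideanSpace ℝ (Fin m) →L[ℝ] EuclideanSpace ℝ (Fin m),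
      HasFDerivAt (gradg (m + 1) p μ (Matrix.of X) :
        EuclideanSpace ℝ (Fin m) → EuclideanSpace ℝ (Fin m)) L w ∧
      ∀ v, ⟪L v, v⟫ =
        (p : ℝ)⁻¹ * ∑ k : Fin p, chartHess μ (headVec fun i => X i k) (X (Fin.last m) k) w v := by
  choose L hL hLv using fun k : Fin p => exists_hasFDerivAt_chartGrad (μ := μ)
    (headVec fun i => X i k) (X (Fin.last m) k) hw
  refine ⟨(p : ℝ)⁻¹ • ∑ k, L k, ?_, fun v => ?_⟩
  · refine ((HasFDerivAt.fun_sum fun k _ => hL k).const_smul (p : ℝ)⁻¹).congr_of_eventuallyEq ?_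
    filter_upwards [continuous_norm.continuousAt.eventually_lt_const hw] with u hu
    exact gradg_eq_sum_chartGrad X hμ hu
  · simp [inner_smul_left, sum_inner, hLv]

lemma hasFDerivAt_gradg (hμ : μ ≠ 0) {w : EuclideanSpace ℝ (Fin m)} (hw : ‖w‖ < 1) :
    HasFDerivAt (gradg (m + 1) p μ (Matrix.of X) :
        EuclideanSpace ℝ (Fin m) → EuclideanSpace ℝ (Fin m))
      (hessg (m + 1) p μ (Matrix.of X) w) w :=
  let ⟨_, hL, _⟩ := exists_hasFDerivAt_gradg X hμ hw
  hL.differentiableAt.hasFDerivAt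

lemma inner_hessg (hμ : μ ≠ 0) {w : EuclideanSpace ℝ (Fin m)} (hw : ‖w‖ < 1)
    (v : EuclideanSpace ℝ (Fin m)) :
    ⟪(hessg (m + 1) p μ (Matrix.of X) w v : EuclideanSpace ℝ (Fin m)), v⟫ =
      (p : ℝ)⁻¹ * ∑ k : Fin p, chartHess μ (headVec fun i => X i k) (X (Fin.last m) k) w v := by
  obtain ⟨L, hL, hLv⟩ := exists_hasFDerivAt_gradg X hμ hw
  rw [hessg, HasFDerivAt.fderiv hL]
  exact hLv v

end Empirical

section Landscape

variable {E : Type*} [NormedAddCommGroup E]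

lemma hasDerivAt_add_smul_const [NormedSpace ℝ E] (u v : E) (t : ℝ) :
    HasDerivAt (fun s : ℝ => u + s • v) v t := by
  simpa using ((hasDerivAt_id t).smul_const v).const_add u

variable [InnerProductSpace ℝ E] {s : Set E} {g : E → ℝ} {G : E → E} {H : E → E →L[ℝ] E}
  {κ ρ₁ ρ₂ ρ₃ : ℝ} {u v w : E}

lemma hasDerivAt_inner_comp_add_smul {L : E →L[ℝ] E} {t : ℝ}
    (hG : HasFDerivAt G L (u + t • v)) :
    HasDerivAt (fun s : ℝ => ⟪v, G (u + s • v)⟫) ⟪L v, v⟫ t := by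
  have hline := hG.comp_hasDerivAt t (hasDerivAt_add_smul_const u v t)
  simpa [real_inner_comm, Function.comp_def] using
    (innerSL ℝ v).hasFDerivAt.comp_hasDerivAt t hline

lemma mul_norm_sq_le_inner_sub (hs : Convex ℝ s) (hG : ∀ w ∈ s, HasFDerivAt G (H w) w)
    (hconv : ∀ w ∈ s, ∀ v, κ * ‖v‖ ^ 2 ≤ ⟪H w v, v⟫) (hu : u ∈ s) (hw : w ∈ s) :
    κ * ‖w - u‖ ^ 2 ≤ ⟪w - u, G w - G u⟫ := by
  have hseg {t : ℝ} (ht : t ∈ Set.Icc (0 : ℝ) 1) : u + t • (w - u) ∈ s :=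
    hs.add_smul_sub_mem hu hw ht
  have hderiv {t : ℝ} (ht : t ∈ Set.Icc (0 : ℝ) 1) :
      HasDerivAt (fun r : ℝ => ⟪w - u, G (u + r • (w - u))⟫)
        ⟪H (u + t • (w - u)) (w - u), w - u⟫ t :=
    hasDerivAt_inner_comp_add_smul (hG _ (hseg ht))
  obtain ⟨ξ, hξ, hslope⟩ := exists_hasDerivAt_eq_slope _ _ (zero_lt_one (α := ℝ))
    (fun t ht => (hderiv ht).continuousAt.continuousWithinAt)
    (fun t ht => hderiv (Set.Ioo_subset_Icc_self ht))
  have hcurv := hconv _ (hseg (Set.Ioo_subset_Icc_self hξ)) (w - u)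
  rw [hslope] at hcurv
  simpa [inner_sub_right] using hcurv

lemma eq_of_critical_of_strongly_convex (hκ : 0 < κ) (hs : Convex ℝ s)
    (hG : ∀ w ∈ s, HasFDerivAt G (H w) w)
    (hconv : ∀ w ∈ s, ∀ v, κ * ‖v‖ ^ 2 ≤ ⟪H w v, v⟫) (hu : u ∈ s) (hw : w ∈ s)
    (hGu : G u = 0) (hGw : G w = 0) : w = u := by
  have hle := mul_norm_sq_le_inner_sub hs hG hconv hu hw
  rw [hGu, hGw, sub_zero, inner_zero_right] at hle
  have hsq : ‖w - u‖ ^ 2 ≤ 0 := nonpos_of_mul_nonpos_right hle hκ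
  exact sub_eq_zero.1 (norm_eq_zero.1 (pow_eq_zero_iff two_ne_zero |>.1
    (hsq.antisymm (sq_nonneg _))))

lemma norm_sub_le_of_critical_of_strongly_convex (hκ : 0 < κ) (hs : Convex ℝ s)
    (hG : ∀ w ∈ s, HasFDerivAt G (H w) w)
    (hconv : ∀ w ∈ s, ∀ v, κ * ‖v‖ ^ 2 ≤ ⟪H w v, v⟫) (hu : u ∈ s) (hw : w ∈ s)
    (hGw : G w = 0) : ‖w - u‖ ≤ ‖G u‖ / κ := by
  have hle := mul_norm_sq_le_inner_sub hs hG hconv hu hw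
  rw [hGw, zero_sub, inner_neg_right] at hle
  have hcs : -⟪w - u, G u⟫ ≤ ‖w - u‖ * ‖G u‖ :=
    (neg_le_abs _).trans (abs_real_inner_le_norm _ _)
  rw [le_div_iff₀ hκ]
  rcases (norm_nonneg (w - u)).eq_or_lt with hzero | hpos
  · simp [← hzero]
  · nlinarith

variable [CompleteSpace E]

lemma hasDerivAt_comp_add_smul {t : ℝ} (hg : HasGradientAt g (G (u + t • v)) (u + t • v)) :
    HasDerivAt (fun s : ℝ => g (u + s • v)) ⟪v, G (u + t • v)⟫ t := by
  simpa [real_inner_comm, Function.comp_def] using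
    (hasGradientAt_iff_hasFDerivAt.1 hg).comp_hasDerivAt t (hasDerivAt_add_smul_const u v t)

lemma second_deriv_nonneg_of_isLocalMin {f f' : ℝ → ℝ} {f'' x : ℝ}
    (hf : ∀ᶠ y in nhds x, HasDerivAt f (f' y) y) (hf' : HasDerivAt f' f'' x)
    (hmin : IsLocalMin f x) : 0 ≤ f'' := by
  by_contra! hneg
  have hderiv : deriv f =ᶠ[nhds x] f' := hf.mono fun y hy => hy.deriv
  have hmax : IsLocalMax f x := by
    refine isLocalMax_of_deriv_deriv_neg ?_ hmin.deriv_eq_zero hf.self_of_nhds.continuousAt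
    rwa [hderiv.deriv_eq, hf'.deriv]
  have hconst : f =ᶠ[nhds x] fun _ => f x := by
    filter_upwards [hmin, hmax] with y hge hle using le_antisymm hle hge
  have hzero : f' =ᶠ[nhds x] fun _ => 0 := by
    refine hderiv.symm.trans ?_
    simpa using hconst.deriv
  exact hneg.ne ((hf'.congr_of_eventuallyEq hzero.symm).unique (hasDerivAt_const x 0))

lemma inner_hess_nonneg_of_isLocalMin {L : E →L[ℝ] E}
    (hg : ∀ᶠ u in nhds w, HasGradientAt g (G u) u) (hG : HasFDerivAt G L w)
    (hmin : IsLocalMin g w) (v : E) : 0 ≤ ⟪L v, v⟫ := by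
  have hline : Filter.Tendsto (fun s : ℝ => w + s • v) (nhds 0) (nhds w) := by
    simpa using (hasDerivAt_add_smul_const w v 0).continuousAt.tendsto
  have hw : w + (0 : ℝ) • v = w := by simp
  refine second_deriv_nonneg_of_isLocalMin (f := fun s : ℝ => g (w + s • v)) (x := 0)
    ((hline.eventually hg).mono fun s hs => hasDerivAt_comp_add_smul hs) ?_ ?_
  · exact hasDerivAt_inner_comp_add_smul (by rwa [hw])
  · filter_upwards [hline.eventually hmin] with s hs
    rwa [hw]

lemma gradient_eq_zero_of_isLocalMin (hg : HasGradientAt g (G w) w) (hmin : IsLocalMin g w) :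
    G w = 0 := by
  simpa using hmin.hasFDerivAt_eq_zero (hasGradientAt_iff_hasFDerivAt.1 hg)

lemma inner_sub_gradient_nonneg_of_isMinOn (hs : Convex ℝ s) (hg : HasGradientAt g (G w) w)
    (hw : w ∈ s) (hmin : IsMinOn g s w) (hu : u ∈ s) : 0 ≤ ⟪u - w, G w⟫ := by
  simpa [real_inner_comm] using IsLocalMinOn.hasFDerivWithinAt_nonneg hmin.localize
    (hasGradientAt_iff_hasFDerivAt.1 hg).hasFDerivWithinAt
    (sub_mem_posTangentConeAt_of_segment_subset (hs.segment_subset hw hu))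

lemma exists_isLocalMin_norm_lt [FiniteDimensional ℝ E] (hρ₁ : 0 < ρ₁)
    (hg : ∀ w, ‖w‖ ≤ ρ₁ → HasGradientAt g (G w) w) (hgrad : ∀ w, ‖w‖ = ρ₁ → 0 < ⟪w, G w⟫) :
    ∃ w, ‖w‖ < ρ₁ ∧ IsLocalMin g w := by
  simp only [← mem_closedBall_zero_iff] at hg
  obtain ⟨w, hw, hmin⟩ := (isCompact_closedBall (0 : E) ρ₁).exists_isMinOn
    ⟨0, Metric.mem_closedBall_self hρ₁.le⟩
    fun w hw => (hg w hw).continuousAt.continuousWithinAt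
  have hlt : ‖w‖ < ρ₁ := by
    refine (mem_closedBall_zero_iff.1 hw).lt_of_ne fun hsphere => ?_
    have hinward := inner_sub_gradient_nonneg_of_isMinOn (convex_closedBall 0 ρ₁) (hg w hw) hw hmin
      (Metric.mem_closedBall_self hρ₁.le)
    rw [zero_sub, inner_neg_left] at hinward
    linarith [hgrad w hsphere]
  exact ⟨w, hlt, hmin.isLocalMin (Metric.closedBall_mem_nhds_of_mem (by simpa using hlt))⟩

theorem exists_unique_localMin [FiniteDimensional ℝ E] (hκ : 0 < κ) (hρ₁ : 0 < ρ₁)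
    (h12 : ρ₁ ≤ ρ₂) (h23 : ρ₂ < ρ₃)
    (hg : ∀ w, ‖w‖ < ρ₃ → HasGradientAt g (G w) w)
    (hG : ∀ w, ‖w‖ < ρ₃ → HasFDerivAt G (H w) w)
    (hconv : ∀ w, ‖w‖ ≤ ρ₁ → ∀ v, κ * ‖v‖ ^ 2 ≤ ⟪H w v, v⟫)
    (hgrad : ∀ w, ρ₁ ≤ ‖w‖ → ‖w‖ ≤ ρ₂ → 0 < ⟪w, G w⟫)
    (hcurv : ∀ w, ρ₂ ≤ ‖w‖ → ‖w‖ < ρ₃ → ⟪H w w, w⟫ < 0) :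
    ∃ w, ‖w‖ < ρ₃ ∧ IsLocalMinOn g {w | ‖w‖ < ρ₃} w ∧ ‖w‖ ≤ ‖G 0‖ / κ ∧
      ∀ w', ‖w'‖ < ρ₃ → IsLocalMinOn g {w | ‖w‖ < ρ₃} w' → w' = w := by
  have h13 : ρ₁ < ρ₃ := h12.trans_lt h23
  have hopen : IsOpen {w : E | ‖w‖ < ρ₃} := isOpen_lt continuous_norm continuous_const
  have hball {w : E} : w ∈ Metric.closedBall (0 : E) ρ₁ ↔ ‖w‖ ≤ ρ₁ := mem_closedBall_zero_iff
  have hG' (w : E) (hw : w ∈ Metric.closedBall 0 ρ₁) : HasFDerivAt G (H w) w :=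
    hG w ((hball.1 hw).trans_lt h13)
  have hconv' (w : E) (hw : w ∈ Metric.closedBall 0 ρ₁) : ∀ v, κ * ‖v‖ ^ 2 ≤ ⟪H w v, v⟫ :=
    hconv w (hball.1 hw)
  obtain ⟨w, hw, hmin⟩ := exists_isLocalMin_norm_lt hρ₁ (fun w hw => hg w (hw.trans_lt h13))
    fun w hw => hgrad w hw.ge (hw.trans_le h12)
  have hGw : G w = 0 := gradient_eq_zero_of_isLocalMin (hg w (hw.trans h13)) hmin
  refine ⟨w, hw.trans h13, hmin.on _, ?_, fun w' hw' hmin' => ?_⟩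
  · simpa only [sub_zero] using norm_sub_le_of_critical_of_strongly_convex hκ
      (convex_closedBall 0 ρ₁) hG' hconv' (Metric.mem_closedBall_self hρ₁.le) (hball.2 hw.le) hGw
  have hlocal : IsLocalMin g w' := hmin'.isLocalMin (hopen.mem_nhds hw')
  have hGw' : G w' = 0 := gradient_eq_zero_of_isLocalMin (hg w' hw') hlocal
  rcases le_total ‖w'‖ ρ₁ with h₁ | h₁
  · exact eq_of_critical_of_strongly_convex hκ (convex_closedBall 0 ρ₁) hG' hconv'
      (hball.2 hw.le) (hball.2 h₁) hGw hGw'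
  rcases le_total ‖w'‖ ρ₂ with h₂ | h₂
  · exact absurd (hgrad w' h₁ h₂) (by simp [hGw'])
  · refine absurd (hcurv w' h₂ hw') (not_lt.2 ?_)
    have hnear : ∀ᶠ u in nhds w', HasGradientAt g (G u) u :=
      Filter.mem_of_superset (hopen.mem_nhds hw') hg
    exact inner_hess_nonneg_of_isLocalMin hnear (hG w' hw') hlocal w'

end Landscape

/-- The standard Gaussian law on `ℝ`. -/
abbrev stdNormal : Measure ℝ := gaussianReal 0 1

section Gaussian

variable {a : ℝ} {v : ℝ≥0}

lemma integrable_pow_gaussianReal (k : ℕ) : Integrable (fun z => z ^ k) (gaussianReal a v) := by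
  refine ((memLp_id_gaussianReal (k : ℝ≥0)).integrable_norm_pow').mono'
    (by fun_prop) (.of_forall fun z => ?_)
  rw [norm_pow, id]

lemma integrable_gaussianReal_iff (hv : v ≠ 0) {f : ℝ → ℝ} :
    Integrable f (gaussianReal a v) ↔ Integrable (fun z => gaussianPDFReal a v z * f z) := by
  rw [gaussianReal_of_var_ne_zero a hv, integrable_withDensity_iff_integrable_smul' (by fun_prop)
    (.of_forall fun _ => gaussianPDF_lt_top)]
  simp only [toReal_gaussianPDF, smul_eq_mul]

lemma hasDerivAt_gaussianPDFReal (hv : v ≠ 0) (z : ℝ) :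
    HasDerivAt (gaussianPDFReal a v) (-((z - a) / v) * gaussianPDFReal a v z) z := by
  have hexponent : HasDerivAt (fun z => -(z - a) ^ 2 / (2 * v)) (-((z - a) / v)) z := by
    refine ((((hasDerivAt_id z).sub_const a).pow 2).neg.div_const (2 * v)).congr_deriv ?_
    simp only [id]
    field_simp
    ring
  rw [gaussianPDFReal_def]
  exact (hexponent.exp.const_mul _).congr_deriv (by ring)

-- Integration by parts: the density `φ` satisfies `v φ'(z) = -(z - a) φ(z)`.
lemma integral_sub_mul_gaussianReal (hv : v ≠ 0) {f f' : ℝ → ℝ}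
    (hf : ∀ z, HasDerivAt f (f' z) z) (hfi : Integrable f (gaussianReal a v))
    (hzf : Integrable (fun z => (z - a) * f z) (gaussianReal a v))
    (hf'i : Integrable f' (gaussianReal a v)) :
    ∫ z, (z - a) * f z ∂(gaussianReal a v) = v * ∫ z, f' z ∂(gaussianReal a v) := by
  have hv' : (v : ℝ) ≠ 0 := NNReal.coe_ne_zero.2 hv
  rw [integrable_gaussianReal_iff hv] at hfi hzf hf'i
  have hparts := integral_mul_deriv_eq_deriv_mul_of_integrable (u := f) (v := gaussianPDFReal a v)
    (fun z _ => hf z) (fun z _ => hasDerivAt_gaussianPDFReal hv z)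
    ((hzf.const_mul (-(v : ℝ)⁻¹)).congr (.of_forall fun z => by simp only [Pi.mul_apply]; ring))
    (hf'i.congr (.of_forall fun z => mul_comm _ _)) (hfi.congr (.of_forall fun z => mul_comm _ _))
  simp only [integral_gaussianReal_eq_integral_smul hv, smul_eq_mul]
  calc ∫ z, gaussianPDFReal a v z * ((z - a) * f z)
      = -v * ∫ z, f z * (-((z - a) / v) * gaussianPDFReal a v z) := by
        rw [← integral_const_mul]
        congr 1 with z
        field_simp
    _ = v * ∫ z, gaussianPDFReal a v z * f' z := by
        rw [hparts, neg_mul_neg]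
        simp only [mul_comm]

lemma integral_sq_stdNormal : ∫ z, z ^ 2 ∂stdNormal = 1 := by
  simpa [integral_id_gaussianReal] using
    (variance_eq_integral (μ := stdNormal) aemeasurable_id).symm.trans variance_id_gaussianReal

lemma integral_pow_four_stdNormal : ∫ z, z ^ 4 ∂stdNormal = 3 := by
  have hstein := integral_sub_mul_gaussianReal (a := 0) one_ne_zero
    (fun z => by simpa using hasDerivAt_pow 3 z) (integrable_pow_gaussianReal 3)
    ((integrable_pow_gaussianReal 4).congr (.of_forall fun z => by ring))
    ((integrable_pow_gaussianReal 2).const_mul 3)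
  rw [integral_const_mul, integral_sq_stdNormal] at hstein
  calc ∫ z, z ^ 4 ∂stdNormal = ∫ z, (z - 0) * z ^ 3 ∂stdNormal := by
        congr 1 with z
        ring
    _ = 3 := by rw [hstein, NNReal.coe_one, one_mul, mul_one]

lemma integrable_exp_sq_stdNormal : Integrable (fun z => exp (z ^ 2 / 8)) stdNormal := by
  rw [integrable_gaussianReal_iff one_ne_zero]
  refine ((integrable_exp_neg_mul_sq (b := 3 / 8) (by norm_num)).const_mul (√(2 * π))⁻¹).congr
    (.of_forall fun z => ?_)
  simp only [gaussianPDFReal_def, NNReal.coe_one, mul_one, sub_zero]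
  rw [mul_assoc, ← exp_add]
  ring_nf

lemma integrable_stdNormal_of_abs_le {f : ℝ → ℝ} (hf : Measurable f) (C : ℝ)
    (hbound : ∀ z, |f z| ≤ C * exp (z ^ 2 / 8)) : Integrable f stdNormal :=
  (integrable_exp_sq_stdNormal.const_mul C).mono' hf.aestronglyMeasurable (.of_forall hbound)

lemma one_le_exp_sq (z : ℝ) : 1 ≤ exp (z ^ 2 / 8) := one_le_exp (by positivity)

lemma sq_le_exp_sq (z : ℝ) : z ^ 2 ≤ 8 * exp (z ^ 2 / 8) := by
  linarith [add_one_le_exp (z ^ 2 / 8)]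

lemma pow_four_le_exp_sq (z : ℝ) : z ^ 4 ≤ 128 * exp (z ^ 2 / 8) := by
  have h := pow_div_factorial_le_exp (z ^ 2 / 8) (by positivity) 2
  norm_num [Nat.factorial] at h
  linarith

lemma abs_le_exp_sq (z : ℝ) : |z| ≤ 5 * exp (z ^ 2 / 8) := by
  linarith [sq_nonneg (|z| - 1), sq_abs z, sq_le_exp_sq z, one_le_exp_sq z]

lemma measurable_tanh_const_mul (c : ℝ) : Measurable fun z => tanh (c * z) :=
  continuous_tanh.measurable.comp (measurable_const_mul c)

lemma integrable_tanh_stdNormal (c : ℝ) : Integrable (fun z => tanh (c * z)) stdNormal :=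
  .of_bound (measurable_tanh_const_mul c).aestronglyMeasurable 1
    (.of_forall fun z => abs_tanh_le_one (c * z))

lemma integrable_mul_tanh_stdNormal (c : ℝ) :
    Integrable (fun z => z * tanh (c * z)) stdNormal := by
  refine (integrable_pow_gaussianReal 1).mul_bdd (c := 1)
    (measurable_tanh_const_mul c).aestronglyMeasurable
    (.of_forall fun z => abs_tanh_le_one (c * z)) |>.congr (.of_forall fun z => ?_)
  simp only [pow_one]

lemma integrable_one_sub_tanh_sq_stdNormal (c : ℝ) :
    Integrable (fun z => 1 - tanh (c * z) ^ 2) stdNormal :=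
  .of_bound ((measurable_tanh_const_mul c).pow_const 2 |>.const_sub 1).aestronglyMeasurable 1
    (.of_forall fun z => by
      rw [norm_of_nonneg (one_sub_tanh_sq_nonneg _)]
      exact one_sub_tanh_sq_le_one _)

lemma integral_mul_tanh_stdNormal (c : ℝ) :
    ∫ z, z * tanh (c * z) ∂stdNormal = c * ∫ z, (1 - tanh (c * z) ^ 2) ∂stdNormal := by
  have hderiv (z : ℝ) : HasDerivAt (fun z => tanh (c * z)) ((1 - tanh (c * z) ^ 2) * c) z :=
    (hasDerivAt_tanh (c * z)).comp z (by simpa using (hasDerivAt_id z).const_mul c)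
  have hstein := integral_sub_mul_gaussianReal (a := 0) one_ne_zero hderiv
    (integrable_tanh_stdNormal c) (by simpa only [sub_zero] using integrable_mul_tanh_stdNormal c)
    ((integrable_one_sub_tanh_sq_stdNormal c).mul_const c)
  simpa only [sub_zero, NNReal.coe_one, one_mul, integral_mul_const, mul_comm c] using hstein

lemma half_le_integral_mul_tanh {c : ℝ} (hc : 1 ≤ c) :
    1 / 2 ≤ ∫ z, z * tanh (c * z) ∂stdNormal := by
  have hpoly : Integrable (fun z : ℝ => 11 / 16 * z ^ 2 - z ^ 4 / 16) stdNormal :=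
    ((integrable_pow_gaussianReal 2).const_mul _).sub ((integrable_pow_gaussianReal 4).div_const _)
  calc 1 / 2 = ∫ z, (11 / 16 * z ^ 2 - z ^ 4 / 16) ∂stdNormal := by
        rw [integral_sub ((integrable_pow_gaussianReal 2).const_mul _)
          ((integrable_pow_gaussianReal 4).div_const _), integral_const_mul, integral_div,
          integral_sq_stdNormal, integral_pow_four_stdNormal]
        norm_num
    _ ≤ ∫ z, z * tanh (c * z) ∂stdNormal := by
        refine integral_mono hpoly (integrable_mul_tanh_stdNormal c) fun z =>
          (le_mul_tanh z).trans ?_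
        rcases le_total 0 z with hz | hz
        · exact mul_le_mul_of_nonneg_left (monotone_tanh (le_mul_of_one_le_left hz hc)) hz
        · exact mul_le_mul_of_nonpos_left (monotone_tanh (mul_le_of_one_le_left hz hc)) hz

lemma integral_mul_tanh_le_one (c : ℝ) : ∫ z, z * tanh (c * z) ∂stdNormal ≤ 1 := by
  have hsq : Integrable (fun z : ℝ => z ^ 2 / 2) stdNormal :=
    (integrable_pow_gaussianReal 2).div_const 2
  calc ∫ z, z * tanh (c * z) ∂stdNormal
      ≤ ∫ z, ((1 : ℝ) / 2 + z ^ 2 / 2) ∂stdNormal := by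
        refine integral_mono (integrable_mul_tanh_stdNormal c) ((integrable_const _).add hsq)
          fun z => ?_
        change z * tanh (c * z) ≤ 1 / 2 + z ^ 2 / 2
        linarith [two_mul_le_add_sq z (tanh (c * z)), tanh_sq_lt_one (c * z)]
    _ = 1 := by
        rw [integral_add (integrable_const _) hsq, integral_const, integral_div,
          integral_sq_stdNormal, probReal_univ]
        norm_num

lemma integral_comp_rotation {c s : ℝ} (h : c ^ 2 + s ^ 2 = 1) {F : ℝ × ℝ → ℝ}
    (hF : Measurable F) :
    ∫ z, F (c * z.1 - s * z.2, s * z.1 + c * z.2) ∂(stdNormal.prod stdNormal) =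
      ∫ z, F z ∂(stdNormal.prod stdNormal) := by
  obtain ⟨φ, hcos, hsin⟩ : ∃ φ : ℝ, cos φ = c ∧ sin φ = -s := by
    have hnorm : ‖(⟨c, -s⟩ : ℂ)‖ = 1 := by
      rw [Complex.norm_def, Complex.normSq_mk, sqrt_eq_one, ← h]
      ring
    have hne : (⟨c, -s⟩ : ℂ) ≠ 0 := norm_ne_zero_iff.1 (hnorm ▸ one_ne_zero)
    exact ⟨Complex.arg ⟨c, -s⟩, by rw [Complex.cos_arg hne, hnorm, div_one],
      by rw [Complex.sin_arg, hnorm, div_one]⟩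
  have hrot := IsGaussian.map_rotation_eq_self (μ := stdNormal) integral_id_gaussianReal φ
  conv_rhs => rw [← hrot, integral_map (by fun_prop) hF.aestronglyMeasurable]
  simp only [ContinuousLinearMap.rotation_apply, hcos, hsin, smul_eq_mul]
  congr 1 with z
  congr 2 <;> ring

lemma map_sum_pi_stdNormal {ι : Type*} [Fintype ι] (c : ι → ℝ) :
    (Measure.pi fun _ : ι => stdNormal).map (fun g => ∑ i, c i * g i) =
      stdNormal.map (fun z => √(∑ i, c i ^ 2) * z) := by
  let L : StrongDual ℝ (EuclideanSpace ℝ ι) := innerSL ℝ (WithLp.toLp 2 c)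
  have hL : (fun g : ι → ℝ => ∑ i, c i * g i) = L ∘ WithLp.toLp 2 := by
    ext g
    simp [L, PiLp.inner_apply, mul_comm]
  have hnorm : ‖L‖ = √(∑ i, c i ^ 2) := by
    simp [L, EuclideanSpace.norm_eq]
  rw [hL, ← Measure.map_map (by fun_prop) (by fun_prop), map_pi_eq_stdGaussian,
    IsGaussian.map_eq_gaussianReal, integral_strongDual_stdGaussian, variance_dual_stdGaussian,
    gaussianReal_map_const_mul, mul_zero, hnorm, mul_one]
  congr 1
  exact toNNReal_of_nonneg (sq_nonneg _)

end Gaussian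

/-- The Bernoulli law on `{0, 1} ⊆ ℝ` with mean `θ`. -/
def bernoulliLaw (θ : ℝ) : Measure ℝ :=
  θ.toNNReal • Measure.dirac 1 + (1 - θ).toNNReal • Measure.dirac 0

instance isFiniteMeasure_bernoulliLaw (θ : ℝ) : IsFiniteMeasure (bernoulliLaw θ) := by
  unfold bernoulliLaw
  infer_instance

/-- The law of the support indicator of a vector with i.i.d. `BG(θ)` entries. -/
abbrev bernoulliVec (θ : ℝ) (ι : Type*) [Fintype ι] : Measure (ι → ℝ) :=
  Measure.pi fun _ => bernoulliLaw θ

/-- The conditional standard deviation of `∑ vᵢ xᵢ` given the support indicator `b` of a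
Bernoulli–Gaussian vector `x`. -/
def mixStd {ι : Type*} [Fintype ι] (v b : ι → ℝ) : ℝ := √(∑ i, (v i * b i) ^ 2)

section Mixture

variable {θ : ℝ}

lemma toNNReal_add_toNNReal_one_sub (h0 : 0 ≤ θ) (h1 : θ ≤ 1) :
    (θ.toNNReal : ℝ≥0∞) + ((1 - θ).toNNReal : ℝ≥0∞) = 1 := by
  rw [← ENNReal.coe_add, ← toNNReal_add h0 (sub_nonneg.2 h1), add_sub_cancel, toNNReal_one,
    ENNReal.coe_one]

lemma isProbabilityMeasure_bernoulliLaw (h0 : 0 ≤ θ) (h1 : θ ≤ 1) :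
    IsProbabilityMeasure (bernoulliLaw θ) :=
  ⟨by simp [bernoulliLaw, toNNReal_add_toNNReal_one_sub h0 h1]⟩

lemma isProbabilityMeasure_bg (h0 : 0 ≤ θ) (h1 : θ ≤ 1) : IsProbabilityMeasure (bg θ) :=
  ⟨by simp [bg, toNNReal_add_toNNReal_one_sub h0 h1]⟩

lemma integrable_bernoulliLaw : Integrable (fun b : ℝ => b) (bernoulliLaw θ) :=
  (integrable_dirac (by simp)).smul_measure_nnreal.add_measure
    (integrable_dirac (by simp)).smul_measure_nnreal

lemma integral_id_bernoulliLaw (h0 : 0 ≤ θ) : ∫ b, b ∂(bernoulliLaw θ) = θ := by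
  have hdirac (a : ℝ) : Integrable (fun b : ℝ => b) (Measure.dirac a) := integrable_dirac (by simp)
  rw [bernoulliLaw, integral_add_measure (hdirac 1).smul_measure_nnreal
    (hdirac 0).smul_measure_nnreal, integral_smul_nnreal_measure, integral_smul_nnreal_measure,
    integral_dirac, integral_dirac]
  simp [NNReal.smul_def, h0]

lemma ae_bernoulliLaw (θ : ℝ) : ∀ᵐ b ∂(bernoulliLaw θ), b = 0 ∨ b = 1 := by
  rw [bernoulliLaw, ae_add_measure_iff]
  constructor <;> refine Measure.ae_smul_measure ?_ _ <;> rw [ae_dirac_eq] <;> simp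

lemma integrable_bg {f : ℝ → ℝ} (hf : Integrable f stdNormal) : Integrable f (bg θ) :=
  hf.smul_measure_nnreal.add_measure (integrable_dirac (by simp)).smul_measure_nnreal

lemma integral_bg (h0 : 0 ≤ θ) (h1 : θ ≤ 1) {f : ℝ → ℝ} (hf : Integrable f stdNormal) :
    ∫ y, f y ∂(bg θ) = θ * ∫ y, f y ∂stdNormal + (1 - θ) * f 0 := by
  have hdirac : Integrable f (Measure.dirac 0) := integrable_dirac (by simp)
  rw [bg, integral_add_measure hf.smul_measure_nnreal hdirac.smul_measure_nnreal,
    integral_smul_nnreal_measure, integral_smul_nnreal_measure, integral_dirac]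
  simp [NNReal.smul_def, h0, h1]

lemma bg_eq_map_mul : bg θ = ((bernoulliLaw θ).prod stdNormal).map fun y => y.1 * y.2 := by
  have hmul : Measurable fun y : ℝ × ℝ => y.1 * y.2 := by fun_prop
  rw [bg, bernoulliLaw, Measure.add_prod, Measure.map_add _ _ hmul, Measure.prod_smul_left,
    Measure.prod_smul_left, Measure.map_smul, Measure.map_smul, Measure.dirac_prod,
    Measure.dirac_prod, Measure.map_map hmul (by fun_prop), Measure.map_map hmul (by fun_prop)]
  congr 2 <;> simp [Function.comp_def]

variable {ι : Type*} [Fintype ι]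

lemma measurable_mixStd (v : ι → ℝ) : Measurable (mixStd v) := by
  unfold mixStd
  fun_prop

lemma measurable_mixStd_mul (v : ι → ℝ) :
    Measurable fun y : (ι → ℝ) × ℝ => mixStd v y.1 * y.2 :=
  ((measurable_mixStd v).comp measurable_fst).mul measurable_snd

lemma pi_bg_eq_map_mul :
    (Measure.pi fun _ : ι => bg θ) =
      ((bernoulliVec θ ι).prod (Measure.pi fun _ : ι => stdNormal)).map
        fun y i => y.1 i * y.2 i := by
  simp_rw [bg_eq_map_mul]
  rw [← Measure.pi_map_pi (f := fun _ (y : ℝ × ℝ) => y.1 * y.2) fun _ => by fun_prop,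
    ← (measurePreserving_arrowProdEquivProdArrow ℝ ℝ ι (fun _ => bernoulliLaw θ)
      (fun _ => stdNormal)).symm.map_eq,
    Measure.map_map (by fun_prop) (MeasurableEquiv.measurable _)]
  rfl

lemma map_sum_pi_bg (v : ι → ℝ) :
    (Measure.pi fun _ : ι => bg θ).map (fun x => ∑ i, v i * x i) =
      ((bernoulliVec θ ι).prod stdNormal).map fun y => mixStd v y.1 * y.2 := by
  have hmix := measurable_mixStd_mul v
  rw [pi_bg_eq_map_mul, Measure.map_map (by fun_prop) (by fun_prop)]
  ext s hs
  rw [Measure.map_apply (by fun_prop) hs, Measure.map_apply hmix hs,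
    Measure.prod_apply (measurableSet_preimage (by fun_prop) hs),
    Measure.prod_apply (measurableSet_preimage hmix hs)]
  refine lintegral_congr fun b => ?_
  have hgauss := congrArg (fun ν => ν s) (map_sum_pi_stdNormal fun i => v i * b i)
  rw [Measure.map_apply (by fun_prop) hs, Measure.map_apply (by fun_prop) hs] at hgauss
  simp only [mul_assoc] at hgauss
  exact hgauss

lemma ae_bernoulliVec (h0 : 0 ≤ θ) (h1 : θ ≤ 1) :
    ∀ᵐ b ∂(bernoulliVec θ ι), ∀ i, b i = 0 ∨ b i = 1 := by
  have := isProbabilityMeasure_bernoulliLaw h0 h1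
  exact ae_all_iff.2 fun i => (measurePreserving_eval
    (fun _ : ι => bernoulliLaw θ) i).quasiMeasurePreserving.ae (ae_bernoulliLaw θ)

lemma mixStd_nonneg (v b : ι → ℝ) : 0 ≤ mixStd v b := sqrt_nonneg _

lemma ae_mixStd_sq_eq (v : ι → ℝ) (h0 : 0 ≤ θ) (h1 : θ ≤ 1) :
    ∀ᵐ b ∂(bernoulliVec θ ι), mixStd v b ^ 2 = ∑ i, v i ^ 2 * b i := by
  filter_upwards [ae_bernoulliVec h0 h1] with b hb
  rw [mixStd, sq_sqrt (Finset.sum_nonneg fun i _ => sq_nonneg _)]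
  refine Finset.sum_congr rfl fun i _ => ?_
  rcases hb i with hi | hi <;> simp [hi]

lemma ae_mixStd_le_norm (v : EuclideanSpace ℝ ι) (h0 : 0 ≤ θ) (h1 : θ ≤ 1) :
    ∀ᵐ b ∂(bernoulliVec θ ι), mixStd v b ≤ ‖v‖ := by
  filter_upwards [ae_bernoulliVec h0 h1] with b hb
  rw [mixStd, EuclideanSpace.norm_eq]
  refine sqrt_le_sqrt (Finset.sum_le_sum fun i _ => ?_)
  rcases hb i with hi | hi <;> simp [hi, sq_nonneg]

lemma integrable_eval_bernoulliVec (h0 : 0 ≤ θ) (h1 : θ ≤ 1) (i : ι) :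
    Integrable (fun b => b i) (bernoulliVec θ ι) :=
  have := isProbabilityMeasure_bernoulliLaw h0 h1
  integrable_comp_eval (μ := fun _ : ι => bernoulliLaw θ) (f := fun b : ℝ => b)
    integrable_bernoulliLaw

lemma integrable_mixStd_sq (v : ι → ℝ) (h0 : 0 ≤ θ) (h1 : θ ≤ 1) :
    Integrable (fun b => mixStd v b ^ 2) (bernoulliVec θ ι) :=
  (integrable_finsetSum _ fun i _ =>
    (integrable_eval_bernoulliVec h0 h1 i).const_mul (v i ^ 2)).congr
      ((ae_mixStd_sq_eq v h0 h1).mono fun _ hb => hb.symm)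

lemma integral_mixStd_sq (v : EuclideanSpace ℝ ι) (h0 : 0 ≤ θ) (h1 : θ ≤ 1) :
    ∫ b, mixStd v b ^ 2 ∂(bernoulliVec θ ι) = ‖v‖ ^ 2 * θ := by
  have := isProbabilityMeasure_bernoulliLaw h0 h1
  have heval (i : ι) : ∫ b, b i ∂(bernoulliVec θ ι) = θ :=
    (integral_comp_eval (μ := fun _ : ι => bernoulliLaw θ) (f := fun b : ℝ => b)
      integrable_bernoulliLaw.aestronglyMeasurable).trans (integral_id_bernoulliLaw h0)
  rw [integral_congr_ae (ae_mixStd_sq_eq v h0 h1), integral_finsetSum _ fun i _ =>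
    (integrable_eval_bernoulliVec h0 h1 i).const_mul _]
  simp only [integral_const_mul, heval, EuclideanSpace.norm_sq_eq, norm_eq_abs, sq_abs,
    Finset.sum_mul]

end Mixture

/-- The conditional expectation of `F(⟪v, x̄⟫, xₙ)`, for `x = (x̄, xₙ)` with i.i.d. `BG(θ)` entries,
given that `⟪v, x̄⟫` has conditional standard deviation `s`. -/
def condExpect (θ : ℝ) (F : ℝ → ℝ → ℝ) (s : ℝ) : ℝ :=
  θ * ∫ z, F (s * z.1) z.2 ∂(stdNormal.prod stdNormal) + (1 - θ) * ∫ z, F (s * z) 0 ∂stdNormal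

section HeadLast

variable {θ s C : ℝ} {m : ℕ} {F : ℝ → ℝ → ℝ}

lemma abs_comp_mul_le_of_abs_le_exp_sq (hb : ∀ a b, |F a b| ≤ C * exp ((a ^ 2 + b ^ 2) / 8))
    (hs0 : 0 ≤ s) (hs1 : s ≤ 1) (z y : ℝ) :
    |F (s * z) y| ≤ C * (exp (z ^ 2 / 8) * exp (y ^ 2 / 8)) := by
  have hC : 0 ≤ C := by simpa using (abs_nonneg _).trans (hb 0 0)
  have hsz : (s * z) ^ 2 ≤ z ^ 2 := by
    rw [mul_pow]
    exact mul_le_of_le_one_left (sq_nonneg z) (pow_le_one₀ hs0 hs1)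
  refine (hb _ _).trans ?_
  rw [← exp_add, ← add_div]
  gcongr

lemma integrable_prod_of_abs_le_exp_sq (hF : Measurable (Function.uncurry F))
    (hb : ∀ a b, |F a b| ≤ C * exp ((a ^ 2 + b ^ 2) / 8)) (hs0 : 0 ≤ s) (hs1 : s ≤ 1) :
    Integrable (fun z : ℝ × ℝ => F (s * z.1) z.2) (stdNormal.prod stdNormal) := by
  refine ((integrable_exp_sq_stdNormal.mul_prod integrable_exp_sq_stdNormal).const_mul C).mono'
    ?_ (.of_forall fun z => abs_comp_mul_le_of_abs_le_exp_sq hb hs0 hs1 z.1 z.2)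
  exact (hF.comp ((measurable_fst.const_mul s).prodMk measurable_snd)).aestronglyMeasurable

lemma integrable_right_of_abs_le_exp_sq (hF : Measurable (Function.uncurry F))
    (hb : ∀ a b, |F a b| ≤ C * exp ((a ^ 2 + b ^ 2) / 8)) (a : ℝ) :
    Integrable (fun y => F a y) stdNormal := by
  refine integrable_stdNormal_of_abs_le (hF.comp measurable_prodMk_left) (C * exp (a ^ 2 / 8))
    fun z => (hb a z).trans_eq ?_
  rw [mul_assoc, ← exp_add, add_div]

lemma integrable_left_of_abs_le_exp_sq (hF : Measurable (Function.uncurry F))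
    (hb : ∀ a b, |F a b| ≤ C * exp ((a ^ 2 + b ^ 2) / 8)) (hs0 : 0 ≤ s) (hs1 : s ≤ 1) (y : ℝ) :
    Integrable (fun z => F (s * z) y) stdNormal := by
  refine integrable_stdNormal_of_abs_le
    (hF.comp ((measurable_id.const_mul s).prodMk measurable_const))
    (C * exp (y ^ 2 / 8)) fun z => (abs_comp_mul_le_of_abs_le_exp_sq hb hs0 hs1 z y).trans_eq ?_
  ring

@[fun_prop]
lemma measurable_headVec :
    Measurable (headVec : (Fin (m + 1) → ℝ) → EuclideanSpace ℝ (Fin m)) := by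
  unfold headVec
  fun_prop

lemma measurable_inner_headVec_last (v : EuclideanSpace ℝ (Fin m)) :
    Measurable fun x : Fin (m + 1) → ℝ => (⟪v, headVec x⟫, x (Fin.last m)) := by
  fun_prop

lemma measurable_mixStd_mul_prod (v : EuclideanSpace ℝ (Fin m)) :
    Measurable fun y : ((Fin m → ℝ) × ℝ) × ℝ => (mixStd v y.1.1 * y.1.2, y.2) :=
  ((measurable_mixStd_mul v).comp measurable_fst).prodMk measurable_snd

lemma map_inner_headVec_last (v : EuclideanSpace ℝ (Fin m)) :
    (bgVec θ (m + 1)).map (fun x => (⟪v, headVec x⟫, x (Fin.last m))) =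
      (((bernoulliVec θ (Fin m)).prod stdNormal).prod (bg θ)).map
        fun y => (mixStd v y.1.1 * y.1.2, y.2) := by
  have hsplit : (fun x : Fin (m + 1) → ℝ => (⟪v, headVec x⟫, x (Fin.last m))) =
      (Prod.map (fun x : Fin m → ℝ => ∑ i, v i * x i) id ∘ Prod.swap) ∘
        MeasurableEquiv.piFinSuccAbove (fun _ => ℝ) (Fin.last m) := by
    ext x
    · simp [headVec, PiLp.inner_apply, MeasurableEquiv.piFinSuccAbove, Fin.init, mul_comm]
    · simp [MeasurableEquiv.piFinSuccAbove]
  rw [hsplit, bgVec, ← Measure.map_map (by fun_prop) (MeasurableEquiv.measurable _),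
    (measurePreserving_piFinSuccAbove (fun _ : Fin (m + 1) => bg θ) (Fin.last m)).map_eq,
    ← Measure.map_map (by fun_prop) measurable_swap, Measure.prod_swap,
    ← Measure.map_prod_map _ _ (by fun_prop) measurable_id, map_sum_pi_bg,
    Measure.map_prod_map _ _ (measurable_mixStd_mul v) measurable_id]
  rfl

lemma integrable_mixture_of_abs_le_exp_sq (v : EuclideanSpace ℝ (Fin m)) (hv : ‖v‖ ≤ 1)
    (h0 : 0 ≤ θ) (h1 : θ ≤ 1) (hF : Measurable (Function.uncurry F))
    (hb : ∀ a b, |F a b| ≤ C * exp ((a ^ 2 + b ^ 2) / 8)) :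
    Integrable (fun y : ((Fin m → ℝ) × ℝ) × ℝ => F (mixStd v y.1.1 * y.1.2) y.2)
      (((bernoulliVec θ (Fin m)).prod stdNormal).prod (bg θ)) := by
  have := isProbabilityMeasure_bernoulliLaw h0 h1
  have := isProbabilityMeasure_bg h0 h1
  have hfst : Measure.QuasiMeasurePreserving (fun y : ((Fin m → ℝ) × ℝ) × ℝ => y.1.1)
      (((bernoulliVec θ (Fin m)).prod stdNormal).prod (bg θ)) (bernoulliVec θ (Fin m)) :=
    Measure.quasiMeasurePreserving_fst.comp Measure.quasiMeasurePreserving_fst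
  refine ((((integrable_const (1 : ℝ)).mul_prod integrable_exp_sq_stdNormal).mul_prod
    (integrable_bg integrable_exp_sq_stdNormal)).const_mul C).mono'
    (hF.comp (measurable_mixStd_mul_prod v)).aestronglyMeasurable ?_
  filter_upwards [hfst.ae (ae_mixStd_le_norm v h0 h1)] with y hy
  rw [one_mul]
  exact abs_comp_mul_le_of_abs_le_exp_sq hb (mixStd_nonneg _ _) (hy.trans hv) _ _

lemma integrable_comp_inner_headVec_last (v : EuclideanSpace ℝ (Fin m)) (hv : ‖v‖ ≤ 1)
    (h0 : 0 ≤ θ) (h1 : θ ≤ 1) (hF : Measurable (Function.uncurry F))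
    (hb : ∀ a b, |F a b| ≤ C * exp ((a ^ 2 + b ^ 2) / 8)) :
    Integrable (fun x => F ⟪v, headVec x⟫ (x (Fin.last m))) (bgVec θ (m + 1)) := by
  refine (integrable_map_measure hF.aestronglyMeasurable
    (measurable_inner_headVec_last v).aemeasurable).1 ?_
  rw [map_inner_headVec_last, integrable_map_measure hF.aestronglyMeasurable
    (measurable_mixStd_mul_prod v).aemeasurable]
  exact integrable_mixture_of_abs_le_exp_sq v hv h0 h1 hF hb

lemma condExpect_eq_integral (h0 : 0 ≤ θ) (h1 : θ ≤ 1) (hF : Measurable (Function.uncurry F))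
    (hb : ∀ a b, |F a b| ≤ C * exp ((a ^ 2 + b ^ 2) / 8)) (hs0 : 0 ≤ s) (hs1 : s ≤ 1) :
    condExpect θ F s = ∫ z, ∫ y, F (s * z) y ∂(bg θ) ∂stdNormal := by
  have hprod := integrable_prod_of_abs_le_exp_sq hF hb hs0 hs1
  simp_rw [integral_bg h0 h1 (integrable_right_of_abs_le_exp_sq hF hb _)]
  rw [integral_add (hprod.integral_prod_left.const_mul _)
    ((integrable_left_of_abs_le_exp_sq hF hb hs0 hs1 0).const_mul _), integral_const_mul,
    integral_const_mul, condExpect, integral_prod _ hprod]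

lemma integral_comp_inner_headVec_last (v : EuclideanSpace ℝ (Fin m)) (hv : ‖v‖ ≤ 1) (h0 : 0 ≤ θ)
    (h1 : θ ≤ 1) (hF : Measurable (Function.uncurry F))
    (hb : ∀ a b, |F a b| ≤ C * exp ((a ^ 2 + b ^ 2) / 8)) :
    Integrable (fun b => condExpect θ F (mixStd v b)) (bernoulliVec θ (Fin m)) ∧
      ∫ x, F ⟪v, headVec x⟫ (x (Fin.last m)) ∂(bgVec θ (m + 1)) =
        ∫ b, condExpect θ F (mixStd v b) ∂(bernoulliVec θ (Fin m)) := by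
  have := isProbabilityMeasure_bernoulliLaw h0 h1
  have := isProbabilityMeasure_bg h0 h1
  have hInt := integrable_mixture_of_abs_le_exp_sq v hv h0 h1 hF hb
  have hcond : ∀ᵐ b ∂(bernoulliVec θ (Fin m)), ∫ z, ∫ y, F (mixStd v b * z) y ∂(bg θ) ∂stdNormal =
      condExpect θ F (mixStd v b) := by
    filter_upwards [ae_mixStd_le_norm v h0 h1] with b hb'
    exact (condExpect_eq_integral h0 h1 hF hb (mixStd_nonneg _ _) (hb'.trans hv)).symm
  refine ⟨hInt.integral_prod_left.integral_prod_left.congr hcond, ?_⟩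
  calc ∫ x, F ⟪v, headVec x⟫ (x (Fin.last m)) ∂(bgVec θ (m + 1))
      = ∫ y, Function.uncurry F y
          ∂((bgVec θ (m + 1)).map fun x => (⟪v, headVec x⟫, x (Fin.last m))) :=
        (integral_map (measurable_inner_headVec_last v).aemeasurable hF.aestronglyMeasurable).symm
    _ = ∫ b, condExpect θ F (mixStd v b) ∂(bernoulliVec θ (Fin m)) := by
        rw [map_inner_headVec_last, integral_map (measurable_mixStd_mul_prod v).aemeasurable
          hF.aestronglyMeasurable]
        simp only [Function.uncurry_apply_pair]
        rw [integral_prod _ hInt, integral_prod _ hInt.integral_prod_left]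
        exact integral_congr_ae hcond

-- A bound on `condExpect` affine in the conditional variance `s²` integrates explicitly, because
-- the conditional variance has mean `θ ‖v‖²`.
lemma le_integral_comp_inner_headVec_last (v : EuclideanSpace ℝ (Fin m)) (hv : ‖v‖ = 1)
    (h0 : 0 ≤ θ) (h1 : θ ≤ 1) (hF : Measurable (Function.uncurry F))
    (hb : ∀ a b, |F a b| ≤ C * exp ((a ^ 2 + b ^ 2) / 8)) {c₀ c₁ : ℝ}
    (hc : ∀ s, 0 ≤ s → s ≤ 1 → c₀ + c₁ * s ^ 2 ≤ condExpect θ F s) :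
    c₀ + c₁ * θ ≤ ∫ x, F ⟪v, headVec x⟫ (x (Fin.last m)) ∂(bgVec θ (m + 1)) := by
  have := isProbabilityMeasure_bernoulliLaw h0 h1
  have hsq : Integrable (fun b => c₁ * mixStd v b ^ 2) (bernoulliVec θ (Fin m)) :=
    (integrable_mixStd_sq v h0 h1).const_mul _
  obtain ⟨hInt, heq⟩ := integral_comp_inner_headVec_last v hv.le h0 h1 hF hb
  calc c₀ + c₁ * θ = ∫ b, c₀ + c₁ * mixStd v b ^ 2 ∂(bernoulliVec θ (Fin m)) := by
        rw [integral_add (integrable_const _) hsq, integral_const_mul, integral_mixStd_sq v h0 h1,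
          hv, integral_const, probReal_univ]
        ring
    _ ≤ ∫ b, condExpect θ F (mixStd v b) ∂(bernoulliVec θ (Fin m)) := by
        refine integral_mono_ae ((integrable_const _).add hsq) hInt ?_
        filter_upwards [ae_mixStd_le_norm v h0 h1] with b hb'
        exact hc _ (mixStd_nonneg _ _) (hb'.trans hv.le)
    _ = _ := heq.symm

end HeadLast

section Radial

/-- The derivative of `h_μ(r a + q b)` along the meridian of the sphere through `(r, q)`, per unit
of `r`. -/
def radialGrad (μ r q a b : ℝ) : ℝ := tanh ((r * a + q * b) / μ) * (a - b * (r / q))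

/-- The second derivative of `h_μ(r a + q b)` along the meridian of the sphere through `(r, q)`,
with respect to `r`. -/
def radialHess (μ r q a b : ℝ) : ℝ :=
  μ⁻¹ * ((1 - tanh ((r * a + q * b) / μ) ^ 2) * (a - b * (r / q)) ^ 2)
    - tanh ((r * a + q * b) / μ) * (b * (1 / q + r ^ 2 / q ^ 3))

lemma measurable_radialGrad (μ r q : ℝ) : Measurable (Function.uncurry (radialGrad μ r q)) := by
  have := continuous_tanh
  unfold radialGrad Function.uncurry
  exact Continuous.measurable (by fun_prop)

lemma measurable_radialHess (μ r q : ℝ) : Measurable (Function.uncurry (radialHess μ r q)) := by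
  have := continuous_tanh
  unfold radialHess Function.uncurry
  exact Continuous.measurable (by fun_prop)

lemma one_add_sq_le_exp (a b : ℝ) : 1 + a ^ 2 + b ^ 2 ≤ 8 * exp ((a ^ 2 + b ^ 2) / 8) := by
  linarith [add_one_le_exp ((a ^ 2 + b ^ 2) / 8)]

lemma abs_le_mul_exp_of_abs_le_mul {F : ℝ → ℝ → ℝ} {C : ℝ}
    (h : ∀ a b, |F a b| ≤ C * (1 + a ^ 2 + b ^ 2)) (a b : ℝ) :
    |F a b| ≤ (C * 8) * exp ((a ^ 2 + b ^ 2) / 8) := by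
  have hC : 0 ≤ C := by simpa using (abs_nonneg _).trans (h 0 0)
  rw [mul_assoc]
  exact (h a b).trans (mul_le_mul_of_nonneg_left (one_add_sq_le_exp a b) hC)

lemma abs_le_one_add_sq_add_sq (a b : ℝ) : |a| ≤ 1 + a ^ 2 + b ^ 2 := by
  nlinarith [sq_nonneg (|a| - 1), sq_abs a, sq_nonneg b, abs_nonneg a]

lemma abs_tanh_mul_le (t y : ℝ) : |tanh t * y| ≤ |y| := by
  rw [abs_mul]
  exact mul_le_of_le_one_left (abs_nonneg _) (abs_tanh_le_one _)

lemma abs_sub_mul_le (a b k : ℝ) : |a - b * k| ≤ (1 + |k|) * (1 + a ^ 2 + b ^ 2) := by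
  have ha := abs_le_one_add_sq_add_sq a b
  have hb : |b| ≤ 1 + a ^ 2 + b ^ 2 := (abs_le_one_add_sq_add_sq b a).trans_eq (by ring)
  calc |a - b * k| ≤ |a| + |b| * |k| := by rw [← abs_mul]; exact abs_sub _ _
    _ ≤ (1 + a ^ 2 + b ^ 2) + (1 + a ^ 2 + b ^ 2) * |k| := by gcongr
    _ = (1 + |k|) * (1 + a ^ 2 + b ^ 2) := by ring

lemma sub_mul_sq_le (a b k : ℝ) : (a - b * k) ^ 2 ≤ (2 + 2 * k ^ 2) * (1 + a ^ 2 + b ^ 2) := by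
  nlinarith [sq_nonneg (a + b * k), sq_nonneg k, sq_nonneg (a * k), sq_nonneg b]

lemma abs_radialGrad_le (μ r q a b : ℝ) :
    |radialGrad μ r q a b| ≤ (1 + |r / q|) * (1 + a ^ 2 + b ^ 2) :=
  (abs_tanh_mul_le _ _).trans (abs_sub_mul_le _ _ _)

lemma abs_sech_sq_sub_tanh_le {μ : ℝ} (hμ : 0 < μ) (t y b k : ℝ) :
    |μ⁻¹ * ((1 - tanh t ^ 2) * y ^ 2) - tanh t * (b * k)| ≤ μ⁻¹ * y ^ 2 + |b| * |k| := by
  have hsech : |μ⁻¹ * ((1 - tanh t ^ 2) * y ^ 2)| ≤ μ⁻¹ * y ^ 2 := by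
    rw [abs_of_nonneg (mul_nonneg (by positivity)
      (mul_nonneg (one_sub_tanh_sq_nonneg t) (sq_nonneg y)))]
    gcongr
    exact mul_le_of_le_one_left (sq_nonneg _) (one_sub_tanh_sq_le_one t)
  have htanh := abs_tanh_mul_le t (b * k)
  rw [abs_mul b k] at htanh
  exact (abs_sub _ _).trans (add_le_add hsech htanh)

lemma abs_radialHess_le {μ : ℝ} (hμ : 0 < μ) (r q a b : ℝ) :
    |radialHess μ r q a b| ≤
      (μ⁻¹ * (2 + 2 * (r / q) ^ 2) + |1 / q + r ^ 2 / q ^ 3|) * (1 + a ^ 2 + b ^ 2) := by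
  have hb : |b| ≤ 1 + a ^ 2 + b ^ 2 := (abs_le_one_add_sq_add_sq b a).trans_eq (by ring)
  calc |radialHess μ r q a b|
      ≤ μ⁻¹ * (a - b * (r / q)) ^ 2 + |b| * |1 / q + r ^ 2 / q ^ 3| :=
        abs_sech_sq_sub_tanh_le hμ _ _ _ _
    _ ≤ μ⁻¹ * ((2 + 2 * (r / q) ^ 2) * (1 + a ^ 2 + b ^ 2)) +
          (1 + a ^ 2 + b ^ 2) * |1 / q + r ^ 2 / q ^ 3| := by
        gcongr
        exact sub_mul_sq_le _ _ _
    _ = (μ⁻¹ * (2 + 2 * (r / q) ^ 2) + |1 / q + r ^ 2 / q ^ 3|) * (1 + a ^ 2 + b ^ 2) := by ring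

lemma integrable_id_stdNormal : Integrable (fun z => z) stdNormal :=
  integrable_stdNormal_of_abs_le measurable_id 5 abs_le_exp_sq

lemma integrable_pow_mul_one_sub_tanh_sq_stdNormal (k : ℕ) (c : ℝ) :
    Integrable (fun z => z ^ k * (1 - tanh (c * z) ^ 2)) stdNormal :=
  (integrable_pow_gaussianReal k).mono
    ((measurable_id.pow_const k).mul
      (measurable_const.sub ((measurable_tanh_const_mul c).pow_const 2))).aestronglyMeasurable
    (.of_forall fun z => by
      rw [norm_mul, norm_of_nonneg (one_sub_tanh_sq_nonneg _)]
      exact mul_le_of_le_one_right (norm_nonneg _) (one_sub_tanh_sq_le_one _))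

variable {μ r q s σ : ℝ}

lemma measurable_comp_mul_fst {F : ℝ → ℝ → ℝ} (hF : Measurable (Function.uncurry F)) (s : ℝ) :
    Measurable fun z : ℝ × ℝ => F (s * z.1) z.2 :=
  hF.comp ((measurable_fst.const_mul s).prodMk measurable_snd)

-- For `a = s z₁` and `b = z₂` the variable `r a + q b` has standard deviation `σ`; rotating
-- `(z₁, z₂)` so that it becomes `σ x` decouples it from the remaining coordinate `y`.
lemma rotation_sq_add_sq (hσ : 0 < σ) (hσ2 : σ ^ 2 = s ^ 2 * r ^ 2 + q ^ 2) :
    (r * s / σ) ^ 2 + (q / σ) ^ 2 = 1 := by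
  rw [div_pow, div_pow, ← add_div, div_eq_one_iff_eq (by positivity), hσ2]
  ring

lemma rotation_inner (hσ : 0 < σ) (hσ2 : σ ^ 2 = s ^ 2 * r ^ 2 + q ^ 2) (x y : ℝ) :
    r * (s * (r * s / σ * x - q / σ * y)) + q * (q / σ * x + r * s / σ * y) = σ * x := by
  field_simp
  rw [hσ2]
  ring

lemma rotation_slope (hq : 0 < q) (hrq : r ^ 2 + q ^ 2 = 1) (hσ : 0 < σ) (x y : ℝ) :
    s * (r * s / σ * x - q / σ * y) - (q / σ * x + r * s / σ * y) * (r / q) =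
      -(r * (1 - s ^ 2) / σ * x + s / (q * σ) * y) := by
  field_simp
  linear_combination (-(s * y)) * hrq

lemma radialGrad_rotation (hq : 0 < q) (hrq : r ^ 2 + q ^ 2 = 1) (hσ : 0 < σ)
    (hσ2 : σ ^ 2 = s ^ 2 * r ^ 2 + q ^ 2) (x y : ℝ) :
    radialGrad μ r q (s * (r * s / σ * x - q / σ * y)) (q / σ * x + r * s / σ * y) =
      -(tanh (σ / μ * x) * (r * (1 - s ^ 2) / σ * x + s / (q * σ) * y)) := by
  rw [radialGrad, rotation_inner hσ hσ2, rotation_slope hq hrq hσ, mul_neg,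
    mul_div_right_comm σ]

lemma radialHess_rotation (hq : 0 < q) (hrq : r ^ 2 + q ^ 2 = 1) (hσ : 0 < σ)
    (hσ2 : σ ^ 2 = s ^ 2 * r ^ 2 + q ^ 2) (x y : ℝ) :
    radialHess μ r q (s * (r * s / σ * x - q / σ * y)) (q / σ * x + r * s / σ * y) =
      μ⁻¹ * ((1 - tanh (σ / μ * x) ^ 2) * (r * (1 - s ^ 2) / σ * x + s / (q * σ) * y) ^ 2) -
        tanh (σ / μ * x) * (1 / (q ^ 2 * σ) * x + r * s / (q ^ 3 * σ) * y) := by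
  have hcurv : 1 / q + r ^ 2 / q ^ 3 = 1 / q ^ 3 := by
    field_simp
    linarith
  have hlast : (q / σ * x + r * s / σ * y) * (1 / q ^ 3) =
      1 / (q ^ 2 * σ) * x + r * s / (q ^ 3 * σ) * y := by
    field_simp
  rw [radialHess, rotation_inner hσ hσ2, rotation_slope hq hrq hσ, hcurv, hlast, neg_sq,
    mul_div_right_comm σ]

lemma integral_sech_sq_mul_sq (c α β : ℝ) :
    Integrable (fun z : ℝ × ℝ => (1 - tanh (c * z.1) ^ 2) * (α * z.1 + β * z.2) ^ 2)
      (stdNormal.prod stdNormal) ∧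
    ∫ z, (1 - tanh (c * z.1) ^ 2) * (α * z.1 + β * z.2) ^ 2 ∂(stdNormal.prod stdNormal) =
      α ^ 2 * (∫ z, z ^ 2 * (1 - tanh (c * z) ^ 2) ∂stdNormal) +
        β ^ 2 * ∫ z, (1 - tanh (c * z) ^ 2) ∂stdNormal := by
  have hInt₁ := ((integrable_pow_mul_one_sub_tanh_sq_stdNormal 2 c).mul_prod
    (integrable_const (1 : ℝ) (μ := stdNormal))).const_mul (α ^ 2)
  have hInt₂ := ((integrable_pow_mul_one_sub_tanh_sq_stdNormal 1 c).mul_prod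
    integrable_id_stdNormal).const_mul (2 * α * β)
  have hInt₃ := ((integrable_one_sub_tanh_sq_stdNormal c).mul_prod
    (integrable_pow_gaussianReal (a := 0) (v := 1) 2)).const_mul (β ^ 2)
  have hexpand (z : ℝ × ℝ) : (1 - tanh (c * z.1) ^ 2) * (α * z.1 + β * z.2) ^ 2 =
      α ^ 2 * ((z.1 ^ 2 * (1 - tanh (c * z.1) ^ 2)) * 1) +
        2 * α * β * ((z.1 ^ 1 * (1 - tanh (c * z.1) ^ 2)) * z.2) +
        β ^ 2 * ((1 - tanh (c * z.1) ^ 2) * z.2 ^ 2) := by ring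
  have hInt₁₂ := hInt₁.fun_add hInt₂
  simp_rw [hexpand]
  refine ⟨hInt₁₂.fun_add hInt₃, ?_⟩
  rw [integral_add hInt₁₂ hInt₃, integral_add hInt₁ hInt₂]
  simp_rw [integral_const_mul]
  rw [integral_prod_mul (fun z => z ^ 2 * (1 - tanh (c * z) ^ 2)) (fun _ => (1 : ℝ)),
    integral_prod_mul (fun z => z ^ 1 * (1 - tanh (c * z) ^ 2)) (fun z => z),
    integral_prod_mul (fun z => 1 - tanh (c * z) ^ 2) (fun z => z ^ 2),
    integral_id_gaussianReal, integral_sq_stdNormal]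
  simp only [integral_const, probReal_univ, smul_eq_mul, mul_one, mul_zero, add_zero]

lemma integral_tanh_mul_linear (c α β : ℝ) :
    Integrable (fun z : ℝ × ℝ => tanh (c * z.1) * (α * z.1 + β * z.2))
      (stdNormal.prod stdNormal) ∧
    ∫ z, tanh (c * z.1) * (α * z.1 + β * z.2) ∂(stdNormal.prod stdNormal) =
      α * ∫ z, z * tanh (c * z) ∂stdNormal := by
  have hInt₁ := ((integrable_mul_tanh_stdNormal c).mul_prod
    (integrable_const (1 : ℝ) (μ := stdNormal))).const_mul α
  have hInt₂ := ((integrable_tanh_stdNormal c).mul_prod integrable_id_stdNormal).const_mul β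
  have hexpand (z : ℝ × ℝ) : tanh (c * z.1) * (α * z.1 + β * z.2) =
      α * ((z.1 * tanh (c * z.1)) * 1) + β * (tanh (c * z.1) * z.2) := by ring
  simp_rw [hexpand]
  refine ⟨hInt₁.fun_add hInt₂, ?_⟩
  rw [integral_add hInt₁ hInt₂, integral_const_mul, integral_const_mul,
    integral_prod_mul (fun z => z * tanh (c * z)) (fun _ => (1 : ℝ)),
    integral_prod_mul (fun z => tanh (c * z)) (fun z => z), integral_id_gaussianReal]
  simp

lemma integral_radialGrad (hq : 0 < q) (hrq : r ^ 2 + q ^ 2 = 1) (hσ : 0 < σ)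
    (hσ2 : σ ^ 2 = s ^ 2 * r ^ 2 + q ^ 2) :
    ∫ z, radialGrad μ r q (s * z.1) z.2 ∂(stdNormal.prod stdNormal) =
      -(r * (1 - s ^ 2) / σ * ∫ z, z * tanh (σ / μ * z) ∂stdNormal) := by
  rw [← integral_comp_rotation (rotation_sq_add_sq hσ hσ2)
    (measurable_comp_mul_fst (measurable_radialGrad μ r q) s)]
  simp_rw [radialGrad_rotation hq hrq hσ hσ2]
  rw [integral_neg, (integral_tanh_mul_linear _ _ _).2]

lemma integral_radialHess (hμ : μ ≠ 0) (hq : 0 < q) (hrq : r ^ 2 + q ^ 2 = 1) (hσ : 0 < σ)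
    (hσ2 : σ ^ 2 = s ^ 2 * r ^ 2 + q ^ 2) :
    ∫ z, radialHess μ r q (s * z.1) z.2 ∂(stdNormal.prod stdNormal) =
      μ⁻¹ * (r * (1 - s ^ 2) / σ) ^ 2 * (∫ z, z ^ 2 * (1 - tanh (σ / μ * z) ^ 2) ∂stdNormal)
        - (1 - s ^ 2) / σ ^ 3 * ∫ z, z * tanh (σ / μ * z) ∂stdNormal := by
  obtain ⟨hInt₁, heq₁⟩ := integral_sech_sq_mul_sq (σ / μ) (r * (1 - s ^ 2) / σ) (s / (q * σ))
  obtain ⟨hInt₂, heq₂⟩ := integral_tanh_mul_linear (σ / μ) (1 / (q ^ 2 * σ)) (r * s / (q ^ 3 * σ))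
  rw [← integral_comp_rotation (rotation_sq_add_sq hσ hσ2)
    (measurable_comp_mul_fst (measurable_radialHess μ r q) s)]
  simp_rw [radialHess_rotation hq hrq hσ hσ2]
  rw [integral_sub (hInt₁.const_mul _) hInt₂, integral_const_mul, heq₁, heq₂,
    integral_mul_tanh_stdNormal]
  have hcoeff : μ⁻¹ * (s / (q * σ)) ^ 2 - 1 / (q ^ 2 * σ) * (σ / μ) +
      (1 - s ^ 2) / σ ^ 3 * (σ / μ) = 0 := by
    field_simp
    linear_combination (-1 : ℝ) * hσ2 - s ^ 2 * hrq
  linear_combination (∫ z, (1 - tanh (σ / μ * z) ^ 2) ∂stdNormal) * hcoeff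

lemma neg_le_integral_radialGrad (hq : 0 < q) (hrq : r ^ 2 + q ^ 2 = 1)
    (hr0 : 0 ≤ r) (hr : r ≤ 1 / 44) (hs : s ^ 2 ≤ 1) :
    -(1 / 43) ≤ ∫ z, radialGrad μ r q (s * z.1) z.2 ∂(stdNormal.prod stdNormal) := by
  have hσ2 : √(s ^ 2 * r ^ 2 + q ^ 2) ^ 2 = s ^ 2 * r ^ 2 + q ^ 2 := sq_sqrt (by positivity)
  have hσ : 0 < √(s ^ 2 * r ^ 2 + q ^ 2) := sqrt_pos.2 (by positivity)
  set σ := √(s ^ 2 * r ^ 2 + q ^ 2)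
  have hσ_ge : 99 / 100 ≤ σ := by nlinarith [mul_nonneg (sq_nonneg s) (sq_nonneg r)]
  have hslope : r * (1 - s ^ 2) / σ ≤ 1 / 43 := by
    rw [div_le_iff₀ hσ]
    nlinarith [mul_nonneg hr0 (sq_nonneg s)]
  have hslope0 : 0 ≤ r * (1 - s ^ 2) / σ := div_nonneg (mul_nonneg hr0 (by linarith)) hσ.le
  rw [integral_radialGrad hq hrq hσ hσ2, neg_le_neg_iff]
  calc r * (1 - s ^ 2) / σ * ∫ z, z * tanh (σ / μ * z) ∂stdNormal
      ≤ r * (1 - s ^ 2) / σ * 1 :=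
        mul_le_mul_of_nonneg_left (integral_mul_tanh_le_one _) hslope0
    _ ≤ 1 / 43 := by rwa [mul_one]

lemma mul_tanh_le_radialGrad (hμ : 0 < μ) (hr : 17 / 100 * μ ≤ r) (hs0 : 0 ≤ s) (hs1 : s ≤ 1)
    (q z : ℝ) : 17 / 100 * s ^ 2 * (z * tanh z) ≤ radialGrad μ r q (s * z) 0 := by
  have hpos {z : ℝ} (hz : 0 ≤ z) :
      17 / 100 * s ^ 2 * (z * tanh z) ≤ tanh (r * (s * z) / μ) * (s * z) := by
    calc 17 / 100 * s ^ 2 * (z * tanh z) = (17 / 100 * s * tanh z) * (s * z) := by ring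
      _ ≤ tanh (17 / 100 * s * z) * (s * z) := by
          gcongr
          exact mul_tanh_le_tanh_mul (by positivity) (by linarith) hz
      _ ≤ tanh (r * (s * z) / μ) * (s * z) := by
          gcongr
          refine monotone_tanh ((le_div_iff₀ hμ).2 ?_)
          nlinarith [mul_nonneg hs0 hz]
  rw [radialGrad, mul_zero, add_zero, zero_mul, sub_zero]
  rcases le_total 0 z with hz | hz
  · exact hpos hz
  · simpa only [mul_neg, neg_mul, neg_div, tanh_neg, neg_neg] using hpos (neg_nonneg.2 hz)

lemma le_integral_radialGrad_zero (hμ : 0 < μ) (hr : 17 / 100 * μ ≤ r) (hs0 : 0 ≤ s)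
    (hs1 : s ≤ 1) (q : ℝ) : 17 / 200 * s ^ 2 ≤ ∫ z, radialGrad μ r q (s * z) 0 ∂stdNormal := by
  have hInt : Integrable (fun z => radialGrad μ r q (s * z) 0) stdNormal :=
    integrable_left_of_abs_le_exp_sq (measurable_radialGrad μ r q)
      (abs_le_mul_exp_of_abs_le_mul (abs_radialGrad_le μ r q)) hs0 hs1 0
  calc 17 / 200 * s ^ 2 = 17 / 100 * s ^ 2 * (1 / 2) := by ring
    _ ≤ 17 / 100 * s ^ 2 * ∫ z, z * tanh (1 * z) ∂stdNormal := by
        gcongr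
        exact half_le_integral_mul_tanh le_rfl
    _ = ∫ z, 17 / 100 * s ^ 2 * (z * tanh (1 * z)) ∂stdNormal := (integral_const_mul _ _).symm
    _ ≤ ∫ z, radialGrad μ r q (s * z) 0 ∂stdNormal := by
        refine integral_mono ((integrable_mul_tanh_stdNormal 1).const_mul _) hInt fun z => ?_
        simpa only [one_mul] using mul_tanh_le_radialGrad hμ hr hs0 hs1 q z

lemma condExpect_radialGrad_ge {θ : ℝ} (h0 : 0 ≤ θ) (h1 : θ ≤ 1 / 2) (hμ : 0 < μ) (hq : 0 < q)
    (hrq : r ^ 2 + q ^ 2 = 1) (hr1 : 17 / 100 * μ ≤ r) (hr2 : r ≤ 1 / 44) (hs0 : 0 ≤ s)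
    (hs1 : s ≤ 1) :
    -(θ / 43) + 17 / 400 * s ^ 2 ≤ condExpect θ (radialGrad μ r q) s := by
  have hspike := neg_le_integral_radialGrad (μ := μ) hq hrq (by linarith) hr2 (pow_le_one₀ hs0 hs1)
  have hzero := le_integral_radialGrad_zero hμ hr1 hs0 hs1 q
  calc -(θ / 43) + 17 / 400 * s ^ 2
      ≤ θ * -(1 / 43) + (1 - θ) * (17 / 200 * s ^ 2) := by nlinarith [sq_nonneg s]
    _ ≤ condExpect θ (radialGrad μ r q) s := by
        unfold condExpect
        gcongr
        linarith

lemma integral_sq_mul_one_sub_tanh_sq_le {c : ℝ} (hc : c ≠ 0) :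
    ∫ z, z ^ 2 * (1 - tanh (c * z) ^ 2) ∂stdNormal ≤ (c ^ 2)⁻¹ := by
  have hbound (z : ℝ) : z ^ 2 * (1 - tanh (c * z) ^ 2) ≤ (c ^ 2)⁻¹ := by
    calc z ^ 2 * (1 - tanh (c * z) ^ 2)
        = (c ^ 2)⁻¹ * ((c * z) ^ 2 * (1 - tanh (c * z) ^ 2)) := by field_simp
      _ ≤ (c ^ 2)⁻¹ * 1 := by gcongr; exact sq_mul_one_sub_tanh_sq_le_one _
      _ = (c ^ 2)⁻¹ := mul_one _
  simpa using integral_mono (integrable_pow_mul_one_sub_tanh_sq_stdNormal 2 c)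
    (integrable_const _) hbound

lemma integral_radialHess_le (hμ : 0 < μ) (hq : 0 < q) (hrq : r ^ 2 + q ^ 2 = 1)
    (hμq : 4 * μ ≤ q) (hs : s ^ 2 ≤ 1) :
    ∫ z, radialHess μ r q (s * z.1) z.2 ∂(stdNormal.prod stdNormal) ≤ -(1 / 4) * (1 - s ^ 2) := by
  have hσ2 : √(s ^ 2 * r ^ 2 + q ^ 2) ^ 2 = s ^ 2 * r ^ 2 + q ^ 2 := sq_sqrt (by positivity)
  have hσ : 0 < √(s ^ 2 * r ^ 2 + q ^ 2) := sqrt_pos.2 (by positivity)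
  set σ := √(s ^ 2 * r ^ 2 + q ^ 2)
  have hqσ : q ≤ σ := by
    refine le_of_sq_le_sq ?_ hσ.le
    nlinarith [mul_nonneg (sq_nonneg s) (sq_nonneg r)]
  have hσ1 : σ ≤ 1 := by nlinarith [sq_nonneg r]
  rw [integral_radialHess hμ.ne' hq hrq hσ hσ2]
  have hI := half_le_integral_mul_tanh (c := σ / μ) ((one_le_div hμ).2 (by linarith))
  have hJ := integral_sq_mul_one_sub_tanh_sq_le (c := σ / μ) (by positivity)
  have hβ0 : 0 ≤ 1 - s ^ 2 := by linarith
  have hβ1 : 1 - s ^ 2 ≤ 1 := by nlinarith [sq_nonneg s]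
  generalize 1 - s ^ 2 = β at *
  have hr1 : r ^ 2 ≤ 1 := by nlinarith [sq_nonneg q]
  have hμσ : 4 * μ / σ ≤ 1 := (div_le_one hσ).2 (by linarith)
  have hβσ : β ≤ β / σ ^ 3 :=
    (le_div_iff₀ (by positivity)).2 (mul_le_of_le_one_right hβ0 (pow_le_one₀ hσ.le hσ1))
  calc μ⁻¹ * (r * β / σ) ^ 2 * (∫ z, z ^ 2 * (1 - tanh (σ / μ * z) ^ 2) ∂stdNormal)
        - β / σ ^ 3 * ∫ z, z * tanh (σ / μ * z) ∂stdNormal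
      ≤ μ⁻¹ * (r * β / σ) ^ 2 * ((σ / μ) ^ 2)⁻¹ - β / σ ^ 3 * (1 / 2) := by gcongr
    _ = β / σ ^ 3 * (r ^ 2 * β * (4 * μ / σ) / 4 - 1 / 2) := by field_simp
    _ ≤ β / σ ^ 3 * (1 * 1 * 1 / 4 - 1 / 2) := by gcongr
    _ ≤ -(1 / 4) * β := by linarith

lemma integral_radialHess_zero_le (hμ : 0 < μ) (hr : 1 ≤ 2000 * r ^ 2) (hs0 : 0 ≤ s) (hs1 : s ≤ 1)
    (q : ℝ) : ∫ z, radialHess μ r q (s * z) 0 ∂stdNormal ≤ 2000 * μ := by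
  have hr0 : r ≠ 0 := by rintro rfl; norm_num at hr
  have hInt : Integrable (fun z => radialHess μ r q (s * z) 0) stdNormal :=
    integrable_left_of_abs_le_exp_sq (measurable_radialHess μ r q)
      (abs_le_mul_exp_of_abs_le_mul (abs_radialHess_le hμ r q)) hs0 hs1 0
  have hbound (z : ℝ) : radialHess μ r q (s * z) 0 ≤ 2000 * μ := by
    rw [radialHess, mul_zero, add_zero, zero_mul, zero_mul, mul_zero, sub_zero, sub_zero]
    calc μ⁻¹ * ((1 - tanh (r * (s * z) / μ) ^ 2) * (s * z) ^ 2)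
        = μ / r ^ 2 * ((r * (s * z) / μ) ^ 2 * (1 - tanh (r * (s * z) / μ) ^ 2)) := by field_simp
      _ ≤ μ / r ^ 2 * 1 := by gcongr; exact sq_mul_one_sub_tanh_sq_le_one _
      _ ≤ 2000 * μ := by
          rw [mul_one, div_le_iff₀ (by positivity)]
          nlinarith
  simpa using integral_mono hInt (integrable_const (2000 * μ)) hbound

lemma condExpect_radialHess_le {θ : ℝ} (h0 : 0 ≤ θ) (h1 : θ ≤ 1) (hμ : 0 < μ) (hq : 0 < q)
    (hrq : r ^ 2 + q ^ 2 = 1) (hr : 1 ≤ 2000 * r ^ 2) (hμq : 4 * μ ≤ q) (hs0 : 0 ≤ s)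
    (hs1 : s ≤ 1) :
    condExpect θ (radialHess μ r q) s ≤ 2000 * μ - θ / 4 * (1 - s ^ 2) := by
  have hspike := integral_radialHess_le hμ hq hrq hμq (pow_le_one₀ hs0 hs1)
  have hzero := integral_radialHess_zero_le hμ hr hs0 hs1 q
  calc condExpect θ (radialHess μ r q) s
      ≤ θ * (-(1 / 4) * (1 - s ^ 2)) + (1 - θ) * (2000 * μ) := by
        unfold condExpect
        gcongr
    _ ≤ 2000 * μ - θ / 4 * (1 - s ^ 2) := by nlinarith [mul_nonneg h0 hμ.le]

end Radial

section Expectations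

variable {θ μ : ℝ} {m : ℕ}

lemma condExpect_neg (F : ℝ → ℝ → ℝ) (s : ℝ) :
    condExpect θ (fun a b => -F a b) s = -condExpect θ F s := by
  unfold condExpect
  rw [integral_neg, integral_neg]
  ring

lemma integral_comp_inner_headVec_last_le {F : ℝ → ℝ → ℝ} {C : ℝ} (v : EuclideanSpace ℝ (Fin m))
    (hv : ‖v‖ = 1) (h0 : 0 ≤ θ) (h1 : θ ≤ 1) (hF : Measurable (Function.uncurry F))
    (hb : ∀ a b, |F a b| ≤ C * exp ((a ^ 2 + b ^ 2) / 8)) {c₀ c₁ : ℝ}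
    (hc : ∀ s, 0 ≤ s → s ≤ 1 → condExpect θ F s ≤ c₀ + c₁ * s ^ 2) :
    ∫ x, F ⟪v, headVec x⟫ (x (Fin.last m)) ∂(bgVec θ (m + 1)) ≤ c₀ + c₁ * θ := by
  have hneg := le_integral_comp_inner_headVec_last (F := fun a b => -F a b) (c₀ := -c₀)
    (c₁ := -c₁) v hv h0 h1 hF.neg (fun a b => by rw [abs_neg]; exact hb a b)
    (fun s hs0 hs1 => by rw [condExpect_neg]; linarith [hc s hs0 hs1])
  rw [integral_neg] at hneg
  linarith

lemma lastCoord_smul {r : ℝ} {v : EuclideanSpace ℝ (Fin m)} (hv : ‖v‖ = 1) :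
    lastCoord (r • v) = √(1 - r ^ 2) := by
  rw [lastCoord, norm_smul, hv, mul_one, norm_eq_abs, sq_abs]

lemma chartDeriv_smul_self (r : ℝ) {v : EuclideanSpace ℝ (Fin m)} (hv : ‖v‖ = 1)
    (a : EuclideanSpace ℝ (Fin m)) (b : ℝ) :
    chartDeriv μ a b (r • v) v = radialGrad μ r √(1 - r ^ 2) ⟪v, a⟫ b := by
  simp only [chartDeriv, radialGrad, chartInner, lastCoord_smul hv, real_inner_smul_left,
    real_inner_self_eq_norm_sq, hv, one_pow, mul_one]

lemma chartHess_smul_self (r : ℝ) {v : EuclideanSpace ℝ (Fin m)} (hv : ‖v‖ = 1)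
    (a : EuclideanSpace ℝ (Fin m)) (b : ℝ) :
    chartHess μ a b (r • v) v = radialHess μ r √(1 - r ^ 2) ⟪v, a⟫ b := by
  simp only [chartHess, radialHess, chartInner, lastCoord_smul hv, real_inner_smul_left,
    real_inner_self_eq_norm_sq, hv, one_pow, mul_one]

lemma le_integral_chartDeriv_radial (h0 : 0 ≤ θ) (h1 : θ ≤ 1 / 2) (hμ : 0 < μ)
    {v : EuclideanSpace ℝ (Fin m)} (hv : ‖v‖ = 1) {r : ℝ} (hr1 : 17 / 100 * μ ≤ r)
    (hr2 : r ≤ 1 / 44) :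
    θ / 60 ≤ ∫ x, chartDeriv μ (headVec x) (x (Fin.last m)) (r • v) v ∂(bgVec θ (m + 1)) := by
  have hq : 0 < 1 - r ^ 2 := by nlinarith
  simp_rw [chartDeriv_smul_self r hv]
  have hInt := le_integral_comp_inner_headVec_last (c₀ := -(θ / 43)) (c₁ := 17 / 400) v hv h0
    (by linarith) (measurable_radialGrad μ r √(1 - r ^ 2))
    (abs_le_mul_exp_of_abs_le_mul (abs_radialGrad_le μ r _)) fun s hs0 hs1 =>
      condExpect_radialGrad_ge h0 h1 hμ (sqrt_pos.2 hq) (by rw [sq_sqrt hq.le]; ring) hr1 hr2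
        hs0 hs1
  linarith

lemma le_integral_neg_chartHess_radial (h0 : 0 ≤ θ) (h1 : θ ≤ 1 / 2) (hμ : 0 < μ)
    (hμθ : 32000 * μ ≤ θ) {v : EuclideanSpace ℝ (Fin m)} (hv : ‖v‖ = 1) {r : ℝ}
    (hr : 1 ≤ 2000 * r ^ 2) (hq : 0 < 1 - r ^ 2) (hμq : 4 * μ ≤ √(1 - r ^ 2)) :
    θ / 16 ≤ ∫ x, -chartHess μ (headVec x) (x (Fin.last m)) (r • v) v ∂(bgVec θ (m + 1)) := by
  simp_rw [chartHess_smul_self r hv]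
  have hInt := integral_comp_inner_headVec_last_le (c₀ := 2000 * μ - θ / 4) (c₁ := θ / 4) v hv h0
    (by linarith) (measurable_radialHess μ r √(1 - r ^ 2))
    (abs_le_mul_exp_of_abs_le_mul (abs_radialHess_le hμ r _)) fun s hs0 hs1 =>
      (condExpect_radialHess_le h0 (by linarith) hμ (sqrt_pos.2 hq) (by rw [sq_sqrt hq.le]; ring)
        hr hμq hs0 hs1).trans_eq (by ring)
  rw [integral_neg]
  nlinarith

/-- The quadratic function of a sample that dominates the first and second derivatives of the
objective in direction `v`. -/
def envelope (v : EuclideanSpace ℝ (Fin m)) (x : Fin (m + 1) → ℝ) : ℝ :=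
  1 + ⟪v, headVec x⟫ ^ 2 + x (Fin.last m) ^ 2

lemma one_le_envelope (v : EuclideanSpace ℝ (Fin m)) (x : Fin (m + 1) → ℝ) : 1 ≤ envelope v x := by
  unfold envelope
  linarith [sq_nonneg ⟪v, headVec x⟫, sq_nonneg (x (Fin.last m))]

/-- The exponential moment `E exp(z²/8)` of a standard Gaussian `z`. -/
def gaussExpMoment : ℝ := ∫ z, exp (z ^ 2 / 8) ∂stdNormal

lemma one_le_gaussExpMoment : 1 ≤ gaussExpMoment := by
  simpa [gaussExpMoment] using
    integral_mono (integrable_const (1 : ℝ)) integrable_exp_sq_stdNormal one_le_exp_sq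

lemma condExpect_le_of_abs_le_exp_sq {F : ℝ → ℝ → ℝ} {C s : ℝ} (h0 : 0 ≤ θ) (h1 : θ ≤ 1)
    (hF : Measurable (Function.uncurry F)) (hb : ∀ a b, |F a b| ≤ C * exp ((a ^ 2 + b ^ 2) / 8))
    (hs0 : 0 ≤ s) (hs1 : s ≤ 1) : condExpect θ F s ≤ C * gaussExpMoment ^ 2 := by
  have hC : 0 ≤ C := by simpa using (abs_nonneg _).trans (hb 0 0)
  have hspike : ∫ z, F (s * z.1) z.2 ∂(stdNormal.prod stdNormal) ≤ C * gaussExpMoment ^ 2 := by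
    refine (integral_mono (integrable_prod_of_abs_le_exp_sq hF hb hs0 hs1)
      ((integrable_exp_sq_stdNormal.mul_prod integrable_exp_sq_stdNormal).const_mul C) fun z =>
        (le_abs_self _).trans (abs_comp_mul_le_of_abs_le_exp_sq hb hs0 hs1 z.1 z.2)).trans_eq ?_
    rw [integral_const_mul, integral_prod_mul (fun z => exp (z ^ 2 / 8))
      (fun z => exp (z ^ 2 / 8)), gaussExpMoment, sq]
  have hzero : ∫ z, F (s * z) 0 ∂stdNormal ≤ C * gaussExpMoment ^ 2 := by
    calc ∫ z, F (s * z) 0 ∂stdNormal ≤ ∫ z, C * exp (z ^ 2 / 8) ∂stdNormal :=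
          integral_mono (integrable_left_of_abs_le_exp_sq hF hb hs0 hs1 0)
            (integrable_exp_sq_stdNormal.const_mul C) fun z => by
              simpa using (le_abs_self _).trans (abs_comp_mul_le_of_abs_le_exp_sq hb hs0 hs1 z 0)
      _ = C * gaussExpMoment := integral_const_mul _ _
      _ ≤ C * gaussExpMoment ^ 2 := by
          gcongr
          exact le_self_pow₀ one_le_gaussExpMoment two_ne_zero
  calc condExpect θ F s
      ≤ θ * (C * gaussExpMoment ^ 2) + (1 - θ) * (C * gaussExpMoment ^ 2) := by
        unfold condExpect
        gcongr
    _ = C * gaussExpMoment ^ 2 := by ring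

/-- A bound for the exponential moment of the envelope. -/
def envConst : ℝ := exp (1 / 8) * gaussExpMoment ^ 2

lemma one_le_envConst : 1 ≤ envConst :=
  one_le_mul_of_one_le_of_one_le (one_le_exp (by norm_num)) (one_le_pow₀ one_le_gaussExpMoment)

lemma abs_exp_one_add_sq_add_sq (a b : ℝ) :
    |exp ((1 + a ^ 2 + b ^ 2) / 8)| ≤ exp (1 / 8) * exp ((a ^ 2 + b ^ 2) / 8) := by
  rw [abs_of_pos (exp_pos _), ← exp_add, ← add_div, add_assoc]

lemma measurable_exp_one_add_sq_add_sq :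
    Measurable (Function.uncurry fun a b : ℝ => exp ((1 + a ^ 2 + b ^ 2) / 8)) := by
  unfold Function.uncurry
  fun_prop

lemma integrable_exp_envelope (h0 : 0 ≤ θ) (h1 : θ ≤ 1) {v : EuclideanSpace ℝ (Fin m)}
    (hv : ‖v‖ = 1) : Integrable (fun x => exp (envelope v x / 8)) (bgVec θ (m + 1)) :=
  integrable_comp_inner_headVec_last v hv.le h0 h1 measurable_exp_one_add_sq_add_sq
    abs_exp_one_add_sq_add_sq

lemma integral_exp_envelope_le (h0 : 0 ≤ θ) (h1 : θ ≤ 1) {v : EuclideanSpace ℝ (Fin m)}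
    (hv : ‖v‖ = 1) : ∫ x, exp (envelope v x / 8) ∂(bgVec θ (m + 1)) ≤ envConst := by
  simpa [envelope] using integral_comp_inner_headVec_last_le (c₀ := envConst) (c₁ := 0) v hv h0 h1
    measurable_exp_one_add_sq_add_sq abs_exp_one_add_sq_add_sq fun s hs0 hs1 => by
      simpa [envConst] using condExpect_le_of_abs_le_exp_sq h0 h1
        measurable_exp_one_add_sq_add_sq abs_exp_one_add_sq_add_sq hs0 hs1

lemma integrable_of_abs_le_envelope (h0 : 0 ≤ θ) (h1 : θ ≤ 1) {v : EuclideanSpace ℝ (Fin m)}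
    (hv : ‖v‖ = 1) {W : (Fin (m + 1) → ℝ) → ℝ} (hW : Measurable W) {K : ℝ}
    (hK : ∀ x, |W x| ≤ K * envelope v x) : Integrable W (bgVec θ (m + 1)) := by
  have hK0 : 0 ≤ K := nonneg_of_mul_nonneg_left ((abs_nonneg _).trans (hK 0))
    (zero_lt_one.trans_le (one_le_envelope v 0))
  refine ((integrable_exp_envelope h0 h1 hv).const_mul (K * 8)).mono' hW.aestronglyMeasurable
    (.of_forall fun x => (hK x).trans ?_)
  rw [mul_assoc]
  gcongr
  linarith [add_one_le_exp (envelope v x / 8)]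

lemma abs_inner_le_one {E : Type*} [NormedAddCommGroup E] [InnerProductSpace ℝ E] {w v : E}
    (hw : ‖w‖ ≤ 1) (hv : ‖v‖ ≤ 1) : |⟪w, v⟫| ≤ 1 :=
  (abs_real_inner_le_norm w v).trans (mul_le_one₀ hw (norm_nonneg v) hv)

lemma abs_chart_curvature_le {q₀ : ℝ} (hq₀ : 0 < q₀) {w v : EuclideanSpace ℝ (Fin m)}
    (hv : ‖v‖ ≤ 1) (hw : ‖w‖ < 1) (hq : q₀ ≤ lastCoord w) :
    |‖v‖ ^ 2 / lastCoord w + ⟪w, v⟫ ^ 2 / lastCoord w ^ 3| ≤ 1 / q₀ + 1 / q₀ ^ 3 := by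
  have hpos := lastCoord_pos hw
  have hinner : ⟪w, v⟫ ^ 2 ≤ 1 := (sq_le_one_iff_abs_le_one _).2 (abs_inner_le_one hw.le hv)
  rw [abs_of_nonneg (by positivity)]
  gcongr
  exact pow_le_one₀ (norm_nonneg v) hv

lemma abs_chartDeriv_le {q₀ : ℝ} (hq₀ : 0 < q₀) (x : Fin (m + 1) → ℝ)
    {w v : EuclideanSpace ℝ (Fin m)} (hv : ‖v‖ ≤ 1) (hw : ‖w‖ < 1) (hq : q₀ ≤ lastCoord w) :
    |chartDeriv μ (headVec x) (x (Fin.last m)) w v| ≤ (1 + 1 / q₀) * envelope v x := by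
  have hslope : |⟪w, v⟫ / lastCoord w| ≤ 1 / q₀ := by
    rw [abs_div, abs_of_pos (lastCoord_pos hw)]
    exact div_le_div₀ zero_le_one (abs_inner_le_one hw.le hv) hq₀ hq
  refine ((abs_tanh_mul_le _ _).trans (abs_sub_mul_le _ _ _)).trans ?_
  exact mul_le_mul_of_nonneg_right (by linarith) (by positivity)

lemma abs_chartHess_le (hμ : 0 < μ) {q₀ : ℝ} (hq₀ : 0 < q₀) (x : Fin (m + 1) → ℝ)
    {w v : EuclideanSpace ℝ (Fin m)} (hv : ‖v‖ ≤ 1) (hw : ‖w‖ < 1) (hq : q₀ ≤ lastCoord w) :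
    |chartHess μ (headVec x) (x (Fin.last m)) w v| ≤
      (μ⁻¹ * (2 + 2 / q₀ ^ 2) + (1 / q₀ + 1 / q₀ ^ 3)) * envelope v x := by
  have hslope : (⟪w, v⟫ / lastCoord w) ^ 2 ≤ 1 / q₀ ^ 2 := by
    rw [div_pow]
    exact div_le_div₀ zero_le_one ((sq_le_one_iff_abs_le_one _).2 (abs_inner_le_one hw.le hv))
      (by positivity) (pow_le_pow_left₀ hq₀.le hq 2)
  have henv := zero_le_one.trans (one_le_envelope v x)
  have hlast : |x (Fin.last m)| ≤ envelope v x :=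
    (abs_le_one_add_sq_add_sq _ ⟪v, headVec x⟫).trans_eq (by unfold envelope; ring)
  calc |chartHess μ (headVec x) (x (Fin.last m)) w v|
      ≤ μ⁻¹ * (⟪v, headVec x⟫ - x (Fin.last m) * (⟪w, v⟫ / lastCoord w)) ^ 2 +
          |x (Fin.last m)| * |‖v‖ ^ 2 / lastCoord w + ⟪w, v⟫ ^ 2 / lastCoord w ^ 3| :=
        abs_sech_sq_sub_tanh_le hμ _ _ _ _
    _ ≤ μ⁻¹ * ((2 + 2 * (1 / q₀ ^ 2)) * envelope v x) +
          envelope v x * (1 / q₀ + 1 / q₀ ^ 3) := by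
        gcongr
        · exact (sub_mul_sq_le _ _ _).trans
            (mul_le_mul_of_nonneg_right (by linarith) henv)
        · exact abs_chart_curvature_le hq₀ hv hw hq
    _ = (μ⁻¹ * (2 + 2 / q₀ ^ 2) + (1 / q₀ + 1 / q₀ ^ 3)) * envelope v x := by ring

lemma measurable_chartHess (w v : EuclideanSpace ℝ (Fin m)) :
    Measurable fun x : Fin (m + 1) → ℝ => chartHess μ (headVec x) (x (Fin.last m)) w v := by
  have := continuous_tanh.measurable
  unfold chartHess chartInner
  fun_prop

lemma measurable_chartDeriv (w v : EuclideanSpace ℝ (Fin m)) :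
    Measurable fun x : Fin (m + 1) → ℝ => chartDeriv μ (headVec x) (x (Fin.last m)) w v := by
  have := continuous_tanh.measurable
  unfold chartDeriv chartInner
  fun_prop

/-- The indicator of `{0}`, used to restrict to the samples whose last coordinate vanishes. -/
def zeroIndicator : ℝ → ℝ := Set.indicator {0} 1

lemma zeroIndicator_zero : zeroIndicator 0 = 1 := by simp [zeroIndicator]

lemma zeroIndicator_of_ne {b : ℝ} (hb : b ≠ 0) : zeroIndicator b = 0 := by
  simp [zeroIndicator, hb]

lemma abs_zeroIndicator_le_one (b : ℝ) : |zeroIndicator b| ≤ 1 := by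
  rcases eq_or_ne b 0 with rfl | hb
  · simp [zeroIndicator_zero]
  · simp [zeroIndicator_of_ne hb]

lemma measurable_zeroIndicator_mul_pow (k : ℕ) :
    Measurable (Function.uncurry fun a b : ℝ => zeroIndicator b * a ^ k) :=
  ((measurable_one.indicator (measurableSet_singleton 0)).comp measurable_snd).mul
    (measurable_fst.pow_const k)

lemma abs_zeroIndicator_mul_le {f : ℝ → ℝ} {C : ℝ} (hf : ∀ a, |f a| ≤ C * exp (a ^ 2 / 8))
    (a b : ℝ) : |zeroIndicator b * f a| ≤ C * exp ((a ^ 2 + b ^ 2) / 8) := by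
  have hC : 0 ≤ C := by simpa using (abs_nonneg _).trans (hf 0)
  rw [abs_mul]
  refine (mul_le_of_le_one_left (abs_nonneg _) (abs_zeroIndicator_le_one b)).trans
    ((hf a).trans ?_)
  gcongr
  exact le_add_of_nonneg_right (sq_nonneg b)

lemma abs_zeroIndicator_mul_sq_le (a b : ℝ) :
    |zeroIndicator b * a ^ 2| ≤ 8 * exp ((a ^ 2 + b ^ 2) / 8) :=
  abs_zeroIndicator_mul_le (fun a => (abs_of_nonneg (sq_nonneg a)).trans_le (sq_le_exp_sq a)) a b

lemma abs_zeroIndicator_mul_pow_four_le (a b : ℝ) :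
    |zeroIndicator b * a ^ 4| ≤ 128 * exp ((a ^ 2 + b ^ 2) / 8) :=
  abs_zeroIndicator_mul_le (fun a => (abs_of_nonneg (by positivity)).trans_le
    (pow_four_le_exp_sq a)) a b

lemma condExpect_zeroIndicator_mul_pow (k : ℕ) (s : ℝ) :
    condExpect θ (fun a b => zeroIndicator b * a ^ k) s =
      (1 - θ) * (s ^ k * ∫ z, z ^ k ∂stdNormal) := by
  have hnull : ∫ b, zeroIndicator b ∂stdNormal = 0 := by
    have := nullSingletonClass_gaussianReal (μ := 0) (v := 1) one_ne_zero
    rw [zeroIndicator, integral_indicator_one (measurableSet_singleton 0), measureReal_def,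
      stdNormal, measure_singleton, ENNReal.toReal_zero]
  have hspike := integral_prod_mul (μ := stdNormal) (ν := stdNormal) (fun a => (s * a) ^ k)
    zeroIndicator
  simp_rw [mul_comm _ (zeroIndicator _)] at hspike
  simp only [condExpect, hspike, hnull, zeroIndicator_zero, mul_zero, zero_add, one_mul]
  simp only [mul_pow, integral_const_mul]

lemma le_integral_zeroIndicator_mul_sq (h0 : 0 ≤ θ) (h1 : θ ≤ 1)
    {v : EuclideanSpace ℝ (Fin m)} (hv : ‖v‖ = 1) : (1 - θ) * θ ≤
      ∫ x, zeroIndicator (x (Fin.last m)) * ⟪v, headVec x⟫ ^ 2 ∂(bgVec θ (m + 1)) := by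
  simpa using le_integral_comp_inner_headVec_last (c₀ := 0) (c₁ := 1 - θ) v hv h0 h1
    (measurable_zeroIndicator_mul_pow 2) abs_zeroIndicator_mul_sq_le fun s _ _ => by
      rw [condExpect_zeroIndicator_mul_pow, integral_sq_stdNormal, zero_add, mul_one]

lemma integral_zeroIndicator_mul_pow_four_le (h0 : 0 ≤ θ) (h1 : θ ≤ 1)
    {v : EuclideanSpace ℝ (Fin m)} (hv : ‖v‖ = 1) :
    ∫ x, zeroIndicator (x (Fin.last m)) * ⟪v, headVec x⟫ ^ 4 ∂(bgVec θ (m + 1)) ≤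
      3 * (1 - θ) * θ := by
  simpa using integral_comp_inner_headVec_last_le (c₀ := 0) (c₁ := 3 * (1 - θ)) v hv h0 h1
    (measurable_zeroIndicator_mul_pow 4) abs_zeroIndicator_mul_pow_four_le fun s hs0 hs1 => by
      have hs : s ^ 4 ≤ s ^ 2 := pow_le_pow_of_le_one hs0 hs1 (by norm_num)
      rw [condExpect_zeroIndicator_mul_pow, integral_pow_four_stdNormal]
      nlinarith

lemma integral_abs_stdNormal_le_one : ∫ z, |z| ∂stdNormal ≤ 1 := by
  have hsq := (integrable_pow_gaussianReal (a := 0) (v := 1) 2)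
  refine (integral_mono integrable_id_stdNormal.abs
    (((integrable_const (1 : ℝ)).fun_add hsq).div_const 2) fun z => ?_).trans_eq ?_
  · change |z| ≤ (1 + z ^ 2) / 2
    nlinarith [sq_nonneg (|z| - 1), sq_abs z]
  · rw [integral_div, integral_add (integrable_const _) hsq, integral_sq_stdNormal]
    norm_num

lemma integrable_abs_last (h0 : 0 ≤ θ) (h1 : θ ≤ 1) :
    Integrable (fun x => |x (Fin.last m)|) (bgVec θ (m + 1)) := by
  have := isProbabilityMeasure_bg h0 h1
  exact integrable_comp_eval (μ := fun _ : Fin (m + 1) => bg θ) (i := Fin.last m)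
    (f := fun y : ℝ => |y|) (integrable_bg integrable_id_stdNormal.abs)

lemma integral_abs_last_le (h0 : 0 ≤ θ) (h1 : θ ≤ 1) :
    ∫ x, |x (Fin.last m)| ∂(bgVec θ (m + 1)) ≤ θ := by
  have := isProbabilityMeasure_bg h0 h1
  calc ∫ x, |x (Fin.last m)| ∂(bgVec θ (m + 1))
      = ∫ y, |y| ∂(bg θ) :=
        integral_comp_eval (μ := fun _ : Fin (m + 1) => bg θ) (i := Fin.last m)
          (f := fun y : ℝ => |y|) continuous_abs.aestronglyMeasurable
    _ = θ * ∫ z, |z| ∂stdNormal := by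
        rw [integral_bg h0 h1 integrable_id_stdNormal.abs, abs_zero, mul_zero, add_zero]
    _ ≤ θ := mul_le_of_le_one_right h0 integral_abs_stdNormal_le_one

lemma neg_mul_abs_le_chartHess (hμ : 0 < μ) {w v : EuclideanSpace ℝ (Fin m)} (hv : ‖v‖ = 1)
    (hw : ‖w‖ ^ 2 ≤ 1 / 4) (a : EuclideanSpace ℝ (Fin m)) (b : ℝ) :
    -(10 * |b|) ≤ chartHess μ a b w v := by
  have hw1 : ‖w‖ < 1 := by nlinarith [norm_nonneg w]
  have hlast : 1 / 2 ≤ lastCoord w := by nlinarith [lastCoord_sq hw1, lastCoord_pos hw1]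
  have hcurv : |‖v‖ ^ 2 / lastCoord w + ⟪w, v⟫ ^ 2 / lastCoord w ^ 3| ≤ 10 :=
    (abs_chart_curvature_le (by norm_num) hv.le hw1 hlast).trans_eq (by norm_num)
  have htanh : tanh (chartInner a b w / μ) *
      (b * (‖v‖ ^ 2 / lastCoord w + ⟪w, v⟫ ^ 2 / lastCoord w ^ 3)) ≤ |b| * 10 := by
    refine (le_abs_self _).trans ((abs_tanh_mul_le _ _).trans ?_)
    rw [abs_mul]
    gcongr
  have hsech : 0 ≤ μ⁻¹ * ((1 - tanh (chartInner a b w / μ) ^ 2) *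
      (⟪v, a⟫ - b * (⟪w, v⟫ / lastCoord w)) ^ 2) :=
    mul_nonneg (by positivity) (mul_nonneg (one_sub_tanh_sq_nonneg _) (sq_nonneg _))
  unfold chartHess
  linarith

lemma le_chartHess_zero (hμ : 0 < μ) {r : ℝ} (hr : 32 * r ^ 2 ≤ μ ^ 2)
    (u v a : EuclideanSpace ℝ (Fin m)) :
    μ⁻¹ * ⟪v, a⟫ ^ 2 - μ⁻¹ / 64 * ⟪u, a⟫ ^ 4 - μ⁻¹ / 64 * ⟪v, a⟫ ^ 4 ≤
      chartHess μ a 0 (r • u) v := by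
  have htanh : tanh (r * ⟪u, a⟫ / μ) ^ 2 ≤ ⟪u, a⟫ ^ 2 / 32 := by
    refine (tanh_sq_le_sq _).trans ?_
    rw [div_pow, div_le_iff₀ (by positivity)]
    nlinarith [sq_nonneg ⟪u, a⟫]
  have hamgm : ⟪v, a⟫ ^ 2 - ⟪u, a⟫ ^ 4 / 64 - ⟪v, a⟫ ^ 4 / 64 ≤
      (1 - tanh (r * ⟪u, a⟫ / μ) ^ 2) * ⟪v, a⟫ ^ 2 := by
    nlinarith [sq_nonneg (⟪u, a⟫ ^ 2 - ⟪v, a⟫ ^ 2), sq_nonneg ⟪v, a⟫]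
  calc μ⁻¹ * ⟪v, a⟫ ^ 2 - μ⁻¹ / 64 * ⟪u, a⟫ ^ 4 - μ⁻¹ / 64 * ⟪v, a⟫ ^ 4
      = μ⁻¹ * (⟪v, a⟫ ^ 2 - ⟪u, a⟫ ^ 4 / 64 - ⟪v, a⟫ ^ 4 / 64) := by ring
    _ ≤ μ⁻¹ * ((1 - tanh (r * ⟪u, a⟫ / μ) ^ 2) * ⟪v, a⟫ ^ 2) := by gcongr
    _ = chartHess μ a 0 (r • u) v := by
        simp only [chartHess, chartInner, mul_zero, zero_mul, sub_zero, add_zero,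
          real_inner_smul_left]

lemma le_chartHess (hμ : 0 < μ) {r : ℝ} {u v : EuclideanSpace ℝ (Fin m)} (hu : ‖u‖ = 1)
    (hv : ‖v‖ = 1) (hr : 32 * r ^ 2 ≤ μ ^ 2) (hr1 : r ^ 2 ≤ 1 / 4) (a : EuclideanSpace ℝ (Fin m))
    (b : ℝ) :
    μ⁻¹ * (zeroIndicator b * ⟪v, a⟫ ^ 2) - μ⁻¹ / 64 * (zeroIndicator b * ⟪u, a⟫ ^ 4)
      - μ⁻¹ / 64 * (zeroIndicator b * ⟪v, a⟫ ^ 4) - 10 * |b| ≤ chartHess μ a b (r • u) v := by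
  rcases eq_or_ne b 0 with rfl | hb
  · simpa only [zeroIndicator_zero, one_mul, abs_zero, mul_zero, sub_zero] using
      le_chartHess_zero hμ hr u v a
  · have hru : ‖r • u‖ ^ 2 ≤ 1 / 4 := by
      rwa [norm_smul, hu, mul_one, norm_eq_abs, sq_abs]
    simpa only [zeroIndicator_of_ne hb, zero_mul, mul_zero, sub_zero, zero_sub] using
      neg_mul_abs_le_chartHess hμ hv hru a b

lemma le_integral_chartHess (h0 : 0 ≤ θ) (h1 : θ ≤ 1 / 2) (hμ : 0 < μ) (hμ1 : μ ≤ 1 / 200)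
    {w v : EuclideanSpace ℝ (Fin m)} (hv : ‖v‖ = 1) (hw : 32 * ‖w‖ ^ 2 ≤ μ ^ 2) :
    2 / 5 * θ / μ ≤ ∫ x, chartHess μ (headVec x) (x (Fin.last m)) w v ∂(bgVec θ (m + 1)) := by
  obtain ⟨u, hu, hwu⟩ : ∃ u : EuclideanSpace ℝ (Fin m), ‖u‖ = 1 ∧ ‖w‖ • u = w := by
    rcases eq_or_ne w 0 with rfl | hne
    · exact ⟨v, hv, by rw [norm_zero, zero_smul]⟩
    · exact ⟨NormedSpace.normalize w, NormedSpace.norm_normalize hne,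
        NormedSpace.norm_smul_normalize w⟩
  have hw1 : ‖w‖ < 1 := by nlinarith [norm_nonneg w]
  have hθ : θ ≤ 1 := by linarith
  have hInt₂ := (integrable_comp_inner_headVec_last v hv.le h0 hθ
    (measurable_zeroIndicator_mul_pow 2) abs_zeroIndicator_mul_sq_le).const_mul μ⁻¹
  have hInt₄ {y : EuclideanSpace ℝ (Fin m)} (hy : ‖y‖ = 1) :=
    (integrable_comp_inner_headVec_last y hy.le h0 hθ (measurable_zeroIndicator_mul_pow 4)
      abs_zeroIndicator_mul_pow_four_le).const_mul (μ⁻¹ / 64)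
  have hInt₁ := (integrable_abs_last (m := m) h0 hθ).const_mul 10
  have hmono := integral_mono (((hInt₂.sub (hInt₄ hu)).sub (hInt₄ hv)).sub hInt₁)
    (integrable_of_abs_le_envelope h0 hθ hv (measurable_chartHess w v)
      fun x => abs_chartHess_le hμ (lastCoord_pos hw1) x hv.le hw1 le_rfl) fun x => by
    have := le_chartHess hμ hu hv hw (by nlinarith) (headVec x) (x (Fin.last m))
    rwa [hwu] at this
  rw [integral_sub' ((hInt₂.sub (hInt₄ hu)).sub (hInt₄ hv)) hInt₁,
    integral_sub' (hInt₂.sub (hInt₄ hu)) (hInt₄ hv), integral_sub' hInt₂ (hInt₄ hu)] at hmono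
  simp only [integral_const_mul] at hmono
  have hμinv : 0 < μ⁻¹ := by positivity
  have hsq := mul_le_mul_of_nonneg_left (le_integral_zeroIndicator_mul_sq h0 hθ hv) hμinv.le
  have hfour {y : EuclideanSpace ℝ (Fin m)} (hy : ‖y‖ = 1) :=
    mul_le_mul_of_nonneg_left (integral_zeroIndicator_mul_pow_four_le h0 hθ hy)
      (by positivity : 0 ≤ μ⁻¹ / 64)
  have hmain : 2 / 5 * θ / μ ≤ μ⁻¹ * ((1 - θ) * θ) - μ⁻¹ / 64 * (3 * (1 - θ) * θ)
      - μ⁻¹ / 64 * (3 * (1 - θ) * θ) - 10 * θ := by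
    have hμθ := mul_le_mul_of_nonneg_right
      ((le_inv_comm₀ (by norm_num) hμ).2 (by linarith) : 200 ≤ μ⁻¹) h0
    have hθθ := mul_le_mul_of_nonneg_right h1 (by positivity : 0 ≤ μ⁻¹ * θ)
    rw [div_eq_mul_inv]
    linarith
  linarith [hfour hu, hfour hv, integral_abs_last_le (m := m) h0 hθ]

lemma abs_exp_mul_tanh_mul_le (l a b : ℝ) :
    |exp (l * (tanh (b / μ) * a))| ≤ exp (2 * l ^ 2) * exp ((a ^ 2 + b ^ 2) / 8) := by
  have hamgm : |l * a| ≤ 2 * l ^ 2 + a ^ 2 / 8 := by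
    rw [abs_le]
    constructor <;> nlinarith [sq_nonneg (4 * l + a), sq_nonneg (4 * l - a)]
  rw [abs_of_pos (exp_pos _), ← exp_add, exp_le_exp]
  calc l * (tanh (b / μ) * a) = tanh (b / μ) * (l * a) := by ring
    _ ≤ |l * a| := (le_abs_self _).trans (abs_tanh_mul_le _ _)
    _ ≤ 2 * l ^ 2 + (a ^ 2 + b ^ 2) / 8 := by nlinarith [sq_nonneg b]

lemma measurable_exp_mul_tanh_mul (l : ℝ) :
    Measurable (Function.uncurry fun a b : ℝ => exp (l * (tanh (b / μ) * a))) := by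
  have := continuous_tanh
  exact Continuous.measurable (by unfold Function.uncurry; fun_prop)

lemma integral_exp_mul_stdNormal (t : ℝ) : ∫ z, exp (t * z) ∂stdNormal = exp (t ^ 2 / 2) := by
  simpa [mgf] using congrFun (mgf_fun_id_gaussianReal (μ := 0) (v := 1)) t

lemma condExpect_exp_mul_tanh_mul_le (h0 : 0 ≤ θ) (h1 : θ ≤ 1) (l : ℝ) {s : ℝ}
    (hs0 : 0 ≤ s) (hs1 : s ≤ 1) :
    condExpect θ (fun a b => exp (l * (tanh (b / μ) * a))) s ≤ exp (l ^ 2 / 2) := by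
  have hInt := integrable_prod_of_abs_le_exp_sq (measurable_exp_mul_tanh_mul (μ := μ) l)
    (abs_exp_mul_tanh_mul_le l) hs0 hs1
  have hinner (y : ℝ) : ∫ z, exp (l * (tanh (y / μ) * (s * z))) ∂stdNormal ≤ exp (l ^ 2 / 2) := by
    have hts : (tanh (y / μ) * s) ^ 2 ≤ 1 := by
      rw [sq_le_one_iff_abs_le_one, abs_mul, abs_of_nonneg hs0]
      exact mul_le_one₀ (abs_tanh_le_one _) hs0 hs1
    calc ∫ z, exp (l * (tanh (y / μ) * (s * z))) ∂stdNormal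
        = exp (l ^ 2 * (tanh (y / μ) * s) ^ 2 / 2) := by
          rw [← mul_pow, ← integral_exp_mul_stdNormal]
          simp only [mul_assoc]
      _ ≤ exp (l ^ 2 / 2) := by
          gcongr
          exact mul_le_of_le_one_right (sq_nonneg l) hts
  have hspike : ∫ z : ℝ × ℝ, exp (l * (tanh (z.2 / μ) * (s * z.1))) ∂(stdNormal.prod stdNormal) ≤
      exp (l ^ 2 / 2) := by
    rw [integral_prod_symm _ hInt]
    exact (integral_mono hInt.integral_prod_right (integrable_const _) hinner).trans_eq (by simp)
  have hone : 1 ≤ exp (l ^ 2 / 2) := one_le_exp (by positivity)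
  simp only [condExpect, zero_div, tanh_zero, zero_mul, mul_zero, exp_zero, integral_const,
    probReal_univ, one_smul, mul_one]
  linarith [mul_le_mul_of_nonneg_left hspike h0, mul_nonneg (sub_nonneg.2 h1) (sub_nonneg.2 hone)]

lemma integrable_exp_mul_tanh_mul (h0 : 0 ≤ θ) (h1 : θ ≤ 1) (l : ℝ)
    {v : EuclideanSpace ℝ (Fin m)} (hv : ‖v‖ = 1) :
    Integrable (fun x => exp (l * (tanh (x (Fin.last m) / μ) * ⟪v, headVec x⟫)))
      (bgVec θ (m + 1)) :=
  integrable_comp_inner_headVec_last v hv.le h0 h1 (measurable_exp_mul_tanh_mul l)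
    (abs_exp_mul_tanh_mul_le l)

lemma integral_exp_mul_tanh_mul_le (h0 : 0 ≤ θ) (h1 : θ ≤ 1) (l : ℝ)
    {v : EuclideanSpace ℝ (Fin m)} (hv : ‖v‖ = 1) :
    ∫ x, exp (l * (tanh (x (Fin.last m) / μ) * ⟪v, headVec x⟫)) ∂(bgVec θ (m + 1)) ≤
      exp (l ^ 2 / 2) := by
  simpa using integral_comp_inner_headVec_last_le (c₀ := exp (l ^ 2 / 2)) (c₁ := 0) v hv h0 h1
    (measurable_exp_mul_tanh_mul l) (abs_exp_mul_tanh_mul_le l) fun s hs0 hs1 => by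
      simpa using condExpect_exp_mul_tanh_mul_le h0 h1 l hs0 hs1

end Expectations

section Concentration

lemma map_pi_pi_swap {ι κ X : Type*} [Fintype ι] [Fintype κ] [MeasurableSpace X]
    (ν : ι → κ → Measure X) [∀ i j, IsProbabilityMeasure (ν i j)] :
    (Measure.pi fun i => Measure.pi (ν i)).map (fun x j i => x i j) =
      Measure.pi fun j => Measure.pi fun i => ν i j := by
  have huncurry : (Measure.pi fun i => Measure.pi (ν i)).map (fun x (z : κ × ι) => x z.2 z.1) =
      Measure.pi fun z => ν z.2 z.1 := by
    refine (Measure.pi_eq fun s hs => ?_).symm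
    have hset : (fun (x : ι → κ → X) (z : κ × ι) => x z.2 z.1) ⁻¹' Set.univ.pi s =
        Set.univ.pi fun i => Set.univ.pi fun j => s (j, i) := by
      ext x
      simp only [Set.mem_preimage, Set.mem_pi, Set.mem_univ, true_imp_iff, Prod.forall]
      exact forall_comm
    rw [Measure.map_apply (by fun_prop) (.univ_pi hs), hset, Fintype.prod_prod_type_right]
    simp_rw [Measure.pi_pi]
  have hcurry : (Measure.pi fun z : κ × ι => ν z.2 z.1).map (MeasurableEquiv.curry κ ι X) =
      Measure.pi fun j => Measure.pi fun i => ν i j := by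
    simpa only [Measure.infinitePi_eq_pi] using Measure.infinitePi_map_curry fun j i => ν i j
  rw [← hcurry, ← huncurry, Measure.map_map (by fun_prop) (by fun_prop)]
  rfl

lemma measurePreserving_columns {θ : ℝ} (h0 : 0 ≤ θ) (h1 : θ ≤ 1) (n p : ℕ) :
    MeasurePreserving (fun X k i => X i k) (bgMatrix θ n p)
      (Measure.pi fun _ : Fin p => bgVec θ n) :=
  have := isProbabilityMeasure_bg h0 h1
  ⟨by fun_prop, map_pi_pi_swap _⟩

lemma exp_le_one_add_add_sq_mul_exp_abs (y : ℝ) : exp y ≤ 1 + y + y ^ 2 * exp |y| := by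
  have hC := Complex.norm_exp_sub_sum_le_norm_mul_exp (y : ℂ) 2
  simp only [Finset.sum_range_succ, Finset.range_zero, Finset.sum_empty, pow_zero,
    Nat.factorial, pow_one, Nat.cast_one, div_one, zero_add, mul_one, Complex.norm_real] at hC
  rw [← Complex.ofReal_exp, ← Complex.ofReal_one, ← Complex.ofReal_add, ← Complex.ofReal_sub,
    Complex.norm_real, norm_eq_abs, norm_eq_abs, sq_abs] at hC
  linarith [le_of_abs_le hC]

lemma sq_mul_exp_half_le {u : ℝ} (hu : 0 ≤ u) : u ^ 2 * exp (u / 2) ≤ 8 * exp u := by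
  have hsq : u ^ 2 ≤ 8 * exp (u / 2) := by
    nlinarith [quadratic_le_exp_of_nonneg (x := u / 2) (by positivity)]
  calc u ^ 2 * exp (u / 2) ≤ 8 * exp (u / 2) * exp (u / 2) := by gcongr
    _ = 8 * exp u := by rw [mul_assoc, ← exp_add, add_halves]

variable {α : Type*} [MeasurableSpace α] {ν : Measure α} {W : α → ℝ}

lemma measureReal_pi_sum_le_le {ι : Type*} [Fintype ι] [IsFiniteMeasure ν] {t : ℝ} (ht : t ≤ 0)
    (hInt : Integrable (fun x => exp (t * W x)) ν) (a : ℝ) :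
    (Measure.pi fun _ : ι => ν).real {x | ∑ k, W (x k) ≤ a} ≤
      exp (-t * a) * mgf W ν t ^ Fintype.card ι := by
  have hprod (x : ι → α) : exp (t * ∑ k, W (x k)) = ∏ k, exp (t * W (x k)) := by
    rw [Finset.mul_sum, exp_sum]
  have hchernoff := measure_le_le_exp_mul_mgf (μ := Measure.pi fun _ : ι => ν)
    (X := fun x => ∑ k, W (x k)) a ht (by
      simp_rw [hprod]
      exact Integrable.fintype_prod fun _ => hInt)
  rwa [mgf, funext hprod, integral_fintype_prod_eq_pow fun x => exp (t * W x)] at hchernoff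

section SubExponential

variable {K t : ℝ}

lemma abs_mul_le_abs_div_div_two (hK : 0 < K) (htK : 2 * (|t| * K) ≤ 1) (y : ℝ) :
    |t * y| ≤ |y| / K / 2 := by
  rw [abs_mul, div_div, le_div_iff₀ (by positivity)]
  nlinarith [abs_nonneg y]

lemma integrable_exp_mul_of_integrable_exp_abs (hK : 0 < K) (htK : 2 * (|t| * K) ≤ 1)
    (hW : Measurable W) (hInt : Integrable (fun x => exp (|W x| / K)) ν) :
    Integrable (fun x => exp (t * W x)) ν := by
  refine hInt.mono' (by fun_prop) (.of_forall fun x => ?_)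
  rw [norm_of_nonneg (exp_pos _).le, exp_le_exp]
  exact (le_abs_self _).trans ((abs_mul_le_abs_div_div_two hK htK _).trans
    (half_le_self (by positivity)))

lemma integrable_of_integrable_exp_abs (hK : 0 < K) (hW : Measurable W)
    (hInt : Integrable (fun x => exp (|W x| / K)) ν) : Integrable W ν := by
  refine (hInt.const_mul K).mono' hW.aestronglyMeasurable (.of_forall fun x => ?_)
  calc ‖W x‖ = K * (|W x| / K) := by rw [norm_eq_abs]; field_simp
    _ ≤ K * exp (|W x| / K) := by
        gcongr
        linarith [add_one_le_exp (|W x| / K)]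

lemma exp_mul_le_of_abs_le (hK : 0 < K) (htK : 2 * (|t| * K) ≤ 1) (y : ℝ) :
    exp (t * y) ≤ 1 + t * y + 8 * t ^ 2 * K ^ 2 * exp (|y| / K) := by
  have hu := abs_mul_le_abs_div_div_two hK htK y
  calc exp (t * y) ≤ 1 + t * y + (t * y) ^ 2 * exp |t * y| := exp_le_one_add_add_sq_mul_exp_abs _
    _ ≤ 1 + t * y + (t * y) ^ 2 * exp (|y| / K / 2) := by gcongr
    _ = 1 + t * y + t ^ 2 * K ^ 2 * ((|y| / K) ^ 2 * exp (|y| / K / 2)) := by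
        rw [div_pow, sq_abs]
        field_simp
    _ ≤ 1 + t * y + t ^ 2 * K ^ 2 * (8 * exp (|y| / K)) := by
        gcongr 1 + t * y + t ^ 2 * K ^ 2 * ?_
        exact sq_mul_exp_half_le (by positivity)
    _ = 1 + t * y + 8 * t ^ 2 * K ^ 2 * exp (|y| / K) := by ring

variable [IsProbabilityMeasure ν]

lemma mgf_le_of_integrable_exp_abs (hK : 0 < K) (htK : 2 * (|t| * K) ≤ 1) (hW : Measurable W)
    (hInt : Integrable (fun x => exp (|W x| / K)) ν) :
    mgf W ν t ≤ exp (t * ∫ x, W x ∂ν + 8 * t ^ 2 * K ^ 2 * ∫ x, exp (|W x| / K) ∂ν) := by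
  have hintW := (integrable_of_integrable_exp_abs hK hW hInt).const_mul t
  have hlin : Integrable (fun x => 1 + t * W x) ν := (integrable_const 1).fun_add hintW
  have hexp := hInt.const_mul (8 * t ^ 2 * K ^ 2)
  calc mgf W ν t ≤ ∫ x, (1 + t * W x + 8 * t ^ 2 * K ^ 2 * exp (|W x| / K)) ∂ν :=
        integral_mono (integrable_exp_mul_of_integrable_exp_abs hK htK hW hInt)
          (hlin.fun_add hexp) fun x => exp_mul_le_of_abs_le hK htK (W x)
    _ = t * ∫ x, W x ∂ν + 8 * t ^ 2 * K ^ 2 * ∫ x, exp (|W x| / K) ∂ν + 1 := by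
        rw [integral_add hlin hexp, integral_add (integrable_const 1) hintW, integral_const_mul,
          integral_const_mul, integral_const, probReal_univ, one_smul]
        ring
    _ ≤ _ := add_one_le_exp _

lemma measureReal_pi_sum_le_half_le {ι : Type*} [Fintype ι] {M κ : ℝ} (hK : 0 < K) (hM1 : 1 ≤ M)
    (hW : Measurable W) (hInt : Integrable (fun x => exp (|W x| / K)) ν)
    (hM : ∫ x, exp (|W x| / K) ∂ν ≤ M) (hκ0 : 0 ≤ κ) (hκK : κ ≤ K) (hκ : κ ≤ ∫ x, W x ∂ν) :
    (Measure.pi fun _ : ι => ν).real {x | ∑ k, W (x k) ≤ Fintype.card ι * (κ / 2)} ≤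
      exp (-(Fintype.card ι * (κ ^ 2 / (128 * K ^ 2 * M)))) := by
  have : 0 < M := by linarith
  set s := κ / (32 * K ^ 2 * M) with hs
  have hs0 : 0 ≤ s := by positivity
  have hsK : 2 * (|(-s)| * K) ≤ 1 := by
    rw [abs_neg, abs_of_nonneg hs0, hs, div_mul_eq_mul_div, mul_div_assoc', div_le_one
      (by positivity)]
    nlinarith [mul_le_mul hκK hM1 zero_le_one hK.le]
  have hmgf : mgf W ν (-s) ≤ exp (-(κ ^ 2 / (128 * K ^ 2 * M)) - s * (κ / 2)) := by
    refine (mgf_le_of_integrable_exp_abs hK hsK hW hInt).trans (exp_le_exp.2 ?_)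
    calc -s * ∫ x, W x ∂ν + 8 * (-s) ^ 2 * K ^ 2 * ∫ x, exp (|W x| / K) ∂ν
        ≤ -s * κ + 8 * (-s) ^ 2 * K ^ 2 * M := by
          have := mul_le_mul_of_nonneg_left hκ hs0
          gcongr ?_ + 8 * (-s) ^ 2 * K ^ 2 * ?_
          linarith
      _ = -(κ ^ 2 / (128 * K ^ 2 * M)) - s * (κ / 2) := by
          rw [hs]
          field_simp
          ring
  refine (measureReal_pi_sum_le_le (neg_nonpos.2 hs0)
    (integrable_exp_mul_of_integrable_exp_abs hK hsK hW hInt) _).trans ?_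
  calc _ ≤ exp (- -s * (Fintype.card ι * (κ / 2))) *
        exp (-(κ ^ 2 / (128 * K ^ 2 * M)) - s * (κ / 2)) ^ Fintype.card ι := by
          gcongr
          exact mgf_nonneg
    _ = exp (-(Fintype.card ι * (κ ^ 2 / (128 * K ^ 2 * M)))) := by
        rw [← exp_nat_mul, ← exp_add]
        ring_nf

end SubExponential

end Concentration

section Nets

variable {ι : Type*} [Fintype ι]

lemma floor_mul_mem_Icc {y : ℝ} (hy : |y| ≤ 1) (N : ℕ) :
    ⌊(N : ℝ) * y⌋ ∈ Finset.Icc (-(N : ℤ)) N := by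
  have : (0 : ℝ) ≤ N := N.cast_nonneg
  obtain ⟨hy₀, hy₁⟩ := abs_le.1 hy
  rw [Finset.mem_Icc, Int.le_floor, ← Int.lt_add_one_iff, Int.floor_lt]
  constructor <;> push_cast <;> nlinarith

lemma abs_sub_le_of_floor_mul_eq {N : ℕ} (hN : 0 < N) {x y : ℝ}
    (h : ⌊(N : ℝ) * x⌋ = ⌊(N : ℝ) * y⌋) : |x - y| ≤ 1 / N := by
  have hN' : (0 : ℝ) < N := by exact_mod_cast hN
  have hlt := Int.abs_sub_lt_one_of_floor_eq_floor h
  rw [← mul_sub, abs_mul, abs_of_pos hN', mul_comm] at hlt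
  exact (le_div_iff₀ hN').2 hlt.le

lemma exists_net {α : Type*} (φ : α → ι → ℝ) (S : Set α) (hS : ∀ a ∈ S, ∀ i, |φ a i| ≤ 1) {N : ℕ}
    (hN : 0 < N) :
    ∃ T : Finset α, ↑T ⊆ S ∧ T.card ≤ (2 * N + 1) ^ Fintype.card ι ∧
      ∀ s ∈ S, ∃ t ∈ T, ∀ i, |φ s i - φ t i| ≤ 1 / N := by
  classical
  let cell : α → ι → ℤ := fun a i => ⌊(N : ℝ) * φ a i⌋
  let G : Finset (ι → ℤ) := Fintype.piFinset fun _ => Finset.Icc (-(N : ℤ)) N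
  have hcard : G.card = (2 * N + 1) ^ Fintype.card ι := by
    simp only [G, Fintype.card_piFinset, Int.card_Icc, Finset.prod_const, Finset.card_univ]
    congr 1
    omega
  have hG : Set.MapsTo cell S G := fun a ha =>
    Finset.mem_coe.2 (Fintype.mem_piFinset.2 fun i => floor_mul_mem_Icc (hS a ha i) N)
  obtain ⟨S', hS', hb⟩ := Set.exists_subset_bijOn S cell
  have hmaps : Set.MapsTo cell S' G := hG.mono hS' subset_rfl
  have hfin : S'.Finite := Set.Finite.of_injOn hmaps hb.injOn G.finite_toSet
  refine ⟨hfin.toFinset, by rwa [hfin.coe_toFinset], ?_, fun s hs => ?_⟩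
  · rw [← hcard]
    refine Finset.card_le_card_of_injOn cell ?_ ?_ <;> rw [hfin.coe_toFinset]
    exacts [hmaps, hb.injOn]
  · obtain ⟨t, ht, hts⟩ := hb.surjOn ⟨s, hs, rfl⟩
    exact ⟨t, hfin.mem_toFinset.2 ht, fun i =>
      abs_sub_le_of_floor_mul_eq hN (congrFun hts i).symm⟩

lemma norm_le_sqrt_card_mul (w : EuclideanSpace ℝ ι) {c : ℝ} (hc0 : 0 ≤ c)
    (hc : ∀ i, |w i| ≤ c) : ‖w‖ ≤ √(Fintype.card ι) * c := by
  calc ‖w‖ = √(∑ i, ‖w i‖ ^ 2) := EuclideanSpace.norm_eq w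
    _ ≤ √(∑ _i : ι, c ^ 2) := by
        gcongr with i
        exact hc i
    _ = √(Fintype.card ι) * c := by
        rw [Finset.sum_const, Finset.card_univ, nsmul_eq_mul, sqrt_mul (Nat.cast_nonneg _),
          sqrt_sq hc0]

lemma exists_net_prod (S : Set (EuclideanSpace ℝ ι × EuclideanSpace ℝ ι))
    (hS₁ : ∀ a ∈ S, ‖a.1‖ ≤ 1) (hS₂ : ∀ a ∈ S, ‖a.2‖ ≤ 1) {N : ℕ} (hN : 0 < N) :
    ∃ T : Finset (EuclideanSpace ℝ ι × EuclideanSpace ℝ ι), ↑T ⊆ S ∧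
      T.card ≤ (2 * N + 1) ^ (2 * Fintype.card ι) ∧
      ∀ a ∈ S, ∃ b ∈ T, dist a b ≤ √(Fintype.card ι) / N := by
  obtain ⟨T, hTS, hcard, hT⟩ := exists_net
    (fun (a : EuclideanSpace ℝ ι × EuclideanSpace ℝ ι) (i : ι ⊕ ι) => i.elim a.1 a.2) S
    (by
      rintro a ha (i | i)
      · exact (PiLp.norm_apply_le a.1 i).trans (hS₁ a ha)
      · exact (PiLp.norm_apply_le a.2 i).trans (hS₂ a ha)) hN
  refine ⟨T, hTS, by rwa [two_mul (Fintype.card ι), ← Fintype.card_sum], fun a ha => ?_⟩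
  obtain ⟨b, hb, hab⟩ := hT a ha
  refine ⟨b, hb, ?_⟩
  have h₁ := norm_le_sqrt_card_mul (a.1 - b.1) (by positivity) fun i => hab (Sum.inl i)
  have h₂ := norm_le_sqrt_card_mul (a.2 - b.2) (by positivity) fun i => hab (Sum.inr i)
  rw [mul_one_div, ← dist_eq_norm] at h₁ h₂
  exact max_le h₁ h₂

end Nets

section Uniform

variable {m p : ℕ} {θ μ : ℝ}

lemma bgMatrix_sum_le_half_le (h0 : 0 ≤ θ) (h1 : θ ≤ 1) {v : EuclideanSpace ℝ (Fin m)}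
    (hv : ‖v‖ = 1) {W : (Fin (m + 1) → ℝ) → ℝ} (hW : Measurable W) {K κ : ℝ} (hK : 0 < K)
    (henv : ∀ x, |W x| ≤ K / 8 * envelope v x) (hκ0 : 0 ≤ κ) (hκK : κ ≤ K)
    (hκ : κ ≤ ∫ x, W x ∂(bgVec θ (m + 1))) :
    bgMatrix θ (m + 1) p {X | ∑ k, W (fun i => X i k) ≤ p * (κ / 2)} ≤
      ENNReal.ofReal (exp (-(p * (κ ^ 2 / (128 * K ^ 2 * envConst))))) := by
  have := isProbabilityMeasure_bg h0 h1
  have : IsProbabilityMeasure (bgVec θ (m + 1)) := by unfold bgVec; infer_instance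
  have hle (x : Fin (m + 1) → ℝ) : exp (|W x| / K) ≤ exp (envelope v x / 8) := by
    rw [exp_le_exp, div_le_iff₀ hK]
    linarith [henv x]
  have hintenv := integrable_exp_envelope h0 h1 hv
  have hInt : Integrable (fun x => exp (|W x| / K)) (bgVec θ (m + 1)) :=
    hintenv.mono' (by fun_prop) (.of_forall fun x => by
      rw [norm_of_nonneg (exp_pos _).le]
      exact hle x)
  have hbernstein := measureReal_pi_sum_le_half_le (ι := Fin p) hK one_le_envConst hW hInt
    ((integral_mono hInt hintenv hle).trans (integral_exp_envelope_le h0 h1 hv)) hκ0 hκK hκ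
  rw [Fintype.card_fin] at hbernstein
  have hmeas : MeasurableSet {x : Fin p → Fin (m + 1) → ℝ | ∑ k, W (x k) ≤ p * (κ / 2)} :=
    measurableSet_le (by fun_prop) measurable_const
  calc bgMatrix θ (m + 1) p {X | ∑ k, W (fun i => X i k) ≤ p * (κ / 2)}
      = (Measure.pi fun _ : Fin p => bgVec θ (m + 1)) {x | ∑ k, W (x k) ≤ p * (κ / 2)} :=
        (measurePreserving_columns h0 h1 (m + 1) p).measure_preimage hmeas.nullMeasurableSet
    _ ≤ _ := by
        rw [← ofReal_measureReal]
        exact ENNReal.ofReal_le_ofReal hbernstein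

lemma measure_biUnion_finset_le_ofReal {Ω α : Type*} [MeasurableSpace Ω] {P : Measure Ω}
    (T : Finset α) {A : α → Set Ω} {ε : ℝ}
    (hA : ∀ a ∈ T, P (A a) ≤ ENNReal.ofReal ε) :
    P (⋃ a ∈ T, A a) ≤ ENNReal.ofReal (T.card * ε) := by
  refine (measure_biUnion_finset_le T A).trans ((Finset.sum_le_card_nsmul T _ _ hA).trans_eq ?_)
  rw [nsmul_eq_mul, ENNReal.ofReal_mul (Nat.cast_nonneg _), ENNReal.ofReal_natCast]

lemma bgMatrix_exists_sum_le (h0 : 0 ≤ θ) (h1 : θ ≤ 1)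
    {W : EuclideanSpace ℝ (Fin m) → EuclideanSpace ℝ (Fin m) → (Fin (m + 1) → ℝ) → ℝ}
    {S : Set (EuclideanSpace ℝ (Fin m) × EuclideanSpace ℝ (Fin m))} {K κ Λ R : ℝ} {N : ℕ}
    (hN : 0 < N) (hK : 0 < K) (hκ0 : 0 ≤ κ) (hκK : κ ≤ K) (hΛ : 0 ≤ Λ)
    (hSw : ∀ a ∈ S, ‖a.1‖ ≤ 1) (hSv : ∀ a ∈ S, ‖a.2‖ = 1)
    (hmeas : ∀ a ∈ S, Measurable (W a.1 a.2))
    (henv : ∀ a ∈ S, ∀ x, |W a.1 a.2 x| ≤ K / 8 * envelope a.2 x)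
    (hexp : ∀ a ∈ S, κ ≤ ∫ x, W a.1 a.2 x ∂(bgVec θ (m + 1)))
    (hLip : ∀ a ∈ S, ∀ b ∈ S, ∀ x : Fin (m + 1) → ℝ, (∀ i, |x i| ≤ R) →
      |W a.1 a.2 x - W b.1 b.2 x| ≤ Λ * dist a b)
    (hΛN : Λ * (√m / N) ≤ κ / 4) :
    bgMatrix θ (m + 1) p {X | (∀ i k, |X i k| ≤ R) ∧
        ∃ a ∈ S, ∑ k, W a.1 a.2 (fun i => X i k) ≤ p * (κ / 4)} ≤
      ENNReal.ofReal ((2 * N + 1) ^ (2 * m) *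
        exp (-(p * (κ ^ 2 / (128 * K ^ 2 * envConst))))) := by
  obtain ⟨T, hTS, hcard, hT⟩ := exists_net_prod S hSw (fun a ha => (hSv a ha).le) hN
  rw [Fintype.card_fin] at hcard hT
  have hsub : {X : Fin (m + 1) → Fin p → ℝ | (∀ i k, |X i k| ≤ R) ∧
        ∃ a ∈ S, ∑ k, W a.1 a.2 (fun i => X i k) ≤ p * (κ / 4)} ⊆
      ⋃ a ∈ T, {X | ∑ k, W a.1 a.2 (fun i => X i k) ≤ p * (κ / 2)} := by
    rintro X ⟨hX, a, ha, hsum⟩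
    obtain ⟨b, hb, hab⟩ := hT a ha
    have hcol (k : Fin p) : W b.1 b.2 (fun i => X i k) ≤ W a.1 a.2 (fun i => X i k) + κ / 4 := by
      have hdiff := neg_le_of_abs_le (hLip a ha b (hTS hb) (fun i => X i k) fun i => hX i k)
      linarith [mul_le_mul_of_nonneg_left hab hΛ]
    have hsum' := Finset.sum_le_sum fun k (_ : k ∈ Finset.univ) => hcol k
    rw [Finset.sum_add_distrib, Finset.sum_const, Finset.card_univ, Fintype.card_fin,
      nsmul_eq_mul] at hsum'
    refine Set.mem_biUnion (Finset.mem_coe.2 hb) (Set.mem_ofPred.2 ?_)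
    linarith
  refine (measure_mono hsub).trans ((measure_biUnion_finset_le_ofReal T fun a ha =>
    bgMatrix_sum_le_half_le h0 h1 (hSv a (hTS ha)) (hmeas a (hTS ha)) hK (henv a (hTS ha)) hκ0 hκK
      (hexp a (hTS ha))).trans (ENNReal.ofReal_le_ofReal ?_))
  gcongr
  exact_mod_cast hcard

lemma bg_lt_abs_le (h0 : 0 ≤ θ) (h1 : θ ≤ 1) {R : ℝ} (hR : 0 ≤ R) :
    bg θ {x | R < |x|} ≤ ENNReal.ofReal (gaussExpMoment * exp (-(R ^ 2 / 8))) := by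
  have hInt : Integrable (fun x : ℝ => exp (x ^ 2 / 8)) (bg θ) :=
    integrable_bg integrable_exp_sq_stdNormal
  have hmoment : ∫ x : ℝ, exp (x ^ 2 / 8) ∂(bg θ) ≤ gaussExpMoment := by
    rw [integral_bg h0 h1 integrable_exp_sq_stdNormal, zero_pow two_ne_zero, zero_div, exp_zero]
    change θ * gaussExpMoment + (1 - θ) * 1 ≤ gaussExpMoment
    nlinarith [one_le_gaussExpMoment]
  have hmarkov := mul_meas_ge_le_integral_of_nonneg (μ := bg θ)
    (.of_forall fun x : ℝ => (exp_pos (x ^ 2 / 8)).le) hInt (exp (R ^ 2 / 8))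
  have hsub : {x : ℝ | R < |x|} ⊆ {x | exp (R ^ 2 / 8) ≤ exp (x ^ 2 / 8)} := by
    intro x (hx : R < |x|)
    have hsq := pow_le_pow_left₀ hR hx.le 2
    rw [sq_abs] at hsq
    exact exp_le_exp.2 (by linarith)
  rw [← ofReal_measureReal]
  refine ENNReal.ofReal_le_ofReal ((measureReal_mono hsub).trans ?_)
  rw [exp_neg, ← div_eq_mul_inv, le_div_iff₀ (exp_pos _), mul_comm]
  exact hmarkov.trans hmoment

lemma bgMatrix_exists_lt_abs_le {n : ℕ} (h0 : 0 ≤ θ) (h1 : θ ≤ 1) {R : ℝ} (hR : 0 ≤ R) :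
    bgMatrix θ n p {X | ∃ i k, R < |X i k|} ≤
      ENNReal.ofReal (n * p * (gaussExpMoment * exp (-(R ^ 2 / 8)))) := by
  have := isProbabilityMeasure_bg h0 h1
  have hsub : {X : Fin n → Fin p → ℝ | ∃ i k, R < |X i k|} ⊆
      ⋃ z ∈ (Finset.univ : Finset (Fin n × Fin p)), {X | R < |X z.1 z.2|} := by
    rintro X ⟨i, k, h⟩
    exact Set.mem_biUnion (Finset.mem_coe.2 (Finset.mem_univ (i, k))) h
  have hA : MeasurableSet {x : ℝ | R < |x|} := measurableSet_lt measurable_const (by fun_prop)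
  have hentry (i : Fin n) (k : Fin p) :
      bgMatrix θ n p {X | R < |X i k|} = bg θ {x | R < |x|} :=
    ((measurePreserving_eval (fun _ : Fin p => bg θ) k).comp
      (measurePreserving_eval (fun _ : Fin n => Measure.pi fun _ : Fin p => bg θ) i)
        ).measure_preimage hA.nullMeasurableSet
  refine (measure_mono hsub).trans ((measure_biUnion_finset_le_ofReal _ fun z _ =>
    (hentry z.1 z.2).trans_le (bg_lt_abs_le h0 h1 hR)).trans_eq ?_)
  rw [Finset.card_univ, Fintype.card_prod, Fintype.card_fin, Fintype.card_fin, Nat.cast_mul]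

lemma bgMatrix_le_sum_tanh_mul_inner_le (h0 : 0 ≤ θ) (h1 : θ ≤ 1) {v : EuclideanSpace ℝ (Fin m)}
    (hv : ‖v‖ = 1) {τ : ℝ} (hτ : 0 ≤ τ) :
    bgMatrix θ (m + 1) p {X | p * τ ≤
        ∑ k, tanh (X (Fin.last m) k / μ) * ⟪v, headVec fun i => X i k⟫} ≤
      ENNReal.ofReal (exp (-(p * (τ ^ 2 / 2)))) := by
  have := isProbabilityMeasure_bg h0 h1
  have : IsProbabilityMeasure (bgVec θ (m + 1)) := by unfold bgVec; infer_instance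
  let W (x : Fin (m + 1) → ℝ) : ℝ := -(tanh (x (Fin.last m) / μ) * ⟪v, headVec x⟫)
  have hexp : (fun x => exp (-τ * W x)) =
      fun x => exp (τ * (tanh (x (Fin.last m) / μ) * ⟪v, headVec x⟫)) := by
    funext x
    rw [neg_mul_neg]
  have hmgf : mgf W (bgVec θ (m + 1)) (-τ) ≤ exp (τ ^ 2 / 2) := by
    rw [mgf, hexp]
    exact integral_exp_mul_tanh_mul_le h0 h1 τ hv
  have hchernoff := measureReal_pi_sum_le_le (ι := Fin p) (neg_nonpos.2 hτ)
    (hexp ▸ integrable_exp_mul_tanh_mul h0 h1 τ hv) (-(p * τ))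
  have htanh := continuous_tanh.measurable
  have hmeas : MeasurableSet {x : Fin p → Fin (m + 1) → ℝ | ∑ k, W (x k) ≤ -(p * τ)} :=
    measurableSet_le (by fun_prop) measurable_const
  calc _ = bgMatrix θ (m + 1) p {X | ∑ k, W (fun i => X i k) ≤ -(p * τ)} := by
        simp only [W, Finset.sum_neg_distrib, neg_le_neg_iff]
    _ = (Measure.pi fun _ : Fin p => bgVec θ (m + 1)) {x | ∑ k, W (x k) ≤ -(p * τ)} :=
        (measurePreserving_columns h0 h1 (m + 1) p).measure_preimage hmeas.nullMeasurableSet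
    _ ≤ ENNReal.ofReal (exp (- -τ * -(p * τ)) * exp (τ ^ 2 / 2) ^ p) := by
        rw [← ofReal_measureReal]
        rw [Fintype.card_fin] at hchernoff
        refine ENNReal.ofReal_le_ofReal (hchernoff.trans ?_)
        gcongr
        exact mgf_nonneg
    _ = ENNReal.ofReal (exp (-(p * (τ ^ 2 / 2)))) := by
        rw [← exp_nat_mul, ← exp_add]
        ring_nf

lemma bgMatrix_le_abs_sum_tanh_mul_inner_le (h0 : 0 ≤ θ) (h1 : θ ≤ 1)
    {v : EuclideanSpace ℝ (Fin m)} (hv : ‖v‖ = 1) {τ : ℝ} (hτ : 0 ≤ τ) :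
    bgMatrix θ (m + 1) p {X | p * τ ≤
        |∑ k, tanh (X (Fin.last m) k / μ) * ⟪v, headVec fun i => X i k⟫|} ≤
      ENNReal.ofReal (2 * exp (-(p * (τ ^ 2 / 2)))) := by
  have hneg := bgMatrix_le_sum_tanh_mul_inner_le (p := p) (μ := μ) h0 h1 (v := -v)
    (by rwa [norm_neg]) hτ
  simp only [inner_neg_left, mul_neg, Finset.sum_neg_distrib] at hneg
  simp only [le_abs, Set.ofPred_or]
  rw [two_mul, ENNReal.ofReal_add (exp_pos _).le (exp_pos _).le]
  exact (measure_union_le _ _).trans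
    (add_le_add (bgMatrix_le_sum_tanh_mul_inner_le h0 h1 hv hτ) hneg)

lemma gradg_zero_apply (hμ : μ ≠ 0) (X : Fin (m + 1) → Fin p → ℝ) (i : Fin m) :
    (gradg (m + 1) p μ (of X) 0 : EuclideanSpace ℝ (Fin m)) i = (p : ℝ)⁻¹ *
      ∑ k, tanh (X (Fin.last m) k / μ) *
        ⟪EuclideanSpace.single i (1 : ℝ), headVec fun i => X i k⟫ := by
  have hinner := inner_gradg X hμ (w := 0) (by simp) (EuclideanSpace.single i (1 : ℝ))
  rw [EuclideanSpace.inner_single_left, map_one, one_mul] at hinner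
  rw [hinner]
  simp [chartDeriv, chartInner, lastCoord]

lemma bgMatrix_lt_norm_gradg_zero_le (h0 : 0 ≤ θ) (h1 : θ ≤ 1) (hμ : μ ≠ 0) (hp : 0 < p) {τ : ℝ}
    (hτ : 0 ≤ τ) :
    bgMatrix θ (m + 1) p {X | √m * τ < ‖gradg (m + 1) p μ (of X) 0‖} ≤
      ENNReal.ofReal (2 * m * exp (-(p * (τ ^ 2 / 2)))) := by
  have hp' : (0 : ℝ) < p := by exact_mod_cast hp
  have hsub : {X : Fin (m + 1) → Fin p → ℝ | √m * τ < ‖gradg (m + 1) p μ (of X) 0‖} ⊆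
      ⋃ i ∈ (Finset.univ : Finset (Fin m)), {X | p * τ ≤ |∑ k, tanh (X (Fin.last m) k / μ) *
        ⟪EuclideanSpace.single i (1 : ℝ), headVec fun i => X i k⟫|} := by
    intro X (hX : √m * τ < ‖gradg (m + 1) p μ (of X) 0‖)
    obtain ⟨i, hi⟩ : ∃ i, τ < |(gradg (m + 1) p μ (of X) 0 : EuclideanSpace ℝ (Fin m)) i| := by
      by_contra! hle
      have hnorm := norm_le_sqrt_card_mul (gradg (m + 1) p μ (of X) 0) hτ hle
      rw [Fintype.card_fin] at hnorm
      exact hX.not_ge hnorm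
    rw [gradg_zero_apply hμ, abs_mul, abs_of_pos (inv_pos.2 hp'), lt_inv_mul_iff₀ hp'] at hi
    exact Set.mem_biUnion (Finset.mem_coe.2 (Finset.mem_univ i)) hi.le
  refine (measure_mono hsub).trans ((measure_biUnion_finset_le_ofReal _ fun i _ =>
    bgMatrix_le_abs_sum_tanh_mul_inner_le h0 h1 (by simp) hτ).trans_eq ?_)
  rw [Finset.card_univ, Fintype.card_fin, ← mul_assoc, mul_comm (m : ℝ)]

end Uniform

section Lipschitz

/-- The function `f` is bounded by `A` and `A`-Lipschitz on `S`. The same constant serves for both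
bounds, so that products can be estimated with a single explicit constant. -/
structure BddLipOn {X : Type*} [PseudoMetricSpace X] (S : Set X) (A : ℝ) (f : X → ℝ) : Prop where
  abs_le : ∀ ⦃x⦄, x ∈ S → |f x| ≤ A
  abs_sub_le : ∀ ⦃x⦄, x ∈ S → ∀ ⦃y⦄, y ∈ S → |f x - f y| ≤ A * dist x y

namespace BddLipOn

variable {X : Type*} [PseudoMetricSpace X] {S : Set X} {A B : ℝ} {f g : X → ℝ}

lemma mono (hf : BddLipOn S A f) (hAB : A ≤ B) : BddLipOn S B f :=
  ⟨fun _ hx => (hf.abs_le hx).trans hAB,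
    fun _ hx _ hy => (hf.abs_sub_le hx hy).trans (by gcongr)⟩

lemma const {c : ℝ} (hc : |c| ≤ A) : BddLipOn S A fun _ => c :=
  ⟨fun _ _ => hc, fun _ _ _ _ => by
    rw [sub_self, abs_zero]
    exact mul_nonneg ((abs_nonneg c).trans hc) dist_nonneg⟩

lemma add (hf : BddLipOn S A f) (hg : BddLipOn S B g) :
    BddLipOn S (A + B) fun x => f x + g x := by
  refine ⟨fun x hx => (abs_add_le _ _).trans (add_le_add (hf.abs_le hx) (hg.abs_le hx)),
    fun x hx y hy => ?_⟩
  rw [add_sub_add_comm, add_mul]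
  exact (abs_add_le _ _).trans (add_le_add (hf.abs_sub_le hx hy) (hg.abs_sub_le hx hy))

lemma const_mul (hf : BddLipOn S A f) {c : ℝ} (hc : |c| ≤ B) :
    BddLipOn S (B * A) fun x => c * f x := by
  have hB := (abs_nonneg c).trans hc
  refine ⟨fun x hx => ?_, fun x hx y hy => ?_⟩
  · rw [abs_mul]
    exact mul_le_mul hc (hf.abs_le hx) (abs_nonneg _) hB
  · rw [← mul_sub, abs_mul, mul_assoc]
    exact mul_le_mul hc (hf.abs_sub_le hx hy) (abs_nonneg _) hB

lemma sub (hf : BddLipOn S A f) (hg : BddLipOn S B g) :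
    BddLipOn S (A + B) fun x => f x - g x := by
  simpa only [neg_one_mul, one_mul, ← sub_eq_add_neg] using
    hf.add (hg.const_mul (c := -1) (B := 1) (by norm_num))

lemma mul (hf : BddLipOn S A f) (hg : BddLipOn S B g) :
    BddLipOn S (2 * (A * B)) fun x => f x * g x := by
  refine ⟨fun x hx => ?_, fun x hx y hy => ?_⟩
  · have hA := (abs_nonneg _).trans (hf.abs_le hx)
    have hB := (abs_nonneg _).trans (hg.abs_le hx)
    rw [abs_mul]
    linarith [mul_le_mul (hf.abs_le hx) (hg.abs_le hx) (abs_nonneg _) hA, mul_nonneg hA hB]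
  · have hA := (abs_nonneg _).trans (hf.abs_le hx)
    calc |f x * g x - f y * g y| = |f x * (g x - g y) + (f x - f y) * g y| := by ring_nf
      _ ≤ |f x| * |g x - g y| + |f x - f y| * |g y| := by
          rw [← abs_mul, ← abs_mul]
          exact abs_add_le _ _
      _ ≤ A * (B * dist x y) + A * dist x y * B := by
          gcongr
          exacts [hf.abs_le hx, hg.abs_sub_le hx hy, hf.abs_sub_le hx hy, hg.abs_le hy]
      _ = 2 * (A * B) * dist x y := by ring

lemma pow_two (hf : BddLipOn S A f) : BddLipOn S (2 * A ^ 2) fun x => f x ^ 2 := by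
  simpa only [sq] using hf.mul hf

lemma tanh_div (hf : BddLipOn S A f) {μ : ℝ} (hμ : 0 < μ) (hA : μ ≤ A) :
    BddLipOn S (A / μ) fun x => tanh (f x / μ) := by
  refine ⟨fun x _ => (abs_tanh_le_one _).trans ((one_le_div hμ).2 hA), fun x hx y hy => ?_⟩
  refine (abs_tanh_sub_tanh_le _ _).trans ?_
  rw [← sub_div, abs_div, abs_of_pos hμ, div_mul_eq_mul_div]
  gcongr
  exact hf.abs_sub_le hx hy

section Inner

variable {E : Type*} [NormedAddCommGroup E] [InnerProductSpace ℝ E] {φ ψ : X → E}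

lemma inner_const (hφ : LipschitzWith 1 φ) (hφ₁ : ∀ x ∈ S, ‖φ x‖ ≤ 1) {a : E} {R : ℝ}
    (ha : ‖a‖ ≤ R) : BddLipOn S R fun x => ⟪φ x, a⟫ := by
  refine ⟨fun x hx => ?_, fun x _ y _ => ?_⟩
  · calc |⟪φ x, a⟫| ≤ ‖φ x‖ * ‖a‖ := abs_real_inner_le_norm _ _
      _ ≤ 1 * R := by
          gcongr
          exact hφ₁ x hx
      _ = R := one_mul R
  · calc |⟪φ x, a⟫ - ⟪φ y, a⟫| ≤ ‖φ x - φ y‖ * ‖a‖ := by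
          rw [← inner_sub_left]
          exact abs_real_inner_le_norm _ _
      _ ≤ dist x y * R := by
          gcongr
          simpa [dist_eq_norm] using hφ.dist_le_mul x y
      _ = R * dist x y := mul_comm _ _

lemma inner (hφ : LipschitzWith 1 φ) (hψ : LipschitzWith 1 ψ) (hφ₁ : ∀ x ∈ S, ‖φ x‖ ≤ 1)
    (hψ₁ : ∀ x ∈ S, ‖ψ x‖ ≤ 1) : BddLipOn S 2 fun x => ⟪φ x, ψ x⟫ := by
  refine ⟨fun x hx => (abs_inner_le_one (hφ₁ x hx) (hψ₁ x hx)).trans one_le_two,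
    fun x hx y hy => ?_⟩
  have hsub : ⟪φ x, ψ x⟫ - ⟪φ y, ψ y⟫ = ⟪φ x, ψ x - ψ y⟫ + ⟪φ x - φ y, ψ y⟫ := by
    rw [inner_sub_left, inner_sub_right]
    ring
  calc |⟪φ x, ψ x⟫ - ⟪φ y, ψ y⟫| ≤ ‖φ x‖ * ‖ψ x - ψ y‖ + ‖φ x - φ y‖ * ‖ψ y‖ := by
        rw [hsub]
        exact (abs_add_le _ _).trans
          (add_le_add (abs_real_inner_le_norm _ _) (abs_real_inner_le_norm _ _))
    _ ≤ 1 * dist x y + dist x y * 1 := by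
        rw [← dist_eq_norm, ← dist_eq_norm]
        gcongr
        exacts [hφ₁ x hx, by simpa using hψ.dist_le_mul x y, by simpa using hφ.dist_le_mul x y,
          hψ₁ y hy]
    _ = 2 * dist x y := by ring

end Inner

end BddLipOn

variable {E : Type*} [NormedAddCommGroup E]

lemma norm_lt_one_of_lastCoord_pos {w : E} (hw : 0 < lastCoord w) : ‖w‖ < 1 := by
  nlinarith [sqrt_pos.1 hw, norm_nonneg w]

/-- The pairs of a point `w` of the ball at which the last coordinate of `q(w)` is at least `Q⁻¹`
and a unit direction. -/
def chartPairs (E : Type*) [NormedAddCommGroup E] (Q : ℝ) : Set (E × E) :=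
  {z | Q⁻¹ ≤ lastCoord z.1 ∧ ‖z.2‖ = 1}

section ChartPairs

variable {Q : ℝ} (hQ : 1 ≤ Q)
include hQ

lemma lastCoord_pos_of_mem_chartPairs {z : E × E} (hz : z ∈ chartPairs E Q) :
    0 < lastCoord z.1 :=
  (inv_pos.2 (by linarith)).trans_le hz.1

lemma norm_fst_lt_one_of_mem_chartPairs {z : E × E} (hz : z ∈ chartPairs E Q) : ‖z.1‖ < 1 :=
  norm_lt_one_of_lastCoord_pos (lastCoord_pos_of_mem_chartPairs hQ hz)

lemma inv_lastCoord_le_of_mem_chartPairs {z : E × E} (hz : z ∈ chartPairs E Q) :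
    (lastCoord z.1)⁻¹ ≤ Q :=
  inv_le_of_inv_le₀ (by linarith) hz.1

lemma abs_lastCoord_sub_le {z z' : E × E} (hz : z ∈ chartPairs E Q) (hz' : z' ∈ chartPairs E Q) :
    |lastCoord z.1 - lastCoord z'.1| ≤ Q * dist z z' := by
  have hQ₀ : 0 < Q := by linarith
  have hw := norm_fst_lt_one_of_mem_chartPairs hQ hz
  have hw' := norm_fst_lt_one_of_mem_chartPairs hQ hz'
  have hpos := add_pos (lastCoord_pos hw) (lastCoord_pos hw')
  have hdist : |‖z'.1‖ - ‖z.1‖| ≤ dist z z' := by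
    rw [abs_sub_comm]
    exact (abs_norm_sub_norm_le _ _).trans ((dist_eq_norm _ _).symm.trans_le (le_max_left _ _))
  have hfactor : |lastCoord z.1 - lastCoord z'.1| * (lastCoord z.1 + lastCoord z'.1) =
      |‖z'.1‖ - ‖z.1‖| * (‖z'.1‖ + ‖z.1‖) := by
    have hsq : (lastCoord z.1 - lastCoord z'.1) * (lastCoord z.1 + lastCoord z'.1) =
        (‖z'.1‖ - ‖z.1‖) * (‖z'.1‖ + ‖z.1‖) := by
      linear_combination lastCoord_sq hw - lastCoord_sq hw'
    simpa only [abs_mul, abs_of_pos hpos, abs_of_nonneg (add_nonneg (norm_nonneg z'.1)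
      (norm_nonneg z.1))] using congrArg abs hsq
  have hupper : |‖z'.1‖ - ‖z.1‖| * (‖z'.1‖ + ‖z.1‖) ≤ dist z z' * 2 := by
    gcongr
    linarith
  have hlower : |lastCoord z.1 - lastCoord z'.1| * (2 * Q⁻¹) ≤
      |lastCoord z.1 - lastCoord z'.1| * (lastCoord z.1 + lastCoord z'.1) := by
    gcongr
    linarith [hz.1, hz'.1]
  have hbound : |lastCoord z.1 - lastCoord z'.1| * Q⁻¹ ≤ dist z z' := by linarith
  rwa [← div_eq_mul_inv, div_le_iff₀' hQ₀] at hbound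

lemma bddLipOn_lastCoord : BddLipOn (chartPairs E Q) Q fun z => lastCoord z.1 := by
  refine ⟨fun z _ => ?_, fun z hz z' hz' => abs_lastCoord_sub_le hQ hz hz'⟩
  rw [lastCoord, abs_of_nonneg (sqrt_nonneg _)]
  exact (sqrt_le_one.2 (by nlinarith [sq_nonneg ‖z.1‖])).trans hQ

lemma bddLipOn_inv_lastCoord :
    BddLipOn (chartPairs E Q) (Q ^ 3) fun z => (lastCoord z.1)⁻¹ := by
  refine ⟨fun z hz => ?_, fun z hz z' hz' => ?_⟩
  · rw [abs_of_pos (inv_pos.2 (lastCoord_pos_of_mem_chartPairs hQ hz))]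
    exact (inv_lastCoord_le_of_mem_chartPairs hQ hz).trans (le_self_pow₀ hQ (by norm_num))
  · have hpos := lastCoord_pos_of_mem_chartPairs hQ hz
    have hpos' := lastCoord_pos_of_mem_chartPairs hQ hz'
    calc |(lastCoord z.1)⁻¹ - (lastCoord z'.1)⁻¹|
        = (lastCoord z.1)⁻¹ * (lastCoord z'.1)⁻¹ * |lastCoord z.1 - lastCoord z'.1| := by
          rw [inv_sub_inv hpos.ne' hpos'.ne', abs_div, abs_of_pos (mul_pos hpos hpos'),
            abs_sub_comm, div_eq_inv_mul, mul_inv]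
      _ ≤ Q * Q * (Q * dist z z') := by
          gcongr
          exacts [inv_lastCoord_le_of_mem_chartPairs hQ hz,
            inv_lastCoord_le_of_mem_chartPairs hQ hz', abs_lastCoord_sub_le hQ hz hz']
      _ = Q ^ 3 * dist z z' := by ring

variable [InnerProductSpace ℝ E] {R μ b : ℝ} {a : E}

lemma bddLipOn_inner_pair : BddLipOn (chartPairs E Q) 2 fun z => ⟪z.1, z.2⟫ :=
  .inner .prod_fst .prod_snd (fun _ hz => (norm_fst_lt_one_of_mem_chartPairs hQ hz).le)
    fun _ hz => hz.2.le

lemma bddLipOn_curvature : BddLipOn (chartPairs E Q) (68 * Q ^ 9) fun z =>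
    ‖z.2‖ ^ 2 / lastCoord z.1 + ⟪z.1, z.2⟫ ^ 2 / lastCoord z.1 ^ 3 := by
  have hinv := bddLipOn_inv_lastCoord (E := E) hQ
  have hnorm : BddLipOn (chartPairs E Q) 2 fun z => ‖z.2‖ ^ 2 := by
    simpa only [real_inner_self_eq_norm_sq] using
      BddLipOn.inner (S := chartPairs E Q) (φ := Prod.snd) .prod_snd .prod_snd
        (fun _ hz => hz.2.le) fun _ hz => hz.2.le
  have hcube : BddLipOn (chartPairs E Q) (4 * Q ^ 9) fun z => (lastCoord z.1 ^ 3)⁻¹ := by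
    have hprod := hinv.mul hinv.pow_two
    simp_rw [← pow_succ', inv_pow] at hprod
    exact hprod.mono (le_of_eq (by ring))
  refine ((hnorm.mul hinv).add ((bddLipOn_inner_pair hQ).pow_two.mul hcube)).mono ?_
  linarith [pow_le_pow_right₀ hQ (by norm_num : 3 ≤ 9)]

lemma bddLipOn_slope (ha : ‖a‖ ≤ R) (hb : |b| ≤ R) : BddLipOn (chartPairs E Q) (5 * Q ^ 3 * R)
    fun z => ⟪z.2, a⟫ - b * (⟪z.1, z.2⟫ / lastCoord z.1) := by
  have hR := (norm_nonneg a).trans ha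
  refine ((BddLipOn.inner_const .prod_snd (fun _ hz => hz.2.le) ha).sub
    (((bddLipOn_inner_pair hQ).mul (bddLipOn_inv_lastCoord hQ)).const_mul hb)).mono ?_
  nlinarith [one_le_pow₀ (n := 3) hQ]

lemma bddLipOn_tanh_chartInner (hμ : 0 < μ) (hμR : μ ≤ R) (ha : ‖a‖ ≤ R) (hb : |b| ≤ R) :
    BddLipOn (chartPairs E Q) (2 * Q * R / μ) fun z => tanh (chartInner a b z.1 / μ) := by
  have hQR : R ≤ Q * R := le_mul_of_one_le_left (by linarith) hQ
  have hinner := (BddLipOn.inner_const (S := chartPairs E Q) .prod_fst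
    (fun _ hz => (norm_fst_lt_one_of_mem_chartPairs hQ hz).le) ha).add
    ((bddLipOn_lastCoord hQ).const_mul hb)
  have hz : BddLipOn (chartPairs E Q) (2 * Q * R) fun z => chartInner a b z.1 := by
    simpa only [chartInner, mul_comm b] using hinner.mono (by linarith)
  exact hz.tanh_div hμ (by linarith)

lemma bddLipOn_chartDeriv (hμ : 0 < μ) (hμR : μ ≤ R) (ha : ‖a‖ ≤ R) (hb : |b| ≤ R) :
    BddLipOn (chartPairs E Q) (20 * Q ^ 4 * R ^ 2 / μ) fun z => chartDeriv μ a b z.1 z.2 :=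
  ((bddLipOn_tanh_chartInner hQ hμ hμR ha hb).mul (bddLipOn_slope hQ ha hb)).mono
    (le_of_eq (by ring))

lemma bddLipOn_one_sub_tanh_sq (hμ : 0 < μ) (hμR : μ ≤ R) (ha : ‖a‖ ≤ R) (hb : |b| ≤ R) :
    BddLipOn (chartPairs E Q) (9 * (Q * R / μ) ^ 2)
      fun z => 1 - tanh (chartInner a b z.1 / μ) ^ 2 := by
  have hone : 1 ≤ Q * R / μ := by
    rw [one_le_div hμ]
    exact hμR.trans (le_mul_of_one_le_left (by linarith) hQ)
  refine ((BddLipOn.const (A := 1) (by rw [abs_one])).sub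
    (bddLipOn_tanh_chartInner hQ hμ hμR ha hb).pow_two).mono ?_
  rw [mul_assoc 2 Q R, mul_div_assoc]
  linarith [one_le_pow₀ (n := 2) hone]

lemma bddLipOn_chartHess (hμ : 0 < μ) (hμ₁ : μ ≤ 1) (hR : 1 ≤ R) (ha : ‖a‖ ≤ R) (hb : |b| ≤ R) :
    BddLipOn (chartPairs E Q) (1200 * Q ^ 10 * R ^ 4 / μ ^ 3)
      fun z => chartHess μ a b z.1 z.2 := by
  have : 0 < Q := by linarith
  have hμR := hμ₁.trans hR
  refine ((((bddLipOn_one_sub_tanh_sq hQ hμ hμR ha hb).mul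
    (bddLipOn_slope hQ ha hb).pow_two).const_mul (abs_of_pos (inv_pos.2 hμ)).le).sub
    ((bddLipOn_tanh_chartInner hQ hμ hμR ha hb).mul
      ((bddLipOn_curvature hQ).const_mul hb))).mono ?_
  calc _ = 900 * (Q ^ 8 * R ^ 4 / μ ^ 3) + 272 * (Q ^ 10 * R ^ 2 / μ) := by
        field_simp
        ring
    _ ≤ 900 * (Q ^ 10 * R ^ 4 / μ ^ 3) + 272 * (Q ^ 10 * R ^ 4 / μ ^ 3) := by
        gcongr
        · norm_num
        · norm_num
        · exact pow_le_of_le_one hμ.le hμ₁ (by norm_num)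
    _ ≤ 1200 * Q ^ 10 * R ^ 4 / μ ^ 3 := by
        rw [mul_assoc 1200, mul_div_assoc 1200]
        have : 0 ≤ Q ^ 10 * R ^ 4 / μ ^ 3 := by positivity
        linarith

end ChartPairs

end Lipschitz

section SampleSize

lemma mul_log_le_of_le {c A B p : ℝ} (hc : 1 ≤ c) (hA : 1 ≤ log A) (hB₁ : 1 ≤ B)
    (hBA : B ≤ A ^ 3) (hp : (4 * c) ^ 4 * B * log A ≤ p) : c * B * log p ≤ p := by
  set p₀ := (4 * c) ^ 4 * B * log A
  have hBlog : 1 ≤ B * log A := one_le_mul_of_one_le_of_one_le hB₁ hA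
  have hp₀ : exp 1 ≤ p₀ := by
    have hfour : (4 : ℝ) ≤ (4 * c) ^ 4 :=
      (by linarith : (4 : ℝ) ≤ 4 * c).trans (le_self_pow₀ (by linarith) (by norm_num))
    calc exp 1 ≤ 4 := by linarith [exp_one_lt_d9]
      _ ≤ (4 * c) ^ 4 * (B * log A) := hfour.trans (le_mul_of_one_le_right (by positivity) hBlog)
      _ = p₀ := (mul_assoc _ _ _).symm
  have hp₀pos : 0 < p₀ := (exp_pos 1).trans_le hp₀
  have hlog : log p₀ ≤ 20 * c * log A := by
    have hlogB : log B ≤ 3 * log A := by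
      simpa only [log_pow, Nat.cast_ofNat] using log_le_log (by linarith) hBA
    have hlogc : log (4 * c) ≤ 4 * c := log_le_self (by linarith)
    have hloglog : log (log A) ≤ log A := log_le_self (by linarith)
    have hsplit : log p₀ = 4 * log (4 * c) + log B + log (log A) := by
      rw [log_mul (by positivity) (by positivity), log_mul (by positivity) (by positivity), log_pow,
        Nat.cast_ofNat]
    nlinarith
  have hbase : c * B * log p₀ ≤ p₀ := by
    have hc4 : c ^ 2 ≤ c ^ 4 := pow_le_pow_right₀ hc (by norm_num)
    calc c * B * log p₀ ≤ c * B * (20 * c * log A) := by gcongr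
      _ = 20 * c ^ 2 * (B * log A) := by ring
      _ ≤ 256 * c ^ 4 * (B * log A) := by gcongr; norm_num
      _ = p₀ := by ring
  have hanti : log p / p ≤ log p₀ / p₀ := log_div_self_antitoneOn hp₀ (hp₀.trans hp) hp
  have hppos : 0 < p := hp₀pos.trans_le hp
  calc c * B * log p = c * B * (log p / p) * p := by field_simp
    _ ≤ c * B * (log p₀ / p₀) * p := by gcongr
    _ = c * B * log p₀ / p₀ * p := by rw [mul_div_assoc]
    _ ≤ p := mul_le_of_le_one_left hppos.le ((div_le_one hp₀pos).2 hbase)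

/-- The parameter regime in which the concentration estimates hold, for `p` samples in `ℝ^{m+1}`:
the consequences of `μ ≲ θ / n` and of the lower bound for `p` that the estimates need. -/
structure Regime (m p : ℕ) (θ μ : ℝ) : Prop where
  θ_pos : 0 < θ
  θ_le : θ ≤ 1 / 2
  μ_pos : 0 < μ
  mul_μ_le : 64000 * (m + 1) * μ ≤ θ
  le_samples : 10 ^ 7 ≤ (p : ℝ)
  dim_le : (m + 1 : ℝ) ≤ p
  one_le_mul_μ : 1 ≤ p * μ
  one_le_mul_θ : 1 ≤ p * θ
  mul_log_le : 10 ^ 12 * envConst * ((m + 1) ^ 3 * log p) ≤ p * (μ * θ) ^ 2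

lemma le_pow_three_div_sq {n x : ℝ} (hn : 1 ≤ n) (hx : 0 < x) (hx₁ : x ≤ 1) :
    n ≤ n ^ 3 / x ^ 2 := by
  rw [le_div_iff₀ (by positivity)]
  calc n * x ^ 2 ≤ n * 1 := by gcongr; exact pow_le_one₀ hx.le hx₁
    _ ≤ n ^ 3 := by rw [mul_one]; exact le_self_pow₀ hn (by norm_num)

lemma one_le_pow_three_div_sq_mul {n x y : ℝ} (hn : 1 ≤ n) (hx : 0 < x) (hx₁ : x ≤ 1)
    (hxy : x ≤ y) : 1 ≤ n ^ 3 / x ^ 2 * y := by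
  rw [div_mul_eq_mul_div, one_le_div (by positivity)]
  calc x ^ 2 ≤ x := pow_le_of_le_one hx.le hx₁ two_ne_zero
    _ ≤ y := hxy
    _ ≤ n ^ 3 * y := le_mul_of_one_le_left (hx.le.trans hxy) (one_le_pow₀ hn)

lemma pow_three_div_sq_le_div_pow_three {n x : ℝ} (hn : 0 ≤ n) (hx : 0 < x) (hx₁ : x ≤ 1) :
    n ^ 3 / x ^ 2 ≤ (n / x) ^ 3 := by
  rw [div_pow]
  exact div_le_div_of_nonneg_left (by positivity) (by positivity)
    (pow_le_pow_of_le_one hx.le hx₁ (by norm_num))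

lemma exp_neg_mul_log {p : ℝ} (hp : 0 < p) (k : ℕ) : exp (-(k * log p)) = 1 / p ^ k := by
  rw [exp_neg, exp_nat_mul, exp_log hp, one_div]

end SampleSize

namespace Regime

variable {m p : ℕ} {θ μ : ℝ}

lemma of_le (hθ₀ : 0 < θ) (hθ : θ ≤ 1 / 2) (hμ₀ : 0 < μ) (hμ : 64000 * (m + 1) * μ ≤ θ)
    (hp : (4 * (10 ^ 12 * envConst)) ^ 4 / (μ ^ 2 * θ ^ 2) * (m + 1 : ℝ) ^ 3 *
      log ((m + 1 : ℝ) / (μ * θ)) ≤ p) : Regime m p θ μ := by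
  set c := 10 ^ 12 * envConst
  have hc : 10 ^ 12 ≤ c := le_mul_of_one_le_right (by norm_num) one_le_envConst
  have hn : (1 : ℝ) ≤ m + 1 := le_add_of_nonneg_left (Nat.cast_nonneg m)
  have hμ₁ : μ ≤ 1 / 2 := by nlinarith
  have hx₀ : 0 < μ * θ := mul_pos hμ₀ hθ₀
  have hxμ : μ * θ ≤ μ := mul_le_of_le_one_right hμ₀.le (by linarith)
  have hxθ : μ * θ ≤ θ := mul_le_of_le_one_left hθ₀.le (by linarith)
  have hx₁ : μ * θ ≤ 1 := by linarith
  have hlog : 1 ≤ log ((m + 1) / (μ * θ)) := by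
    rw [le_log_iff_exp_le (by positivity), le_div_iff₀ hx₀]
    nlinarith [exp_one_lt_d9]
  set B := (m + 1 : ℝ) ^ 3 / (μ * θ) ^ 2 with hB
  have hnB : m + 1 ≤ B := le_pow_three_div_sq hn hx₀ hx₁
  have hp' : (4 * c) ^ 4 * B * log ((m + 1) / (μ * θ)) ≤ p := by
    refine le_of_eq_of_le ?_ hp
    rw [hB, mul_pow μ θ]
    ring
  have hcB : (4 * c) ^ 4 * B ≤ p := (le_mul_of_one_le_right (by positivity) hlog).trans hp'
  have hc4 : 4 * c ≤ (4 * c) ^ 4 := le_self_pow₀ (by linarith) (by norm_num)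
  have hBp : B ≤ p := (le_mul_of_one_le_left (by linarith) (by linarith)).trans hcB
  refine ⟨hθ₀, hθ, hμ₀, hμ, ?_, hnB.trans hBp, ?_, ?_, ?_⟩
  · nlinarith
  · exact (one_le_pow_three_div_sq_mul hn hx₀ hx₁ hxμ).trans (by gcongr)
  · exact (one_le_pow_three_div_sq_mul hn hx₀ hx₁ hxθ).trans (by gcongr)
  · have hBlog := mul_log_le_of_le (by linarith) hlog (hn.trans hnB)
      (pow_three_div_sq_le_div_pow_three (by linarith) hx₀ hx₁) hp'
    calc c * ((m + 1) ^ 3 * log p) = c * B * log p * (μ * θ) ^ 2 := by rw [hB]; field_simp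
      _ ≤ p * (μ * θ) ^ 2 := by gcongr

lemma samples_pos (h : Regime m p θ μ) : (0 : ℝ) < p := by linarith [h.le_samples]

lemma log_nonneg (h : Regime m p θ μ) : 0 ≤ log p := Real.log_nonneg (by linarith [h.le_samples])

lemma θ_le_one (h : Regime m p θ μ) : θ ≤ 1 := by linarith [h.θ_le]

lemma μ_le (h : Regime m p θ μ) : 64000 * μ ≤ θ := by
  linarith [h.mul_μ_le, mul_nonneg (Nat.cast_nonneg m : (0 : ℝ) ≤ m) h.μ_pos.le]

lemma μ_le_one (h : Regime m p θ μ) : μ ≤ 1 := by linarith [h.μ_le, h.θ_le]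

end Regime

/-- The reciprocal of the last coordinate of `q(w)` for `w` on the boundary of `Γ ⊆ ℝ^m`. -/
def boundaryInv (m : ℕ) : ℝ := 2 * √(m + 1)

lemma boundaryInv_sq (m : ℕ) : boundaryInv m ^ 2 = 4 * (m + 1) := by
  rw [boundaryInv, mul_pow, sq_sqrt (by positivity)]
  norm_num

lemma one_le_boundaryInv (m : ℕ) : 1 ≤ boundaryInv m := by
  have : 0 ≤ boundaryInv m := by unfold boundaryInv; positivity
  nlinarith [boundaryInv_sq m, (Nat.cast_nonneg m : (0 : ℝ) ≤ m)]

namespace Regime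

variable {m p : ℕ} {θ μ : ℝ}

lemma boundaryInv_le (h : Regime m p θ μ) : boundaryInv m ≤ (4 * μ)⁻¹ := by
  have hμ := h.μ_pos
  have hsqrt : √(m + 1 : ℝ) ≤ m + 1 := by
    rw [sqrt_le_left (by positivity)]
    exact le_self_pow₀ (le_add_of_nonneg_left (Nat.cast_nonneg m)) two_ne_zero
  rw [le_inv_comm₀ (zero_lt_one.trans_le (one_le_boundaryInv m)) (by positivity), boundaryInv,
    ← one_div, le_div_iff₀ (by positivity)]
  nlinarith [h.mul_μ_le, h.θ_le]

lemma four_mul_μ_le (h : Regime m p θ μ) : 4 * μ ≤ (boundaryInv m)⁻¹ :=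
  le_inv_of_le_inv₀ (zero_lt_one.trans_le (one_le_boundaryInv m)) h.boundaryInv_le

lemma abs_chartHess_le_envelope (h : Regime m p θ μ)
    {z : EuclideanSpace ℝ (Fin m) × EuclideanSpace ℝ (Fin m)}
    (hz : z ∈ chartPairs _ (boundaryInv m)) (x : Fin (m + 1) → ℝ) :
    |chartHess μ (headVec x) (x (Fin.last m)) z.1 z.2| ≤ 18 * (m + 1) / μ * envelope z.2 x := by
  have hQ := one_le_boundaryInv m
  have henv := zero_le_one.trans (one_le_envelope z.2 x)
  refine (abs_chartHess_le h.μ_pos (inv_pos.2 (by linarith)) x hz.2.le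
    (norm_fst_lt_one_of_mem_chartPairs hQ hz) hz.1).trans ?_
  gcongr
  have hQμ := h.boundaryInv_le
  have hμ := inv_pos.2 h.μ_pos
  have hm : (0 : ℝ) ≤ m := Nat.cast_nonneg m
  rw [mul_inv] at hQμ
  calc μ⁻¹ * (2 + 2 / (boundaryInv m)⁻¹ ^ 2) + (1 / (boundaryInv m)⁻¹ + 1 / (boundaryInv m)⁻¹ ^ 3)
      = μ⁻¹ * (2 + 2 * boundaryInv m ^ 2) + boundaryInv m * (1 + boundaryInv m ^ 2) := by
        field_simp
    _ ≤ μ⁻¹ * (2 + 2 * boundaryInv m ^ 2) + 4⁻¹ * μ⁻¹ * (1 + boundaryInv m ^ 2) := by gcongr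
    _ ≤ 18 * (m + 1) / μ := by
        rw [boundaryInv_sq, div_eq_mul_inv]
        nlinarith

lemma abs_chartDeriv_le_envelope (h : Regime m p θ μ)
    {z : EuclideanSpace ℝ (Fin m) × EuclideanSpace ℝ (Fin m)}
    (hz : z ∈ chartPairs _ (boundaryInv m)) (x : Fin (m + 1) → ℝ) :
    |chartDeriv μ (headVec x) (x (Fin.last m)) z.1 z.2| ≤ 18 * (m + 1) / μ * envelope z.2 x := by
  have hQ := one_le_boundaryInv m
  have henv := zero_le_one.trans (one_le_envelope z.2 x)
  refine (abs_chartDeriv_le (inv_pos.2 (by linarith)) x hz.2.le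
    (norm_fst_lt_one_of_mem_chartPairs hQ hz) hz.1).trans ?_
  gcongr
  have hQμ := h.boundaryInv_le
  have hμ := inv_pos.2 h.μ_pos
  have hm : (0 : ℝ) ≤ m := Nat.cast_nonneg m
  rw [mul_inv] at hQμ
  rw [one_div, inv_inv, div_eq_mul_inv]
  nlinarith [mul_nonneg hm hμ.le]

lemma sqrt_dim_le (h : Regime m p θ μ) : √(m : ℝ) ≤ p := by
  have hp : (1 : ℝ) ≤ p := by linarith [h.le_samples]
  rw [sqrt_le_left h.samples_pos.le]
  exact (by linarith [h.dim_le] : (m : ℝ) ≤ p).trans (le_self_pow₀ hp two_ne_zero)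

lemma norm_headVec_le (h : Regime m p θ μ) {x : Fin (m + 1) → ℝ} (hx : ∀ i, |x i| ≤ p) :
    ‖headVec x‖ ≤ (p : ℝ) ^ 2 := by
  have hnorm := norm_le_sqrt_card_mul (headVec x) h.samples_pos.le fun i => hx i.castSucc
  rw [Fintype.card_fin] at hnorm
  exact hnorm.trans (by rw [sq]; gcongr; exact h.sqrt_dim_le)

lemma bddLipOn_chartHess (h : Regime m p θ μ) {x : Fin (m + 1) → ℝ} (hx : ∀ i, |x i| ≤ p) :
    BddLipOn (chartPairs (EuclideanSpace ℝ (Fin m)) (boundaryInv m)) (p ^ 17)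
      fun z => chartHess μ (headVec x) (x (Fin.last m)) z.1 z.2 := by
  have hp : (1 : ℝ) ≤ p := by linarith [h.le_samples]
  have hμ := h.μ_pos
  refine (_root_.bddLipOn_chartHess (one_le_boundaryInv m) hμ h.μ_le_one (one_le_pow₀ hp)
    (h.norm_headVec_le hx) ((hx _).trans (le_self_pow₀ hp two_ne_zero))).mono ?_
  rw [div_le_iff₀ (by positivity)]
  calc 1200 * boundaryInv m ^ 10 * ((p : ℝ) ^ 2) ^ 4
      = 1200 * (boundaryInv m ^ 2) ^ 5 * p ^ 8 := by ring
    _ = 1228800 * (m + 1 : ℝ) ^ 5 * (p : ℝ) ^ 8 * 1 := by rw [boundaryInv_sq]; ring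
    _ ≤ p * (p : ℝ) ^ 5 * (p : ℝ) ^ 8 * (p * μ) ^ 3 := by
        gcongr
        exacts [by linarith [h.le_samples], h.dim_le, one_le_pow₀ h.one_le_mul_μ]
    _ = (p : ℝ) ^ 17 * μ ^ 3 := by ring

lemma bddLipOn_chartDeriv (h : Regime m p θ μ) {x : Fin (m + 1) → ℝ} (hx : ∀ i, |x i| ≤ p) :
    BddLipOn (chartPairs (EuclideanSpace ℝ (Fin m)) (boundaryInv m)) (p ^ 17)
      fun z => chartDeriv μ (headVec x) (x (Fin.last m)) z.1 z.2 := by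
  have hp : (1 : ℝ) ≤ p := by linarith [h.le_samples]
  have hμ := h.μ_pos
  refine (_root_.bddLipOn_chartDeriv (one_le_boundaryInv m) hμ
    (h.μ_le_one.trans (one_le_pow₀ hp)) (h.norm_headVec_le hx)
    ((hx _).trans (le_self_pow₀ hp two_ne_zero))).mono ?_
  rw [div_le_iff₀ hμ]
  calc 20 * boundaryInv m ^ 4 * ((p : ℝ) ^ 2) ^ 2
      = 20 * (boundaryInv m ^ 2) ^ 2 * p ^ 4 := by ring
    _ = 320 * (m + 1 : ℝ) ^ 2 * (p : ℝ) ^ 4 * 1 := by rw [boundaryInv_sq]; ring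
    _ ≤ p * (p : ℝ) ^ 2 * (p : ℝ) ^ 13 * (p * μ) := by
        gcongr
        exacts [by linarith [h.le_samples], h.dim_le, by norm_num, h.one_le_mul_μ]
    _ = (p : ℝ) ^ 17 * μ := by ring

lemma net_card_le (h : Regime m p θ μ) :
    (2 * ((p ^ 20 : ℕ) : ℝ) + 1) ^ (2 * m) ≤ exp (42 * m * log p) := by
  have hp := h.le_samples
  have hbase : 2 * ((p ^ 20 : ℕ) : ℝ) + 1 ≤ (p : ℝ) ^ 21 := by
    have hpow : 1 ≤ (p : ℝ) ^ 20 := one_le_pow₀ (by linarith)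
    push_cast
    calc 2 * (p : ℝ) ^ 20 + 1 ≤ 3 * (p : ℝ) ^ 20 := by linarith
      _ ≤ p * (p : ℝ) ^ 20 := by gcongr; linarith
      _ = (p : ℝ) ^ 21 := by ring
  calc (2 * ((p ^ 20 : ℕ) : ℝ) + 1) ^ (2 * m) ≤ ((p : ℝ) ^ 21) ^ (2 * m) := by gcongr
    _ = (p : ℝ) ^ (42 * m) := by rw [← pow_mul, ← mul_assoc]; norm_num [mul_right_comm]
    _ = exp (42 * m * log p) := by
        rw [← exp_log h.samples_pos, ← exp_nat_mul, log_exp]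
        push_cast
        ring_nf

lemma mul_log_le_deviation (h : Regime m p θ μ) : 48 * (m + 1) * log p ≤
    p * ((θ / 60) ^ 2 / (128 * (144 * (m + 1) / μ) ^ 2 * envConst)) := by
  have hμ := h.μ_pos
  have henv := one_le_envConst
  have := h.log_nonneg
  have hdeviation : p * ((θ / 60) ^ 2 / (128 * (144 * (m + 1) / μ) ^ 2 * envConst)) =
      p * (μ * θ) ^ 2 / (9555148800 * (m + 1) ^ 2 * envConst) := by
    field_simp
    ring
  rw [hdeviation, le_div_iff₀ (by positivity)]
  calc 48 * (m + 1) * log p * (9555148800 * (m + 1) ^ 2 * envConst)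
      = 458647142400 * (envConst * ((m + 1) ^ 3 * log p)) := by ring
    _ ≤ 10 ^ 12 * (envConst * ((m + 1) ^ 3 * log p)) := by gcongr; norm_num
    _ ≤ p * (μ * θ) ^ 2 := (mul_assoc _ _ _).symm.trans_le h.mul_log_le

lemma net_card_mul_exp_le (h : Regime m p θ μ) :
    (2 * ((p ^ 20 : ℕ) : ℝ) + 1) ^ (2 * m) *
      exp (-(p * ((θ / 60) ^ 2 / (128 * (144 * (m + 1) / μ) ^ 2 * envConst)))) ≤
      1 / (p : ℝ) ^ 6 := by
  calc _ ≤ exp (42 * m * log p) * exp (-(48 * (m + 1) * log p)) := by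
        refine mul_le_mul h.net_card_le ?_ (exp_pos _).le (exp_pos _).le
        exact exp_le_exp.2 (neg_le_neg h.mul_log_le_deviation)
    _ ≤ exp (-((6 : ℕ) * log p)) := by
        have hlog := h.log_nonneg
        have hmlog : 0 ≤ m * log p := by positivity
        rw [← exp_add, exp_le_exp, Nat.cast_ofNat]
        linear_combination 6 * hmlog + 42 * hlog
    _ = 1 / (p : ℝ) ^ 6 := exp_neg_mul_log h.samples_pos 6

lemma lipschitz_mul_mesh_le (h : Regime m p θ μ) :
    (p : ℝ) ^ 17 * (√m / (p ^ 20 : ℕ)) ≤ θ / 60 / 4 := by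
  have hp := h.le_samples
  have := h.samples_pos
  calc (p : ℝ) ^ 17 * (√m / (p ^ 20 : ℕ)) ≤ (p : ℝ) ^ 17 * (p / (p ^ 20 : ℕ)) := by
        gcongr
        exact h.sqrt_dim_le
    _ = 1 / (p : ℝ) ^ 2 := by
        push_cast
        field_simp
    _ ≤ θ / 60 / 4 := by
        rw [div_le_iff₀ (by positivity)]
        nlinarith [h.one_le_mul_θ]

lemma measure_not_le_of_forall_lt_sum (h : Regime m p θ μ)
    {W : EuclideanSpace ℝ (Fin m) → EuclideanSpace ℝ (Fin m) → (Fin (m + 1) → ℝ) → ℝ}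
    {S : Set (EuclideanSpace ℝ (Fin m) × EuclideanSpace ℝ (Fin m))}
    (hS : S ⊆ chartPairs _ (boundaryInv m)) (hmeas : ∀ w v, Measurable (W w v))
    (henv : ∀ z ∈ chartPairs _ (boundaryInv m), ∀ x,
      |W z.1 z.2 x| ≤ 18 * (m + 1) / μ * envelope z.2 x)
    (hLip : ∀ x : Fin (m + 1) → ℝ, (∀ i, |x i| ≤ p) →
      BddLipOn (chartPairs _ (boundaryInv m)) (p ^ 17) fun z => W z.1 z.2 x)
    (hexp : ∀ z ∈ S, θ / 60 ≤ ∫ x, W z.1 z.2 x ∂(bgVec θ (m + 1)))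
    {P : (Fin (m + 1) → Fin p → ℝ) → Prop}
    (hP : ∀ X, (∀ z ∈ S, p * (1 / 240 * θ) < ∑ k, W z.1 z.2 (fun i => X i k)) → P X) :
    bgMatrix θ (m + 1) p {X | (∀ i k, |X i k| ≤ p) ∧ ¬ P X} ≤
      ENNReal.ofReal (1 / (p : ℝ) ^ 6) := by
  have hμ := h.μ_pos
  have hθ := h.θ_pos
  have hp := h.samples_pos
  have hθK : θ / 60 ≤ 144 * (m + 1) / μ := by
    rw [le_div_iff₀ hμ]
    nlinarith [h.θ_le, h.μ_le_one, (Nat.cast_nonneg m : (0 : ℝ) ≤ m)]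
  have hsub : {X : Fin (m + 1) → Fin p → ℝ | (∀ i k, |X i k| ≤ p) ∧ ¬ P X} ⊆
      {X | (∀ i k, |X i k| ≤ p) ∧ ∃ z ∈ S, ∑ k, W z.1 z.2 (fun i => X i k) ≤ p * (θ / 60 / 4)} := by
    rintro X ⟨hX, hPX⟩
    refine ⟨hX, ?_⟩
    by_contra! hlt
    exact hPX (hP X fun z hz => (by ring : (p : ℝ) * (1 / 240 * θ) = p * (θ / 60 / 4)).trans_lt
      (hlt z hz))
  refine (measure_mono hsub).trans <| (bgMatrix_exists_sum_le (N := p ^ 20)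
    (K := 144 * (m + 1) / μ) hθ.le h.θ_le_one
    (by exact_mod_cast pow_pos hp 20) (by positivity) (by positivity) hθK (by positivity)
    (fun z hz => (norm_fst_lt_one_of_mem_chartPairs (one_le_boundaryInv m) (hS hz)).le)
    (fun z hz => (hS hz).2) (fun z _ => hmeas z.1 z.2) (fun z hz x => ?_) hexp
    (fun a ha b hb x hx => (hLip x hx).abs_sub_le (hS ha) (hS hb))
    h.lipschitz_mul_mesh_le).trans (ENNReal.ofReal_le_ofReal h.net_card_mul_exp_le)
  exact (henv z (hS hz) x).trans_eq (by ring)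

end Regime

/-- The radius of the ball on which `g` is strongly convex. -/
def innerRadius (μ : ℝ) : ℝ := μ / (4 * √2)

/-- The radius beyond which `g` is strictly concave in the radial direction. -/
def middleRadius : ℝ := 1 / (20 * √5)

/-- The radius of `Γ ⊆ ℝ^{n-1}`. -/
def outerRadius (n : ℕ) : ℝ := √((4 * (n : ℝ) - 1) / (4 * n))

section Radii

lemma innerRadius_pos {μ : ℝ} (hμ : 0 < μ) : 0 < innerRadius μ := by
  unfold innerRadius
  positivity

lemma middleRadius_pos : 0 < middleRadius := by
  unfold middleRadius
  positivity

lemma innerRadius_sq (μ : ℝ) : 32 * innerRadius μ ^ 2 = μ ^ 2 := by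
  rw [innerRadius, div_pow, mul_pow, sq_sqrt (by norm_num)]
  ring

lemma middleRadius_sq : 2000 * middleRadius ^ 2 = 1 := by
  rw [middleRadius, div_pow, mul_pow, sq_sqrt (by norm_num)]
  norm_num

lemma outerRadius_sq (m : ℕ) : outerRadius (m + 1) ^ 2 = 1 - (boundaryInv m)⁻¹ ^ 2 := by
  have : (0 : ℝ) ≤ m := Nat.cast_nonneg m
  rw [outerRadius, Nat.cast_add_one, sq_sqrt (div_nonneg (by linarith) (by linarith)), inv_pow,
    boundaryInv_sq]
  field_simp

lemma mul_le_innerRadius {μ : ℝ} (hμ : 0 < μ) : 17 / 100 * μ ≤ innerRadius μ := by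
  nlinarith [innerRadius_sq μ, innerRadius_pos hμ]

lemma middleRadius_le : middleRadius ≤ 1 / 44 := by
  nlinarith [middleRadius_sq, middleRadius_pos]

lemma innerRadius_lt_middleRadius {μ : ℝ} (hμ : 0 < μ) (hμ₁ : μ ≤ 1 / 10) :
    innerRadius μ < middleRadius := by
  refine lt_of_pow_lt_pow_left₀ 2 middleRadius_pos.le ?_
  nlinarith [innerRadius_sq μ, middleRadius_sq]

lemma middleRadius_lt_outerRadius (m : ℕ) : middleRadius < outerRadius (m + 1) := by
  have hinv : (boundaryInv m)⁻¹ ^ 2 ≤ 1 / 4 := by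
    rw [inv_pow, boundaryInv_sq, inv_eq_one_div]
    exact one_div_le_one_div_of_le (by norm_num)
      (by linarith [(Nat.cast_nonneg m : (0 : ℝ) ≤ m)])
  refine lt_of_pow_lt_pow_left₀ 2 (sqrt_nonneg _) ?_
  rw [outerRadius_sq]
  linarith [middleRadius_sq]

lemma outerRadius_lt_one (m : ℕ) : outerRadius (m + 1) < 1 := by
  have hinv : 0 < (boundaryInv m)⁻¹ := inv_pos.2 (zero_lt_one.trans_le (one_le_boundaryInv m))
  refine lt_of_pow_lt_pow_left₀ 2 zero_le_one ?_
  rw [outerRadius_sq, one_pow]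
  linarith [pow_pos hinv 2]

lemma inv_boundaryInv_le_sqrt {m : ℕ} {r : ℝ} (hr₀ : 0 ≤ r) (hr : r ≤ outerRadius (m + 1)) :
    (boundaryInv m)⁻¹ ≤ √(1 - r ^ 2) := by
  refine le_sqrt_of_sq_le ?_
  linarith [outerRadius_sq m, pow_le_pow_left₀ hr₀ hr 2]

end Radii

section TestPairs

variable {m : ℕ} {r r₁ r₂ : ℝ}

/-- The pairs (point, unit direction) on which strong convexity in the ball of radius `r` is
tested. -/
def convexPairs (m : ℕ) (r : ℝ) : Set (EuclideanSpace ℝ (Fin m) × EuclideanSpace ℝ (Fin m)) :=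
  {z | ‖z.1‖ ≤ r ∧ ‖z.2‖ = 1}

/-- The pairs `(r • v, v)` with `v` a unit vector and `r ∈ [r₁, r₂]`, on which derivatives of `g`
in the radial direction are tested. -/
def radialPairs (m : ℕ) (r₁ r₂ : ℝ) :
    Set (EuclideanSpace ℝ (Fin m) × EuclideanSpace ℝ (Fin m)) :=
  {z | ‖z.2‖ = 1 ∧ ∃ r, r₁ ≤ r ∧ r ≤ r₂ ∧ z.1 = r • z.2}

lemma convexPairs_subset_chartPairs (hr : r ≤ outerRadius (m + 1)) :
    convexPairs m r ⊆ chartPairs _ (boundaryInv m) :=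
  fun z hz => ⟨inv_boundaryInv_le_sqrt (norm_nonneg z.1) (hz.1.trans hr), hz.2⟩

lemma radialPairs_subset_convexPairs (hr₁ : 0 ≤ r₁) : radialPairs m r₁ r₂ ⊆ convexPairs m r₂ := by
  rintro z ⟨hv, r, h₁, h₂, hz⟩
  refine ⟨?_, hv⟩
  rwa [hz, norm_smul, hv, mul_one, norm_of_nonneg (hr₁.trans h₁)]

lemma radialPairs_subset_chartPairs (hr₁ : 0 ≤ r₁) (hr₂ : r₂ ≤ outerRadius (m + 1)) :
    radialPairs m r₁ r₂ ⊆ chartPairs _ (boundaryInv m) :=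
  (radialPairs_subset_convexPairs hr₁).trans (convexPairs_subset_chartPairs hr₂)

lemma normalize_mem_radialPairs {w : EuclideanSpace ℝ (Fin m)} (hw : w ≠ 0) (h₁ : r₁ ≤ ‖w‖)
    (h₂ : ‖w‖ ≤ r₂) : (w, NormedSpace.normalize w) ∈ radialPairs m r₁ r₂ :=
  ⟨NormedSpace.norm_normalize hw, ‖w‖, h₁, h₂, (NormedSpace.norm_smul_normalize w).symm⟩

end TestPairs

section Landscape

/-- Property (i) of the landscape of `g(·; X)`, with constant `c`. -/
def StrongConvexity (c : ℝ) (n p : ℕ) (θ μ : ℝ) (X : Fin n → Fin p → ℝ) : Prop :=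
  ∀ w : EuclideanSpace ℝ (Fin (n - 1)), ‖w‖ ≤ innerRadius μ →
    ∀ v : EuclideanSpace ℝ (Fin (n - 1)),
      c * θ / μ * ‖v‖ ^ 2 ≤ ⟪hessg n p μ (Matrix.of X) w v, v⟫

/-- Property (ii) of the landscape of `g(·; X)`, with constant `c`. -/
def LargeGradient (c : ℝ) (n p : ℕ) (θ μ : ℝ) (X : Fin n → Fin p → ℝ) : Prop :=
  ∀ w : EuclideanSpace ℝ (Fin (n - 1)), innerRadius μ ≤ ‖w‖ → ‖w‖ ≤ middleRadius →
    c * θ ≤ ⟪w, gradg n p μ (Matrix.of X) w⟫ / ‖w‖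

/-- Property (iii) of the landscape of `g(·; X)`, with constant `c`. -/
def NegativeCurvature (c : ℝ) (n p : ℕ) (θ μ : ℝ) (X : Fin n → Fin p → ℝ) : Prop :=
  ∀ w : EuclideanSpace ℝ (Fin (n - 1)), middleRadius ≤ ‖w‖ → ‖w‖ ≤ outerRadius n →
    ⟪hessg n p μ (Matrix.of X) w w, w⟫ / ‖w‖ ^ 2 ≤ -(c * θ)

/-- Property (iv) of the landscape of `g(·; X)`, with the bound `b` for the minimizer. -/
def UniqueMinimizer (b : ℝ) (n p : ℕ) (μ : ℝ) (X : Fin n → Fin p → ℝ) : Prop :=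
  ∃ w : EuclideanSpace ℝ (Fin (n - 1)), w ∈ GammaSet n ∧
    IsLocalMinOn (gfun n p μ (Matrix.of X)) (GammaSet n) w ∧ ‖w‖ ≤ b ∧
    ∀ w' ∈ GammaSet n, IsLocalMinOn (gfun n p μ (Matrix.of X)) (GammaSet n) w' → w' = w

/-- The samples `X` for which the landscape of `g(·; X)` has the four properties of the theorem,
with constant `c` in (i)–(iii) and `c'` in (iv). -/
def goodLandscape (c c' : ℝ) (n p : ℕ) (θ μ : ℝ) : Set (Fin n → Fin p → ℝ) :=
  {X | StrongConvexity c n p θ μ X ∧ LargeGradient c n p θ μ X ∧ NegativeCurvature c n p θ μ X ∧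
    UniqueMinimizer (min (c' * μ / θ * √((n : ℝ) * log p / p)) (μ / 16)) n p μ X}

lemma inner_map_self_eq_norm_sq_mul {E : Type*} [NormedAddCommGroup E] [InnerProductSpace ℝ E]
    (L : E →L[ℝ] E) (v : E) :
    ⟪L v, v⟫ = ‖v‖ ^ 2 * ⟪L (NormedSpace.normalize v), NormedSpace.normalize v⟫ := by
  conv_lhs => rw [← NormedSpace.norm_smul_normalize v, map_smul, real_inner_smul_left,
    real_inner_smul_right, ← mul_assoc, ← sq]

lemma inner_eq_norm_mul_inner_normalize {E : Type*} [NormedAddCommGroup E] [InnerProductSpace ℝ E]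
    (v u : E) : ⟪v, u⟫ = ‖v‖ * ⟪NormedSpace.normalize v, u⟫ := by
  rw [← real_inner_smul_left, NormedSpace.norm_smul_normalize]

variable {m p : ℕ} {b c θ μ : ℝ} {X : Fin (m + 1) → Fin p → ℝ}

lemma strongConvexity_of_lt_sum (hp : 0 < p) (hμ : 0 < μ) (hr : innerRadius μ < 1)
    (h : ∀ z ∈ convexPairs m (innerRadius μ), p * (c * θ) <
      ∑ k, μ * chartHess μ (headVec fun i => X i k) (X (Fin.last m) k) z.1 z.2) :
    StrongConvexity c (m + 1) p θ μ X := by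
  intro w hw v
  rcases eq_or_ne v 0 with rfl | hv
  · simp
  have hsum := h (w, NormedSpace.normalize v) ⟨hw, NormedSpace.norm_normalize hv⟩
  rw [← Finset.mul_sum, ← lt_inv_mul_iff₀ (by exact_mod_cast hp), mul_left_comm,
    ← inner_hessg X hμ.ne' (hw.trans_lt hr)] at hsum
  rw [inner_map_self_eq_norm_sq_mul, mul_comm]
  gcongr
  exact (div_le_iff₀' hμ).2 hsum.le

lemma largeGradient_of_lt_sum (hp : 0 < p) (hμ : 0 < μ)
    (h : ∀ z ∈ radialPairs m (innerRadius μ) middleRadius, p * (c * θ) <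
      ∑ k, chartDeriv μ (headVec fun i => X i k) (X (Fin.last m) k) z.1 z.2) :
    LargeGradient c (m + 1) p θ μ X := by
  intro w hw hw'
  have hw₀ : 0 < ‖w‖ := (innerRadius_pos hμ).trans_le hw
  have hw₁ : ‖w‖ < 1 := by linarith [middleRadius_le]
  have hsum := h _ (normalize_mem_radialPairs (norm_pos_iff.1 hw₀) hw hw')
  rw [← lt_inv_mul_iff₀ (by exact_mod_cast hp), ← inner_gradg X hμ.ne' hw₁] at hsum
  rw [inner_eq_norm_mul_inner_normalize, mul_div_cancel_left₀ _ hw₀.ne']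
  exact hsum.le

lemma negativeCurvature_of_lt_sum (hp : 0 < p) (hμ : μ ≠ 0)
    (h : ∀ z ∈ radialPairs m middleRadius (outerRadius (m + 1)), p * (c * θ) <
      ∑ k, -chartHess μ (headVec fun i => X i k) (X (Fin.last m) k) z.1 z.2) :
    NegativeCurvature c (m + 1) p θ μ X := by
  intro w hw hw'
  have hw₀ : 0 < ‖w‖ := middleRadius_pos.trans_le hw
  have hsum := h _ (normalize_mem_radialPairs (norm_pos_iff.1 hw₀) hw hw')
  rw [Finset.sum_neg_distrib, ← lt_inv_mul_iff₀ (by exact_mod_cast hp), mul_neg,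
    ← inner_hessg X hμ (hw'.trans_lt (outerRadius_lt_one m))] at hsum
  rw [inner_map_self_eq_norm_sq_mul, mul_div_cancel_left₀ _ (pow_pos hw₀ 2).ne']
  exact (lt_neg.1 hsum).le

lemma uniqueMinimizer_of_landscape (hc : 0 < c) (hθ : 0 < θ) (hμ : 0 < μ)
    (hr : innerRadius μ ≤ middleRadius) (hconv : StrongConvexity c (m + 1) p θ μ X)
    (hgrad : LargeGradient c (m + 1) p θ μ X) (hcurv : NegativeCurvature c (m + 1) p θ μ X)
    (hb : ‖gradg (m + 1) p μ (Matrix.of X) 0‖ / (c * θ / μ) ≤ b) :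
    UniqueMinimizer b (m + 1) p μ X := by
  have hlt_one (w : EuclideanSpace ℝ (Fin m)) (hw : ‖w‖ < outerRadius (m + 1)) : ‖w‖ < 1 :=
    hw.trans (outerRadius_lt_one m)
  have hgrad' (w : EuclideanSpace ℝ (Fin m)) (hw : innerRadius μ ≤ ‖w‖)
      (hw' : ‖w‖ ≤ middleRadius) : 0 < ⟪w, gradg (m + 1) p μ (Matrix.of X) w⟫ :=
    (div_pos_iff_of_pos_right ((innerRadius_pos hμ).trans_le hw)).1
      ((mul_pos hc hθ).trans_le (hgrad w hw hw'))
  have hcurv' (w : EuclideanSpace ℝ (Fin m)) (hw : middleRadius ≤ ‖w‖)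
      (hw' : ‖w‖ < outerRadius (m + 1)) : ⟪hessg (m + 1) p μ (Matrix.of X) w w, w⟫ < 0 :=
    neg_of_div_neg_left ((hcurv w hw hw'.le).trans_lt (neg_lt_zero.2 (mul_pos hc hθ)))
      (sq_nonneg ‖w‖)
  obtain ⟨w, hw, hmin, hnorm, huniq⟩ := exists_unique_localMin
    (g := (gfun (m + 1) p μ (Matrix.of X) : EuclideanSpace ℝ (Fin m) → ℝ))
    (G := gradg (m + 1) p μ (Matrix.of X)) (H := hessg (m + 1) p μ (Matrix.of X))
    (by positivity) (innerRadius_pos hμ) hr (middleRadius_lt_outerRadius m)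
    (fun w hw => (hasGradientAt_gfun X hμ.ne' (hlt_one w hw)).differentiableAt.hasGradientAt)
    (fun w hw => hasFDerivAt_gradg X hμ.ne' (hlt_one w hw)) hconv hgrad' hcurv'
  exact ⟨w, hw, hmin, hnorm.trans hb, huniq⟩

end Landscape

namespace Regime

variable {m p : ℕ} {θ μ : ℝ}

lemma innerRadius_lt (h : Regime m p θ μ) : innerRadius μ < middleRadius :=
  innerRadius_lt_middleRadius h.μ_pos (by linarith [h.μ_le, h.θ_le])

lemma measure_not_strongConvexity_le (h : Regime m p θ μ) :
    bgMatrix θ (m + 1) p {X | (∀ i k, |X i k| ≤ p) ∧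
      ¬ StrongConvexity (1 / 240) (m + 1) p θ μ X} ≤ ENNReal.ofReal (1 / (p : ℝ) ^ 6) := by
  have hμ := h.μ_pos
  have hμ_abs : |μ| ≤ 1 := (abs_of_pos hμ).trans_le h.μ_le_one
  refine h.measure_not_le_of_forall_lt_sum
    (W := fun w v x => μ * chartHess μ (headVec x) (x (Fin.last m)) w v)
    (convexPairs_subset_chartPairs (h.innerRadius_lt.trans (middleRadius_lt_outerRadius m)).le)
    (fun w v => (measurable_chartHess w v).const_mul μ) (fun z hz x => ?_)
    (fun x hx => by simpa only [one_mul] using (h.bddLipOn_chartHess hx).const_mul hμ_abs)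
    (fun z hz => ?_) fun X => strongConvexity_of_lt_sum (Nat.cast_pos.1 h.samples_pos) hμ
      (by linarith [h.innerRadius_lt, middleRadius_le])
  · rw [abs_mul]
    exact (mul_le_of_le_one_left (abs_nonneg _) hμ_abs).trans (h.abs_chartHess_le_envelope hz x)
  · rw [integral_const_mul]
    have hw : 32 * ‖z.1‖ ^ 2 ≤ μ ^ 2 := by
      rw [← innerRadius_sq μ]
      gcongr
      exact hz.1
    calc θ / 60 ≤ μ * (2 / 5 * θ / μ) := by
          rw [mul_div_cancel₀ _ hμ.ne']
          linarith [h.θ_pos]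
      _ ≤ _ := by
          gcongr
          exact le_integral_chartHess h.θ_pos.le h.θ_le hμ (by linarith [h.μ_le, h.θ_le]) hz.2 hw

lemma measure_not_largeGradient_le (h : Regime m p θ μ) :
    bgMatrix θ (m + 1) p {X | (∀ i k, |X i k| ≤ p) ∧
      ¬ LargeGradient (1 / 240) (m + 1) p θ μ X} ≤ ENNReal.ofReal (1 / (p : ℝ) ^ 6) := by
  have hμ := h.μ_pos
  refine h.measure_not_le_of_forall_lt_sum
    (W := fun w v x => chartDeriv μ (headVec x) (x (Fin.last m)) w v)
    (radialPairs_subset_chartPairs (innerRadius_pos hμ).le (middleRadius_lt_outerRadius m).le)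
    measurable_chartDeriv (fun z hz x => h.abs_chartDeriv_le_envelope hz x)
    (fun x hx => h.bddLipOn_chartDeriv hx) ?_
    fun X => largeGradient_of_lt_sum (Nat.cast_pos.1 h.samples_pos) hμ
  rintro z ⟨hv, r, hr₁, hr₂, hz⟩
  rw [hz]
  exact le_integral_chartDeriv_radial h.θ_pos.le h.θ_le hμ hv
    ((mul_le_innerRadius hμ).trans hr₁) (hr₂.trans middleRadius_le)

lemma measure_not_negativeCurvature_le (h : Regime m p θ μ) :
    bgMatrix θ (m + 1) p {X | (∀ i k, |X i k| ≤ p) ∧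
      ¬ NegativeCurvature (1 / 240) (m + 1) p θ μ X} ≤ ENNReal.ofReal (1 / (p : ℝ) ^ 6) := by
  refine h.measure_not_le_of_forall_lt_sum
    (W := fun w v x => -chartHess μ (headVec x) (x (Fin.last m)) w v)
    (radialPairs_subset_chartPairs middleRadius_pos.le le_rfl)
    (fun w v => (measurable_chartHess w v).neg)
    (fun z hz x => (abs_neg _).trans_le (h.abs_chartHess_le_envelope hz x))
    (fun x hx => by
      simpa only [neg_one_mul, one_mul] using
        (h.bddLipOn_chartHess hx).const_mul (c := -1) (B := 1) (by norm_num)) ?_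
    fun X => negativeCurvature_of_lt_sum (Nat.cast_pos.1 h.samples_pos) h.μ_pos.ne'
  rintro z ⟨hv, r, hr₁, hr₂, hz⟩
  rw [hz]
  have hr₀ : 0 ≤ r := middleRadius_pos.le.trans hr₁
  have hr : 1 ≤ 2000 * r ^ 2 := by
    rw [← middleRadius_sq]
    gcongr
    exact middleRadius_pos.le
  have hr_lt : r < 1 := hr₂.trans_lt (outerRadius_lt_one m)
  have hInt := le_integral_neg_chartHess_radial h.θ_pos.le h.θ_le h.μ_pos
    (by linarith [h.μ_le, h.μ_pos]) hv hr (by nlinarith)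
    (h.four_mul_μ_le.trans (inv_boundaryInv_le_sqrt hr₀ hr₂))
  exact (by linarith [h.θ_pos] : θ / 60 ≤ θ / 16).trans hInt

lemma measure_exists_lt_abs_le (h : Regime m p θ μ) :
    bgMatrix θ (m + 1) p {X | ∃ i k, (p : ℝ) < |X i k|} ≤
      ENNReal.ofReal (gaussExpMoment / (p : ℝ) ^ 6) := by
  have hp := h.le_samples
  have hp₀ := h.samples_pos
  have hG := one_le_gaussExpMoment
  refine (bgMatrix_exists_lt_abs_le h.θ_pos.le h.θ_le_one hp₀.le).trans
    (ENNReal.ofReal_le_ofReal ?_)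
  have htail : exp (-((p : ℝ) ^ 2 / 8)) ≤ 1 / (p : ℝ) ^ 8 := by
    rw [← exp_neg_mul_log hp₀, exp_le_exp, Nat.cast_ofNat]
    nlinarith [log_le_self hp₀.le]
  calc ((m + 1 : ℕ) : ℝ) * p * (gaussExpMoment * exp (-((p : ℝ) ^ 2 / 8)))
      ≤ p * p * (gaussExpMoment * (1 / (p : ℝ) ^ 8)) := by
        gcongr
        exact_mod_cast h.dim_le
    _ = gaussExpMoment / (p : ℝ) ^ 6 := by field_simp

lemma measure_lt_norm_gradg_zero_le (h : Regime m p θ μ) :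
    bgMatrix θ (m + 1) p {X | √m * (4 * √(log p / p)) < ‖gradg (m + 1) p μ (Matrix.of X) 0‖} ≤
      ENNReal.ofReal (2 / (p : ℝ) ^ 6) := by
  have hp := h.le_samples
  have hp₀ := h.samples_pos
  have := h.log_nonneg
  refine (bgMatrix_lt_norm_gradg_zero_le h.θ_pos.le h.θ_le_one h.μ_pos.ne' (Nat.cast_pos.1 hp₀)
    (by positivity)).trans (ENNReal.ofReal_le_ofReal ?_)
  have hexponent : (p : ℝ) * ((4 * √(log p / p)) ^ 2 / 2) = (8 : ℕ) * log p := by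
    rw [mul_pow, sq_sqrt (by positivity), Nat.cast_ofNat]
    field_simp
    ring
  rw [hexponent, exp_neg_mul_log hp₀]
  calc 2 * (m : ℝ) * (1 / (p : ℝ) ^ 8) ≤ 2 * (p : ℝ) ^ 2 * (1 / (p : ℝ) ^ 8) := by
        gcongr
        nlinarith [h.dim_le]
    _ = 2 / (p : ℝ) ^ 6 := by field_simp

lemma mul_sqrt_log_div_le (h : Regime m p θ μ) :
    960 * μ / θ * √((m + 1) * log p / p) ≤ μ / 16 := by
  have hp₀ := h.samples_pos
  have hθ := h.θ_pos
  have hμ := h.μ_pos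
  have := h.log_nonneg
  have henv := one_le_envConst
  have hm : (1 : ℝ) ≤ m + 1 := le_add_of_nonneg_left (Nat.cast_nonneg m)
  have hsqrt : √((m + 1) * log p / p) ≤ θ / 15360 := by
    refine sqrt_le_iff.2 ⟨by positivity, ?_⟩
    rw [div_le_iff₀ hp₀]
    calc (m + 1) * log p = 1 * ((m + 1) * log p) := (one_mul _).symm
      _ ≤ envConst * ((m + 1) ^ 3 * log p) := by
          gcongr
          exact le_self_pow₀ hm (by norm_num)
      _ ≤ p * (μ * θ) ^ 2 / 10 ^ 12 := by
          rw [le_div_iff₀' (by positivity), ← mul_assoc]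
          exact h.mul_log_le
      _ ≤ p * (1 * θ) ^ 2 / 15360 ^ 2 := by
          gcongr
          exacts [h.μ_le_one, by norm_num]
      _ = (θ / 15360) ^ 2 * p := by ring
  calc 960 * μ / θ * √((m + 1) * log p / p) ≤ 960 * μ / θ * (θ / 15360) := by gcongr
    _ = μ / 16 := by
        field_simp
        norm_num

lemma mem_goodLandscape (h : Regime m p θ μ) {X : Fin (m + 1) → Fin p → ℝ}
    (hconv : StrongConvexity (1 / 240) (m + 1) p θ μ X)
    (hgrad : LargeGradient (1 / 240) (m + 1) p θ μ X)
    (hcurv : NegativeCurvature (1 / 240) (m + 1) p θ μ X)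
    (hzero : ‖gradg (m + 1) p μ (Matrix.of X) 0‖ ≤ √m * (4 * √(log p / p))) :
    X ∈ goodLandscape (1 / 240) 960 (m + 1) p θ μ := by
  have hθ := h.θ_pos
  have hμ := h.μ_pos
  have := h.log_nonneg
  refine ⟨hconv, hgrad, hcurv, uniqueMinimizer_of_landscape (by norm_num) hθ hμ
    h.innerRadius_lt.le hconv hgrad hcurv ?_⟩
  have hbound : ‖gradg (m + 1) p μ (Matrix.of X) 0‖ / (1 / 240 * θ / μ) ≤
      960 * μ / θ * √((m + 1) * log p / p) := by
    calc _ ≤ √m * (4 * √(log p / p)) / (1 / 240 * θ / μ) := by gcongr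
      _ = 960 * μ / θ * √(m * log p / p) := by
          rw [mul_div_assoc (m : ℝ), sqrt_mul (Nat.cast_nonneg m)]
          field_simp
          ring
      _ ≤ 960 * μ / θ * √((m + 1) * log p / p) := by
          gcongr
          exact le_add_of_nonneg_right zero_le_one
  rw [Nat.cast_add_one]
  exact le_min hbound (hbound.trans h.mul_sqrt_log_div_le)

lemma measure_compl_goodLandscape_le (h : Regime m p θ μ) :
    bgMatrix θ (m + 1) p (goodLandscape (1 / 240) 960 (m + 1) p θ μ)ᶜ ≤
      ENNReal.ofReal ((5 + gaussExpMoment) / (p : ℝ) ^ 6) := by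
  have hG := one_le_gaussExpMoment
  have hcover : (goodLandscape (1 / 240) 960 (m + 1) p θ μ)ᶜ ⊆
      {X | (∀ i k, |X i k| ≤ p) ∧ ¬ StrongConvexity (1 / 240) (m + 1) p θ μ X} ∪
      ({X | (∀ i k, |X i k| ≤ p) ∧ ¬ LargeGradient (1 / 240) (m + 1) p θ μ X} ∪
      ({X | (∀ i k, |X i k| ≤ p) ∧ ¬ NegativeCurvature (1 / 240) (m + 1) p θ μ X} ∪
      ({X | ∃ i k, (p : ℝ) < |X i k|} ∪
      {X | √m * (4 * √(log p / p)) < ‖gradg (m + 1) p μ (Matrix.of X) 0‖}))) := by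
    intro X hX
    by_contra! hbad
    simp only [Set.mem_union, Set.mem_ofPred_eq, not_or, not_exists, not_and, not_not,
      not_lt] at hbad
    obtain ⟨hconv, hgrad, hcurv, hbdd, hzero⟩ := hbad
    exact hX (h.mem_goodLandscape (hconv hbdd) (hgrad hbdd) (hcurv hbdd) hzero)
  have hsum : ENNReal.ofReal ((5 + gaussExpMoment) / (p : ℝ) ^ 6) =
      ENNReal.ofReal (1 / (p : ℝ) ^ 6) + (ENNReal.ofReal (1 / (p : ℝ) ^ 6) +
        (ENNReal.ofReal (1 / (p : ℝ) ^ 6) + (ENNReal.ofReal (gaussExpMoment / (p : ℝ) ^ 6) +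
          ENNReal.ofReal (2 / (p : ℝ) ^ 6)))) := by
    iterate 4 rw [← ENNReal.ofReal_add (by positivity) (by positivity)]
    congr 1
    ring
  rw [hsum]
  refine (measure_mono hcover).trans ?_
  refine (measure_union_le _ _).trans (add_le_add h.measure_not_strongConvexity_le ?_)
  refine (measure_union_le _ _).trans (add_le_add h.measure_not_largeGradient_le ?_)
  refine (measure_union_le _ _).trans (add_le_add h.measure_not_negativeCurvature_le ?_)
  exact (measure_union_le _ _).trans
    (add_le_add h.measure_exists_lt_abs_le h.measure_lt_norm_gradg_zero_le)

lemma ofReal_le_bgMatrix_goodLandscape (h : Regime m p θ μ) :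
    ENNReal.ofReal (1 - (5 + gaussExpMoment) / (p : ℝ) ^ 6) ≤
      bgMatrix θ (m + 1) p (goodLandscape (1 / 240) 960 (m + 1) p θ μ) := by
  have hG := one_le_gaussExpMoment
  have hbg := isProbabilityMeasure_bg h.θ_pos.le h.θ_le_one
  have hprob : IsProbabilityMeasure (bgMatrix θ (m + 1) p) := by
    unfold bgMatrix
    infer_instance
  rw [ENNReal.ofReal_sub _ (by positivity), ENNReal.ofReal_one, tsub_le_iff_right]
  calc 1 = bgMatrix θ (m + 1) p (goodLandscape (1 / 240) 960 (m + 1) p θ μ ∪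
        (goodLandscape (1 / 240) 960 (m + 1) p θ μ)ᶜ) := by
        rw [Set.union_compl_self, measure_univ]
    _ ≤ _ := (measure_union_le _ _).trans (add_le_add_right h.measure_compl_goodLandscape_le _)

end Regime

theorem statement0_general :
    ∃ cstar C ca cb cc : ℝ, 0 < cstar ∧ 0 < C ∧ 0 < ca ∧ 0 < cb ∧ 0 < cc ∧
      ∀ (n p : ℕ) (θ μ : ℝ), 1 ≤ n → θ ∈ Set.Ioc (0 : ℝ) (1 / 2) → 0 < μ → μ < ca * (θ / n) →
        C / (μ ^ 2 * θ ^ 2) * (n : ℝ) ^ 3 * log ((n : ℝ) / (μ * θ)) ≤ (p : ℝ) →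
        ENNReal.ofReal (1 - cb / (p : ℝ) ^ 6) ≤
          bgMatrix θ n p (goodLandscape cstar cc n p θ μ) := by
  have henv := one_le_envConst
  have hG := one_le_gaussExpMoment
  refine ⟨1 / 240, (4 * (10 ^ 12 * envConst)) ^ 4, 1 / 64000, 5 + gaussExpMoment, 960,
    by norm_num, by positivity, by norm_num, by positivity, by norm_num, ?_⟩
  intro n p θ μ hn hθ hμ hμθ hp
  obtain ⟨m, rfl⟩ := Nat.exists_eq_add_of_le' hn
  rw [Nat.cast_add_one] at hμθ hp
  have hμ_le : 64000 * (m + 1) * μ ≤ θ := by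
    rw [← mul_div_assoc, lt_div_iff₀ (by positivity)] at hμθ
    linarith
  exact (Regime.of_le hθ.1 hθ.2 hμ hμ_le hp).ofReal_le_bgMatrix_goodLandscape

/-- Theorem: high-dimensional landscape, orthogonal dictionary. -/
theorem statement0 :
    ∃ cstar C ca cb cc : ℝ, 0 < cstar ∧ 0 < C ∧ 0 < ca ∧ 0 < cb ∧ 0 < cc ∧
      ∀ (n p : ℕ) (θ μ : ℝ), 2 ≤ n → θ ∈ Set.Ioo (0 : ℝ) (1 / 2) → 0 < μ →
        μ < ca * min (θ / n) ((n : ℝ) ^ (-(5 : ℝ) / 4)) →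
        C / (μ ^ 2 * θ ^ 2) * (n : ℝ) ^ 3 * Real.log ((n : ℝ) / (μ * θ)) ≤ (p : ℝ) →
        ENNReal.ofReal (1 - cb / (p : ℝ) ^ 6) ≤
          bgMatrix θ n p
            {X | (∀ w : EuclideanSpace ℝ (Fin (n - 1)), ‖w‖ ≤ μ / (4 * Real.sqrt 2) →
                    ∀ v : EuclideanSpace ℝ (Fin (n - 1)),
                      cstar * θ / μ * ‖v‖ ^ 2 ≤ ⟪hessg n p μ (Matrix.of X) w v, v⟫) ∧
                 (∀ w : EuclideanSpace ℝ (Fin (n - 1)),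
                    μ / (4 * Real.sqrt 2) ≤ ‖w‖ → ‖w‖ ≤ 1 / (20 * Real.sqrt 5) →
                      cstar * θ ≤ ⟪w, gradg n p μ (Matrix.of X) w⟫ / ‖w‖) ∧
                 (∀ w : EuclideanSpace ℝ (Fin (n - 1)),
                    1 / (20 * Real.sqrt 5) ≤ ‖w‖ →
                    ‖w‖ ≤ Real.sqrt ((4 * (n : ℝ) - 1) / (4 * n)) →
                      ⟪hessg n p μ (Matrix.of X) w w, w⟫ / ‖w‖ ^ 2 ≤ -(cstar * θ)) ∧
                 (∃ wstar : EuclideanSpace ℝ (Fin (n - 1)),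
                    wstar ∈ GammaSet n ∧
                    IsLocalMinOn (gfun n p μ (Matrix.of X)) (GammaSet n) wstar ∧
                    ‖wstar‖ ≤
                      min (cc * μ / θ * Real.sqrt ((n : ℝ) * Real.log p / p)) (μ / 16) ∧
                    ∀ w' ∈ GammaSet n,
                      IsLocalMinOn (gfun n p μ (Matrix.of X)) (GammaSet n) w' → w' = wstar)} := by
  obtain ⟨cstar, C, ca, cb, cc, hcstar, hC, hca, hcb, hcc, h⟩ := statement0_general
  exact ⟨cstar, C, ca, cb, cc, hcstar, hC, hca, hcb, hcc, fun n p θ μ hn hθ hμ hμc hp =>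
    h n p θ μ (by omega) ⟨hθ.1, hθ.2.le⟩ hμ
      (hμc.trans_le (mul_le_mul_of_nonneg_left (min_le_left _ _) hca.le)) hp⟩

end
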